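/- Let 0 < r1 ≤ r2 ≤ r3 and let n be an integer with 2 ≤ n ≤ 4. Suppose there exist real numbers v* and v** with 0 < v* ≤ v** such that: for every v ≤ v*, I_{S^1_{r1}×S^1_{r2}×R^n}(v) = I_{S^1_{r1}×R^{n+1}}(v), and for every v ≥ v**, I_{S^1_{r1}×S^1_{r2}×R^n}(v) = f_n(v). Then there exist real numbers ũ* and ũ** with 0 < ũ* ≤ ũ** such that: for every v ≤ ũ*, I_{T^3×R^n}(v) = I_{S^1_{r1}×R^{n+2}}(v), and for every v ≥ ũ**, I_{T^3×R^n}(v) = g_n(v). -/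

import Mathlib

open MeasureTheory Real ENNReal NNReal

noncomputable section

/-- The flat circle of radius `r` (circumference `2πr`), i.e. `ℝ / (2πr)ℤ`
with the quotient (arc-length) metric. -/
abbrev Circ (r : ℝ) : Type := AddCircle (2 * Real.pi * r)

/-- `d`-dimensional Hausdorff (Riemannian) measure of a subset of a metric space. -/
noncomputable def haus (X : Type*) [EMetricSpace X] (d : ℕ) (s : Set X) : ℝ≥0∞ :=
  letI : MeasurableSpace X := borel X
  haveI : BorelSpace X := ⟨rfl⟩
  (MeasureTheory.Measure.hausdorffMeasure (d : ℝ) : Measure X) s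

/-- A closed region is the closure of an open set. -/
def IsClosedRegion {X : Type*} [TopologicalSpace X] (U : Set X) : Prop :=
  ∃ V : Set X, IsOpen V ∧ U = closure V

/-- The isoperimetric profile of an `m`-dimensional space `X`:
the infimum of the `(m-1)`-dimensional boundary measures of closed regions
of `m`-dimensional measure `v`. -/
noncomputable def isoProfile (X : Type*) [EMetricSpace X] (m : ℕ) (v : ℝ≥0∞) : ℝ≥0∞ :=
  ⨅ (U : Set X) (_ : IsClosedRegion U ∧ haus X m U = v), haus X (m - 1) (frontier U)

/-- An isoperimetric region in the `m`-dimensional space `X`. -/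
def IsIsoRegion (X : Type*) [EMetricSpace X] (m : ℕ) (Ω : Set X) : Prop :=
  IsClosedRegion Ω ∧ haus X (m - 1) (frontier Ω) = isoProfile X m (haus X m Ω)

/-- Euclidean `n`-space. -/
abbrev EucSp (n : ℕ) : Type := EuclideanSpace ℝ (Fin n)

/-- The Riemannian product `S¹_r × ℝ^m` (with the `ℓ²` product metric). -/
abbrev S1R (r : ℝ) (m : ℕ) : Type := WithLp 2 (Circ r × EucSp m)

/-- The Riemannian product `S¹_{r1} × S¹_{r2} × ℝ^n = T² × ℝ^n`. -/
abbrev T2R (r1 r2 : ℝ) (n : ℕ) : Type := WithLp 2 (Circ r1 × S1R r2 n)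

/-- first circle coordinate of a point of `T² × ℝ^n` -/
def t2fst {r1 r2 : ℝ} {n : ℕ} (p : T2R r1 r2 n) : Circ r1 :=
  (WithLp.equiv 2 (Circ r1 × S1R r2 n) p).1

/-- second circle coordinate of a point of `T² × ℝ^n` -/
def t2snd {r1 r2 : ℝ} {n : ℕ} (p : T2R r1 r2 n) : Circ r2 :=
  (WithLp.equiv 2 (Circ r2 × EucSp n) ((WithLp.equiv 2 (Circ r1 × S1R r2 n) p).2)).1

/-- Euclidean coordinate of a point of `T² × ℝ^n` -/
def t2euc {r1 r2 : ℝ} {n : ℕ} (p : T2R r1 r2 n) : EucSp n :=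
  (WithLp.equiv 2 (Circ r2 × EucSp n) ((WithLp.equiv 2 (Circ r1 × S1R r2 n) p).2)).2

/-- `ω_n`, the `n`-dimensional volume of the unit round sphere `Sⁿ ⊂ ℝ^{n+1}`. -/
noncomputable def omegaS (n : ℕ) : ℝ :=
  (haus (EucSp (n+1)) n (Metric.sphere (0 : EucSp (n+1)) 1)).toReal

/-- `β_n(r) = n^{(n-1)(n+1)} (2πr ω_{n-1})^{n+1} (1+n)^{-n²} ω_n^{-n}`. -/
noncomputable def betaC (n : ℕ) (r : ℝ) : ℝ :=
  (n : ℝ) ^ ((n-1)*(n+1)) * (2 * Real.pi * r * omegaS (n-1)) ^ (n+1) *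
    ((1 + (n : ℝ)) ^ (n^2))⁻¹ * ((omegaS n) ^ n)⁻¹

/-- The isoperimetric profile of `ℝ^m`: `I_{ℝ^m}(v) = m^{(m-1)/m} ω_{m-1}^{1/m} v^{(m-1)/m}`. -/
noncomputable def eucProfile (m : ℕ) (v : ℝ) : ℝ :=
  (m : ℝ) ^ (((m : ℝ) - 1)/m) * omegaS (m-1) ^ ((1 : ℝ)/m) * v ^ (((m : ℝ) - 1)/m)

/-- The region `S¹_{r1} × S¹_{r2} × B^n_R` in `T² × ℝ^n`. -/
def tball (r1 r2 : ℝ) (n : ℕ) (R : ℝ) : Set (T2R r1 r2 n) :=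
  {p | ‖t2euc p‖ ≤ R}

/-- `f_n(v) = V^{n+1}(∂(S¹_{r1} × S¹_{r2} × B^n_R))`, where `R > 0` is such that
`V^{n+2}(S¹_{r1} × S¹_{r2} × B^n_R) = v`. -/
noncomputable def fA (r1 r2 : ℝ) (n : ℕ) (v : ℝ≥0∞) : ℝ≥0∞ :=
  ⨅ (R : ℝ) (_ : 0 < R ∧ haus (T2R r1 r2 n) (n+2) (tball r1 r2 n R) = v),
    haus (T2R r1 r2 n) (n+1) (frontier (tball r1 r2 n R))

/-- The slice function `F₁(t) = V^{n+1}(Ω ∩ ({t} × S¹_{r2} × ℝ^n))`. -/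
noncomputable def sliceF1 {r1 r2 : ℝ} {n : ℕ} (Ω : Set (T2R r1 r2 n)) (t : Circ r1) : ℝ≥0∞ :=
  haus (T2R r1 r2 n) (n+1) (Ω ∩ {p | t2fst p = t})

/-- The slice function `F₂(s) = V^{n+1}(Ω ∩ (S¹_{r1} × {s} × ℝ^n))`. -/
noncomputable def sliceF2 {r1 r2 : ℝ} {n : ℕ} (Ω : Set (T2R r1 r2 n)) (s : Circ r2) : ℝ≥0∞ :=
  haus (T2R r1 r2 n) (n+1) (Ω ∩ {p | t2snd p = s})

/-- `θ_m`, the minimum (infimum) of the slice function `F₁`. -/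
noncomputable def thetaMin {r1 r2 : ℝ} {n : ℕ} (Ω : Set (T2R r1 r2 n)) : ℝ≥0∞ :=
  ⨅ t : Circ r1, sliceF1 Ω t

/-- `θ_M`, the maximum (supremum) of the slice function `F₁`. -/
noncomputable def thetaMax {r1 r2 : ℝ} {n : ℕ} (Ω : Set (T2R r1 r2 n)) : ℝ≥0∞ :=
  ⨆ t : Circ r1, sliceF1 Ω t

/-- `σ_m`, the minimum (infimum) of the slice function `F₂`. -/
noncomputable def sigmaMin {r1 r2 : ℝ} {n : ℕ} (Ω : Set (T2R r1 r2 n)) : ℝ≥0∞ :=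
  ⨅ s : Circ r2, sliceF2 Ω s

/-- `σ_M`, the maximum (supremum) of the slice function `F₂`. -/
noncomputable def sigmaMax {r1 r2 : ℝ} {n : ℕ} (Ω : Set (T2R r1 r2 n)) : ℝ≥0∞ :=
  ⨆ s : Circ r2, sliceF2 Ω s

/-- The region `S¹_r × B^m_R` in `S¹_r × ℝ^m`. -/
def s1ball (r : ℝ) (m : ℕ) (R : ℝ) : Set (S1R r m) :=
  {p | ‖(WithLp.equiv 2 (Circ r × EucSp m) p).2‖ ≤ R}
/-- The Riemannian product `S¹_{r1} × S¹_{r2} × S¹_{r3} × ℝ^n = T³ × ℝ^n`. -/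
abbrev T3R (r1 r2 r3 : ℝ) (n : ℕ) : Type :=
  WithLp 2 (Circ r1 × WithLp 2 (Circ r2 × S1R r3 n))

/-- third circle coordinate of a point of `T³ × ℝ^n` -/
def t3trd {r1 r2 r3 : ℝ} {n : ℕ} (p : T3R r1 r2 r3 n) : Circ r3 :=
  (WithLp.equiv 2 (Circ r3 × EucSp n)
    ((WithLp.equiv 2 (Circ r2 × S1R r3 n)
      ((WithLp.equiv 2 (Circ r1 × WithLp 2 (Circ r2 × S1R r3 n)) p).2)).2)).1

/-- Euclidean coordinate of a point of `T³ × ℝ^n` -/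
def t3euc {r1 r2 r3 : ℝ} {n : ℕ} (p : T3R r1 r2 r3 n) : EucSp n :=
  (WithLp.equiv 2 (Circ r3 × EucSp n)
    ((WithLp.equiv 2 (Circ r2 × S1R r3 n)
      ((WithLp.equiv 2 (Circ r1 × WithLp 2 (Circ r2 × S1R r3 n)) p).2)).2)).2

/-- The region `T³ × B^n_R` in `T³ × ℝ^n`. -/
def t3ball (r1 r2 r3 : ℝ) (n : ℕ) (R : ℝ) : Set (T3R r1 r2 r3 n) :=
  {p | ‖t3euc p‖ ≤ R}

/-- `g_n(v) = V^{n+2}(∂(T³ × B^n_R))`, where `R > 0` is such that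
`V^{n+3}(T³ × B^n_R) = v`. -/
noncomputable def gA (r1 r2 r3 : ℝ) (n : ℕ) (v : ℝ≥0∞) : ℝ≥0∞ :=
  ⨅ (R : ℝ) (_ : 0 < R ∧ haus (T3R r1 r2 r3 n) (n+3) (t3ball r1 r2 r3 n R) = v),
    haus (T3R r1 r2 r3 n) (n+2) (frontier (t3ball r1 r2 r3 n R))

/-- The slice function `F(t) = V^{n+2}(Ω ∩ (S¹_{r1} × S¹_{r2} × {t} × ℝ^n))`. -/
noncomputable def sliceF3 {r1 r2 r3 : ℝ} {n : ℕ} (Ω : Set (T3R r1 r2 r3 n))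
    (t : Circ r3) : ℝ≥0∞ :=
  haus (T3R r1 r2 r3 n) (n+2) (Ω ∩ {p | t3trd p = t})

/-- `η_m`, the minimum (infimum) of the slice function `F`. -/
noncomputable def etaMin {r1 r2 r3 : ℝ} {n : ℕ} (Ω : Set (T3R r1 r2 r3 n)) : ℝ≥0∞ :=
  ⨅ t : Circ r3, sliceF3 Ω t

/-- `η_M`, the maximum (supremum) of the slice function `F`. -/
noncomputable def etaMax {r1 r2 r3 : ℝ} {n : ℕ} (Ω : Set (T3R r1 r2 r3 n)) : ℝ≥0∞ :=
  ⨆ t : Circ r3, sliceF3 Ω t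

open Matrix (vecCons)

/-- Lebesgue measure on the line if `ℓ = 0`, on one period `(0, ℓ]` otherwise. -/
def coordMeas (ℓ : ℝ) : Measure ℝ :=
  open Classical in if ℓ = 0 then volume else volume.restrict (Set.Ioc 0 ℓ)

/-- Lebesgue measure on a fundamental cell of the lattice generated by the nonzero periods `L i`. -/
def boxMeas {d : ℕ} (L : Fin d → ℝ) : Measure (Fin d → ℝ) :=
  Measure.pi fun i => coordMeas (L i)

instance (ℓ : ℝ) : SigmaFinite (coordMeas ℓ) := by
  unfold coordMeas; split_ifs <;> infer_instance

instance {d : ℕ} (L : Fin d → ℝ) : SigmaFinite (boxMeas L) := by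
  unfold boxMeas; infer_instance

/-- Euclidean length of the gradient. -/
def gradN {d : ℕ} (f : (Fin d → ℝ) → ℝ) (x : Fin d → ℝ) : ℝ :=
  √(∑ i, (fderiv ℝ f x (Pi.single i 1)) ^ 2)

/-- Test functions: `C¹`, `[0,1]`-valued, periodic in the circle coordinates and
compactly supported in the line coordinates. -/
structure TestFun {d : ℕ} (L : Fin d → ℝ) (f : (Fin d → ℝ) → ℝ) : Prop where
  smooth : ContDiff ℝ 1 f
  periodic : ∀ i x, f (x + Pi.single i (L i)) = f x
  supp : ∃ ρ : ℝ, ∀ x, f x ≠ 0 → ∀ i, L i = 0 → |x i| ≤ ρ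
  nonneg : ∀ x, 0 ≤ f x
  le_one : ∀ x, f x ≤ 1

/-- `p` bounds from below the relaxed perimeter of every set of volume `v` in a fundamental cell. -/
def IsoAt {d : ℕ} (L : Fin d → ℝ) (v p : ℝ) : Prop :=
  ∀ (E : Set (Fin d → ℝ)) (f : ℕ → (Fin d → ℝ) → ℝ) (C : ℝ≥0∞), MeasurableSet E →
    boxMeas L E = ENNReal.ofReal v → (∀ k, TestFun L (f k)) →
    ∑' k, ∫⁻ x, ‖f k x - E.indicator 1 x‖ₑ ∂boxMeas L ≠ ∞ →
    (∀ k, ∫⁻ x, ENNReal.ofReal (gradN (f k) x) ∂boxMeas L ≤ C) → ENNReal.ofReal p ≤ C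

lemma measurePreserving_vecCons {d : ℕ} (ℓ : ℝ) (L : Fin d → ℝ) :
    MeasurePreserving (fun p : ℝ × (Fin d → ℝ) => (vecCons p.1 p.2 : Fin (d + 1) → ℝ))
      ((coordMeas ℓ).prod (boxMeas L)) (boxMeas (vecCons ℓ L)) := by
  have h := (measurePreserving_piFinSuccAbove
    (fun i : Fin (d + 1) => coordMeas ((vecCons ℓ L : Fin (d + 1) → ℝ) i)) 0).symm
  have e : (fun p : ℝ × (Fin d → ℝ) => (vecCons p.1 p.2 : Fin (d + 1) → ℝ)) =
      (MeasurableEquiv.piFinSuccAbove (fun _ : Fin (d + 1) => ℝ) 0).symm := by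
    funext p
    simp [MeasurableEquiv.piFinSuccAbove, Matrix.vecCons, Fin.insertNthEquiv]
  rw [e]
  exact h

lemma measurable_vecCons {d : ℕ} :
    Measurable (fun p : ℝ × (Fin d → ℝ) => (vecCons p.1 p.2 : Fin (d + 1) → ℝ)) :=
  (measurePreserving_vecCons 0 (0 : Fin d → ℝ)).measurable

lemma lintegral_boxMeas_vecCons {d : ℕ} (ℓ : ℝ) (L : Fin d → ℝ) {F : (Fin (d + 1) → ℝ) → ℝ≥0∞}
    (hF : Measurable F) :
    ∫⁻ x, F x ∂boxMeas (vecCons ℓ L) =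
      ∫⁻ t, ∫⁻ y, F (vecCons t y) ∂boxMeas L ∂coordMeas ℓ := by
  rw [← (measurePreserving_vecCons ℓ L).lintegral_comp hF,
    lintegral_prod (fun p : ℝ × (Fin d → ℝ) => F (vecCons p.1 p.2))
      (hF.comp measurable_vecCons).aemeasurable]

lemma contDiff_vecCons {d : ℕ} {n : WithTop ℕ∞} :
    ContDiff ℝ n (fun p : ℝ × (Fin d → ℝ) => (vecCons p.1 p.2 : Fin (d + 1) → ℝ)) := by
  rw [contDiff_pi]
  intro i
  refine Fin.cases ?_ (fun j => ?_) i
  · simpa using contDiff_fst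
  · simp only [Matrix.cons_val_succ]
    fun_prop

lemma hasDerivAt_vecCons {d : ℕ} (y : Fin d → ℝ) (t : ℝ) :
    HasDerivAt (fun t => (vecCons t y : Fin (d + 1) → ℝ)) (Pi.single 0 1) t := by
  rw [hasDerivAt_pi]
  intro i
  refine Fin.cases ?_ (fun j => ?_) i
  · simpa using hasDerivAt_id' t
  · simpa using hasDerivAt_const t (y j)

lemma hasFDerivAt_vecCons {d : ℕ} (y : Fin d → ℝ) (t : ℝ) :
    ∃ D : (Fin d → ℝ) →L[ℝ] (Fin (d + 1) → ℝ), (∀ v, D v = vecCons 0 v) ∧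
      HasFDerivAt (fun y => (vecCons t y : Fin (d + 1) → ℝ)) D y := by
  refine ⟨ContinuousLinearMap.pi (Fin.cases 0 fun j => ContinuousLinearMap.proj j), ?_, ?_⟩
  · intro v; ext i; refine Fin.cases ?_ (fun j => ?_) i <;> simp
  · rw [hasFDerivAt_pi]
    intro i
    refine Fin.cases ?_ (fun j => ?_) i
    · simpa using hasFDerivAt_const t y
    · simpa using hasFDerivAt_apply (𝕜 := ℝ) j y

lemma vecCons_zero_single {d : ℕ} (i : Fin d) (a : ℝ) :
    (vecCons 0 (Pi.single i a : Fin d → ℝ) : Fin (d + 1) → ℝ) = Pi.single i.succ a := by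
  ext j; refine Fin.cases ?_ (fun j => ?_) j
  · simp
  · simp [Pi.single_apply]

section slices
variable {d : ℕ} {f : (Fin (d + 1) → ℝ) → ℝ}

lemma fderiv_slice (hf : ContDiff ℝ 1 f) (t : ℝ) (y : Fin d → ℝ) (i : Fin d) :
    fderiv ℝ (fun y => f (vecCons t y)) y (Pi.single i 1)
      = fderiv ℝ f (vecCons t y) (Pi.single i.succ 1) := by
  obtain ⟨D, hD, hD'⟩ := hasFDerivAt_vecCons y t
  have h := ((hf.differentiable one_ne_zero (vecCons t y)).hasFDerivAt).comp y hD'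
  have := h.fderiv
  simp only [Function.comp_def] at this
  rw [this]
  simp [hD, vecCons_zero_single]

lemma hasDerivAt_slice (hf : ContDiff ℝ 1 f) (t : ℝ) (y : Fin d → ℝ) :
    HasDerivAt (fun t => f (vecCons t y)) (fderiv ℝ f (vecCons t y) (Pi.single 0 1)) t :=
  ((hf.differentiable one_ne_zero (vecCons t y)).hasFDerivAt).comp_hasDerivAt t
    (hasDerivAt_vecCons y t)

lemma gradN_vecCons (hf : ContDiff ℝ 1 f) (t : ℝ) (y : Fin d → ℝ) :
    gradN f (vecCons t y) = √((fderiv ℝ f (vecCons t y) (Pi.single 0 1)) ^ 2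
      + gradN (fun y => f (vecCons t y)) y ^ 2) := by
  unfold gradN
  rw [Fin.sum_univ_succ, Real.sq_sqrt (Finset.sum_nonneg fun i _ => sq_nonneg _)]
  simp only [fderiv_slice hf]

lemma continuous_gradN {d : ℕ} {f : (Fin d → ℝ) → ℝ} (hf : ContDiff ℝ 1 f) :
    Continuous (gradN f) := by
  have := hf.continuous_fderiv one_ne_zero
  unfold gradN
  fun_prop

lemma TestFun.slice {ℓ : ℝ} {L : Fin d → ℝ} (hf : TestFun (vecCons ℓ L) f) (t : ℝ) :
    TestFun L (fun y => f (vecCons t y)) where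
  smooth := hf.smooth.comp (contDiff_vecCons.comp (contDiff_const.prodMk contDiff_id))
  periodic i x := by
    have := hf.periodic i.succ (vecCons t x)
    rw [← this]
    congr 1
    rw [Matrix.cons_val_succ, ← vecCons_zero_single]
    simp
  supp := by
    obtain ⟨ρ, hρ⟩ := hf.supp
    exact ⟨ρ, fun x hx i hi => by simpa using hρ _ hx i.succ (by simpa using hi)⟩
  nonneg x := hf.nonneg _
  le_one x := hf.le_one _

end slices

/-- A `C¹` function returning to its initial value crosses every intermediate level twice. -/
lemma two_mul_integral_le_of_eq {u u' σ : ℝ → ℝ} (hu : ∀ t, HasDerivAt u (u' t) t)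
    (hu' : Continuous u') (hσ : Continuous σ) (hσ0 : ∀ x, 0 ≤ σ x) {a b t₀ t₁ : ℝ}
    (hab : u a = u b) (h₀ : t₀ ∈ Set.Icc a b) (h₁ : t₁ ∈ Set.Icc a b) :
    2 * ∫ x in (u t₀)..(u t₁), σ x ≤ ∫ t in a..b, σ (u t) * |u' t| := by
  have huc : Continuous u := continuous_iff_continuousAt.2 fun t => (hu t).continuousAt
  set Φ : ℝ → ℝ := fun s => ∫ x in (0 : ℝ)..s, σ x with hΦ
  have hint : ∀ r s : ℝ, ∫ x in r..s, σ x = Φ s - Φ r := fun r s => by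
    rw [hΦ, intervalIntegral.integral_interval_sub_left] <;> exact hσ.intervalIntegrable _ _
  have hd : ∀ t, HasDerivAt (fun t => Φ (u t)) (σ (u t) * u' t) t := fun t =>
    (hσ.integral_hasStrictDerivAt 0 (u t)).hasDerivAt.comp t (hu t)
  have hc : Continuous fun t => σ (u t) * |u' t| := by fun_prop
  have hc' : Continuous fun t => σ (u t) * u' t := by fun_prop
  have key : ∀ r s, r ≤ s → |Φ (u s) - Φ (u r)| ≤ ∫ t in r..s, σ (u t) * |u' t| := by
    intro r s hrs
    rw [← intervalIntegral.integral_eq_sub_of_hasDerivAt (fun t _ => hd t)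
      (hc'.intervalIntegrable _ _)]
    refine (intervalIntegral.abs_integral_le_integral_abs hrs).trans_eq ?_
    simp only [abs_mul, abs_of_nonneg (hσ0 _)]
  have hI : ∀ r s : ℝ, IntervalIntegrable (fun t => σ (u t) * |u' t|) volume r s :=
    fun r s => hc.intervalIntegrable r s
  rw [hint]
  rcases le_total t₀ t₁ with h | h
  · rw [← intervalIntegral.integral_add_adjacent_intervals (hI a t₀) (hI t₀ b),
      ← intervalIntegral.integral_add_adjacent_intervals (hI t₀ t₁) (hI t₁ b)]
    have e1 := abs_le.1 (key a t₀ h₀.1)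
    have e2 := abs_le.1 (key t₀ t₁ h)
    have e3 := abs_le.1 (key t₁ b h₁.2)
    rw [hab] at e1
    linarith
  · rw [← intervalIntegral.integral_add_adjacent_intervals (hI a t₁) (hI t₁ b),
      ← intervalIntegral.integral_add_adjacent_intervals (hI t₁ t₀) (hI t₀ b)]
    have e1 := abs_le.1 (key a t₁ h₁.1)
    have e2 := abs_le.1 (key t₁ t₀ h)
    have e3 := abs_le.1 (key t₀ b h₀.2)
    rw [hab] at e1
    linarith

lemma ae_boxMeas_mem_Ioc {d : ℕ} (L : Fin d → ℝ) :
    ∀ᵐ y ∂boxMeas L, ∀ i, L i ≠ 0 → y i ∈ Set.Ioc 0 (L i) := by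
  rw [ae_all_iff]
  intro i
  by_cases h : L i = 0
  · simp [h]
  · have h1 : ∀ᵐ t ∂coordMeas (L i), t ∈ Set.Ioc 0 (L i) := by
      simp only [coordMeas, h, if_false]
      exact ae_restrict_mem measurableSet_Ioc
    filter_upwards [(Measure.tendsto_eval_ae_ae (μ := fun i => coordMeas (L i)) (i := i)).eventually
      h1]
      with y hy _ using hy

lemma boxMeas_tube_lt_top {d : ℕ} (L : Fin d → ℝ) (ρ : ℝ) :
    boxMeas L {y | ∀ i, L i = 0 → |y i| ≤ ρ} < ∞ := by
  classical
  have : {y : Fin d → ℝ | ∀ i, L i = 0 → |y i| ≤ ρ} =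
      Set.univ.pi fun i => if L i = 0 then Set.Icc (-ρ) ρ else Set.univ := by
    ext y
    simp only [Set.mem_ofPred_eq, Set.mem_univ_pi]
    refine forall_congr' fun i => ?_
    split_ifs with h <;> simp [h, abs_le]
  rw [this, boxMeas, Measure.pi_pi]
  refine ENNReal.prod_lt_top fun i _ => ?_
  by_cases h : L i = 0 <;> simp [h, coordMeas]

lemma measurableSet_tube {d : ℕ} (L : Fin d → ℝ) (ρ : ℝ) :
    MeasurableSet {y : Fin d → ℝ | ∀ i, L i = 0 → |y i| ≤ ρ} := by
  have : {y : Fin d → ℝ | ∀ i, L i = 0 → |y i| ≤ ρ} =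
      ⋂ i, {y | L i = 0 → |y i| ≤ ρ} := by ext; simp
  rw [this]
  refine MeasurableSet.iInter fun i => ?_
  by_cases h : L i = 0
  · simp only [h, true_imp_iff]
    exact measurableSet_le (by fun_prop) (by fun_prop)
  · simp [h]

section slicing
variable {d : ℕ} {ℓ : ℝ} {L : Fin d → ℝ} {f : (Fin (d + 1) → ℝ) → ℝ}

/-- The volume of the slice of `f` at height `t`. -/
def sliceVol (L : Fin d → ℝ) (f : (Fin (d + 1) → ℝ) → ℝ) (t : ℝ) : ℝ :=
  ∫ y, f (vecCons t y) ∂boxMeas L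

lemma TestFun.bound (hf : TestFun (vecCons ℓ L) f) (T : ℝ) :
    ∃ B : (Fin d → ℝ) → ℝ, Integrable B (boxMeas L) ∧ ∀ t, |t| ≤ T → ∀ᵐ y ∂boxMeas L,
      |f (vecCons t y)| ≤ B y ∧ |fderiv ℝ f (vecCons t y) (Pi.single 0 1)| ≤ B y := by
  obtain ⟨ρ, hρ⟩ := hf.supp
  set S : Set (Fin d → ℝ) := {y | ∀ i, L i = 0 → |y i| ≤ ρ} with hS
  set M : ℝ := ∑ i, |L i| + |ρ| with hM
  have hK : IsCompact (Set.Icc (-T) T ×ˢ Metric.closedBall (0 : Fin d → ℝ) M) :=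
    isCompact_Icc.prod (isCompact_closedBall _ _)
  have hfd := hf.smooth.continuous_fderiv one_ne_zero
  have hv := (contDiff_vecCons (d := d) (n := 1)).continuous
  obtain ⟨D, hD⟩ := hK.exists_bound_of_continuousOn
    (f := fun p : ℝ × (Fin d → ℝ) => fderiv ℝ f (vecCons p.1 p.2) (Pi.single 0 1))
    (by fun_prop)
  refine ⟨S.indicator fun _ => max D 1, ?_, ?_⟩
  · rw [integrable_indicator_iff (measurableSet_tube L ρ)]
    exact integrableOn_const (boxMeas_tube_lt_top L ρ).ne
  · intro t ht
    filter_upwards [ae_boxMeas_mem_Ioc L] with y hy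
    by_cases hyS : y ∈ S
    · have hyM : ‖y‖ ≤ M := by
        rw [pi_norm_le_iff_of_nonneg (by positivity)]
        intro i
        have h0 : |L i| ≤ ∑ i, |L i| :=
          Finset.single_le_sum (f := fun i => |L i|) (fun i _ => abs_nonneg _) (Finset.mem_univ i)
        by_cases hi : L i = 0
        · have := hyS i hi
          rw [Real.norm_eq_abs]
          have := le_abs_self ρ
          have : 0 ≤ ∑ i, |L i| := by positivity
          linarith
        · have := hy i hi
          rw [Real.norm_eq_abs, abs_of_pos this.1]
          have := le_abs_self (L i)
          have := abs_nonneg ρ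
          linarith [(hy i hi).2]
      simp only [Set.indicator_of_mem hyS]
      constructor
      · rw [abs_of_nonneg (hf.nonneg _)]
        exact (hf.le_one _).trans (le_max_right _ _)
      · exact (hD (t, y) ⟨abs_le.1 ht, by simpa using hyM⟩).trans (le_max_left _ _)
    · simp only [Set.indicator_of_notMem hyS]
      have hz : ∀ s, f (vecCons s y) = 0 := by
        intro s
        by_contra h
        exact hyS fun i hi => by simpa using hρ _ h i.succ (by simpa using hi)
      have := (hasDerivAt_slice hf.smooth t y).deriv
      simp only [hz, deriv_const] at this
      rw [← this]
      simp [hz]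

lemma TestFun.slice_integrable (hf : TestFun (vecCons ℓ L) f) (t : ℝ) :
    Integrable (fun y => f (vecCons t y)) (boxMeas L) := by
  obtain ⟨B, hB, h⟩ := hf.bound |t|
  refine hB.mono' ?_ ?_
  · exact (hf.slice t).smooth.continuous.aestronglyMeasurable
  · filter_upwards [h t le_rfl] with y hy using hy.1

lemma TestFun.hasDerivAt_sliceVol (hf : TestFun (vecCons ℓ L) f) (t : ℝ) :
    HasDerivAt (sliceVol L f)
      (∫ y, fderiv ℝ f (vecCons t y) (Pi.single 0 1) ∂boxMeas L) t := by
  obtain ⟨B, hB, h⟩ := hf.bound (|t| + 1)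
  have hfd := hf.smooth.continuous_fderiv one_ne_zero
  have hv := (contDiff_vecCons (d := d) (n := 1)).continuous
  have hvt : ∀ t : ℝ, Continuous fun y : Fin d → ℝ => (vecCons t y : Fin (d + 1) → ℝ) := fun t =>
    hv.comp (by fun_prop : Continuous fun y : Fin d → ℝ => (t, y))
  have hbd : ∀ᵐ y ∂boxMeas L, ∀ s ∈ Metric.ball t 1,
      ‖fderiv ℝ f (vecCons s y) (Pi.single 0 1)‖ ≤ B y := by
    have hall : ∀ᵐ y ∂boxMeas L, ∀ s : ℚ, |(s : ℝ)| ≤ |t| + 1 →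
        |fderiv ℝ f (vecCons (s : ℝ) y) (Pi.single 0 1)| ≤ B y := by
      rw [ae_all_iff]
      intro s
      by_cases hs : |(s : ℝ)| ≤ |t| + 1
      · filter_upwards [h s hs] with y hy _ using hy.2
      · simp [hs]
    filter_upwards [hall] with y hy s hs
    have hcs : Continuous fun s : ℝ => |fderiv ℝ f (vecCons s y) (Pi.single 0 1)| := by
      have : Continuous fun s : ℝ => (vecCons s y : Fin (d + 1) → ℝ) :=
        hv.comp (by fun_prop : Continuous fun s : ℝ => (s, y))
      fun_prop
    have hcl : IsClosed {s : ℝ | |fderiv ℝ f (vecCons s y) (Pi.single 0 1)| ≤ B y} :=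
      isClosed_le hcs continuous_const
    have hd : s ∈ closure (Metric.ball t 1 ∩ Set.range ((↑) : ℚ → ℝ)) :=
      (Rat.denseRange_cast.open_subset_closure_inter Metric.isOpen_ball) hs
    refine hcl.closure_subset_iff.2 ?_ hd
    rintro _ ⟨hs, q, rfl⟩
    refine hy q ?_
    have := abs_sub_abs_le_abs_sub (q : ℝ) t
    rw [Metric.mem_ball, Real.dist_eq] at hs
    linarith
  exact (hasDerivAt_integral_of_dominated_loc_of_deriv_le (Metric.ball_mem_nhds t one_pos)
    (Filter.Eventually.of_forall fun s =>
      (hf.slice s).smooth.continuous.aestronglyMeasurable)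
    (hf.slice_integrable t)
    (by have := hvt t
        exact Continuous.aestronglyMeasurable (by fun_prop)) hbd hB
    (Filter.Eventually.of_forall fun y s _ => hasDerivAt_slice hf.smooth s y)).2

lemma TestFun.continuous_deriv_sliceVol (hf : TestFun (vecCons ℓ L) f) :
    Continuous fun t => ∫ y, fderiv ℝ f (vecCons t y) (Pi.single 0 1) ∂boxMeas L := by
  have hfd := hf.smooth.continuous_fderiv one_ne_zero
  have hv := (contDiff_vecCons (d := d) (n := 1)).continuous
  rw [continuous_iff_continuousAt]
  intro t
  obtain ⟨B, hB, h⟩ := hf.bound (|t| + 1)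
  refine continuousAt_of_dominated (bound := B) ?_ ?_ hB ?_
  · refine Filter.Eventually.of_forall fun s => ?_
    have : Continuous fun y : Fin d → ℝ => (vecCons s y : Fin (d + 1) → ℝ) :=
      hv.comp (by fun_prop : Continuous fun y : Fin d → ℝ => (s, y))
    exact Continuous.aestronglyMeasurable (by fun_prop)
  · filter_upwards [Metric.ball_mem_nhds t one_pos] with s hs
    have := abs_sub_abs_le_abs_sub s t
    rw [Metric.mem_ball, Real.dist_eq] at hs
    filter_upwards [h s (by linarith)] with y hy using hy.2
  · refine Filter.Eventually.of_forall fun y => ?_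
    have : Continuous fun s : ℝ => (vecCons s y : Fin (d + 1) → ℝ) :=
      hv.comp (by fun_prop : Continuous fun s : ℝ => (s, y))
    exact Continuous.continuousAt (by fun_prop)

end slicing

section slicing
variable {d : ℕ} {ℓ : ℝ} {L : Fin d → ℝ} {f : (Fin (d + 1) → ℝ) → ℝ}

/-- The relaxed perimeter of the slice of `f` at height `t`. -/
def slicePer (L : Fin d → ℝ) (f : (Fin (d + 1) → ℝ) → ℝ) (t : ℝ) : ℝ≥0∞ :=
  ∫⁻ y, ENNReal.ofReal (gradN (fun y => f (vecCons t y)) y) ∂boxMeas L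

lemma gradN_nonneg {d : ℕ} (f : (Fin d → ℝ) → ℝ) (x : Fin d → ℝ) : 0 ≤ gradN f x :=
  Real.sqrt_nonneg _

lemma TestFun.measurable_gradN_slice (hf : TestFun (vecCons ℓ L) f) :
    Measurable fun p : ℝ × (Fin d → ℝ) =>
      ENNReal.ofReal (gradN (fun y => f (vecCons p.1 y)) p.2) := by
  have hfd := hf.smooth.continuous_fderiv one_ne_zero
  have hv := (contDiff_vecCons (d := d) (n := 1)).continuous
  unfold gradN
  simp only [fderiv_slice hf.smooth]
  exact (Continuous.measurable (by fun_prop)).ennreal_ofReal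

lemma TestFun.measurable_slicePer (hf : TestFun (vecCons ℓ L) f) : Measurable (slicePer L f) :=
  hf.measurable_gradN_slice.lintegral_prod_right'

lemma TestFun.continuous_sliceVol (hf : TestFun (vecCons ℓ L) f) : Continuous (sliceVol L f) :=
  continuous_iff_continuousAt.2 fun t => (hf.hasDerivAt_sliceVol t).continuousAt

lemma mul_add_mul_le_sqrt {s a g D : ℝ} (h : a ^ 2 + s ^ 2 ≤ 1) :
    a * g + s * D ≤ √(D ^ 2 + g ^ 2) := by
  refine Real.le_sqrt_of_sq_le ?_
  nlinarith [sq_nonneg (a * D - s * g), sq_nonneg D, sq_nonneg g]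

lemma TestFun.slice_grad_le (hf : TestFun (vecCons ℓ L) f) (t : ℝ) {s : ℝ} (hs0 : 0 ≤ s)
    (hs1 : s ≤ 1) :
    ENNReal.ofReal √(1 - s ^ 2) * slicePer L f t +
      ENNReal.ofReal (s * |∫ y, fderiv ℝ f (vecCons t y) (Pi.single 0 1) ∂boxMeas L|) ≤
    ∫⁻ y, ENNReal.ofReal (gradN f (vecCons t y)) ∂boxMeas L := by
  have hfd := hf.smooth.continuous_fderiv one_ne_zero
  have hv := (contDiff_vecCons (d := d) (n := 1)).continuous
  have hDm : Measurable fun y : Fin d → ℝ =>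
      ENNReal.ofReal |fderiv ℝ f (vecCons t y) (Pi.single 0 1)| := by
    have : Continuous fun y : Fin d → ℝ => (vecCons t y : Fin (d + 1) → ℝ) :=
        hv.comp (by fun_prop : Continuous fun y : Fin d → ℝ => (t, y))
    exact (Continuous.measurable (by fun_prop)).ennreal_ofReal
  have h4 : ENNReal.ofReal (s * |∫ y, fderiv ℝ f (vecCons t y) (Pi.single 0 1) ∂boxMeas L|) ≤
      ∫⁻ y, ENNReal.ofReal s *
      ENNReal.ofReal |fderiv ℝ f (vecCons t y) (Pi.single 0 1)| ∂boxMeas L := by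
    rw [lintegral_const_mul _ hDm, ENNReal.ofReal_mul hs0]
    gcongr
    have := enorm_integral_le_lintegral_enorm (μ := boxMeas L)
      fun y => fderiv ℝ f (vecCons t y) (Pi.single 0 1)
    simpa only [Real.enorm_eq_ofReal_abs] using this
  refine (add_le_add le_rfl h4).trans ?_
  have hAm : Measurable fun y : Fin d → ℝ =>
      ENNReal.ofReal (gradN (fun y => f (vecCons t y)) y) :=
    (continuous_gradN (hf.slice t).smooth).measurable.ennreal_ofReal
  rw [slicePer, ← lintegral_const_mul _ hAm, ← lintegral_add_left (hAm.const_mul _)]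
  refine lintegral_mono fun y => ?_
  have key : √(1 - s ^ 2) * gradN (fun y => f (vecCons t y)) y +
      s * |fderiv ℝ f (vecCons t y) (Pi.single 0 1)| ≤ gradN f (vecCons t y) := by
    rw [gradN_vecCons hf.smooth, ← sq_abs (fderiv ℝ f (vecCons t y) (Pi.single 0 1))]
    refine mul_add_mul_le_sqrt ?_
    rw [Real.sq_sqrt] <;> nlinarith
  have key2 := ENNReal.ofReal_le_ofReal key
  rwa [ENNReal.ofReal_add (mul_nonneg (Real.sqrt_nonneg _) (gradN_nonneg _ _))
      (mul_nonneg hs0 (abs_nonneg _)), ENNReal.ofReal_mul (Real.sqrt_nonneg _),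
      ENNReal.ofReal_mul hs0] at key2

lemma TestFun.slicePer_add_le (hf : TestFun (vecCons ℓ L) f) {σ : ℝ → ℝ} (hσ : Continuous σ)
    (hσ0 : ∀ x, 0 ≤ σ x) (hσ1 : ∀ x, σ x ≤ 1) {a b t₀ t₁ : ℝ}
    (hI : volume.restrict (Set.Ioc a b) ≤ coordMeas ℓ)
    (hab : sliceVol L f a = sliceVol L f b) (h₀ : t₀ ∈ Set.Icc a b) (h₁ : t₁ ∈ Set.Icc a b) :
    (∫⁻ t, ENNReal.ofReal √(1 - σ (sliceVol L f t) ^ 2) * slicePer L f t ∂coordMeas ℓ) +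
      ENNReal.ofReal (2 * ∫ x in (sliceVol L f t₀)..(sliceVol L f t₁), σ x) ≤
    ∫⁻ x, ENNReal.ofReal (gradN f x) ∂boxMeas (vecCons ℓ L) := by
  have hmc : Continuous (sliceVol L f) := hf.continuous_sliceVol
  have hm'c := hf.continuous_deriv_sliceVol
  have h2 := two_mul_integral_le_of_eq hf.hasDerivAt_sliceVol hm'c hσ hσ0 hab h₀ h₁
  have hle : a ≤ b := h₀.1.trans h₀.2
  have hc : Continuous fun t => σ (sliceVol L f t) *
      |∫ y, fderiv ℝ f (vecCons t y) (Pi.single 0 1) ∂boxMeas L| :=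
    (hσ.comp hmc).mul hm'c.abs
  have h3 : ENNReal.ofReal (2 * ∫ x in (sliceVol L f t₀)..(sliceVol L f t₁), σ x) ≤
      ∫⁻ t, ENNReal.ofReal (σ (sliceVol L f t) *
        |∫ y, fderiv ℝ f (vecCons t y) (Pi.single 0 1) ∂boxMeas L|) ∂coordMeas ℓ := by
    refine (ENNReal.ofReal_le_ofReal h2).trans ?_
    rw [intervalIntegral.integral_of_le hle, ofReal_integral_eq_lintegral_ofReal]
    · exact lintegral_mono' hI le_rfl
    · exact (hc.intervalIntegrable a b).1
    · exact Filter.Eventually.of_forall fun t => mul_nonneg (hσ0 _) (abs_nonneg _)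
  refine (add_le_add le_rfl h3).trans ?_
  rw [lintegral_boxMeas_vecCons _ _ (continuous_gradN hf.smooth).measurable.ennreal_ofReal,
    ← lintegral_add_right _ hc.measurable.ennreal_ofReal]
  exact lintegral_mono fun t => hf.slice_grad_le t (hσ0 _) (hσ1 _)

lemma TestFun.sliceVol_periodic (hf : TestFun (vecCons ℓ L) f) :
    sliceVol L f 0 = sliceVol L f ℓ := by
  unfold sliceVol
  congr 1
  ext y
  rw [← hf.periodic 0 (vecCons 0 y)]
  congr 1
  ext i
  refine Fin.cases ?_ (fun j => ?_) i <;> simp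

lemma TestFun.sliceVol_eq_zero (hf : TestFun (vecCons 0 L) f) :
    ∃ ρ : ℝ, ∀ t, ρ < |t| → sliceVol L f t = 0 := by
  obtain ⟨ρ, hρ⟩ := hf.supp
  refine ⟨ρ, fun t ht => ?_⟩
  have : ∀ y : Fin d → ℝ, f (vecCons t y) = 0 := by
    intro y
    by_contra h
    have := hρ _ h 0 (by simp)
    simp only [Matrix.cons_val_zero] at this
    linarith
  simp [sliceVol, this]

lemma restrict_le_coordMeas_zero (a b : ℝ) : volume.restrict (Set.Ioc a b) ≤ coordMeas 0 := by
  simp only [coordMeas, if_true]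
  exact Measure.restrict_le_self

lemma restrict_le_coordMeas (hℓ : ℓ ≠ 0) : volume.restrict (Set.Ioc 0 ℓ) ≤ coordMeas ℓ := by
  simp [coordMeas, hℓ]

end slicing

/-- Data produced by slicing a limit of test functions along the first coordinate. -/
structure SliceData (ℓ : ℝ) (h m : ℝ → ℝ) (G : Set ℝ) (V : ℝ) (C : ℝ≥0∞) : Prop where
  meas : Measurable m
  nonneg : ∀ t, 0 ≤ m t
  vol : ∫⁻ t, ENNReal.ofReal (m t) ∂coordMeas ℓ = ENNReal.ofReal V
  ae_mem : ∀ᵐ t ∂coordMeas ℓ, t ∈ G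
  circle : ℓ ≠ 0 → ∀ σ : ℝ → ℝ, Continuous σ → (∀ x, 0 ≤ σ x) → (∀ x, σ x ≤ 1) →
    ∀ t₀ ∈ G, ∀ t₁ ∈ G, (∫⁻ t, ENNReal.ofReal (√(1 - σ (m t) ^ 2) * h (m t)) ∂coordMeas ℓ) +
      ENNReal.ofReal (2 * ∫ x in (m t₀)..(m t₁), σ x) ≤ C
  line : ℓ = 0 → ∀ σ : ℝ → ℝ, Continuous σ → (∀ x, 0 ≤ σ x) → (∀ x, σ x ≤ 1) →
    ∀ t₁ ∈ G, (∫⁻ t, ENNReal.ofReal (√(1 - σ (m t) ^ 2) * h (m t)) ∂coordMeas ℓ) +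
      ENNReal.ofReal (2 * ∫ x in 0..(m t₁), σ x) ≤ C

lemma le_liminf_slicePer {d : ℕ} {L : Fin d → ℝ} {v p : ℝ} (hp : IsoAt L v p)
    {E : Set (Fin d → ℝ)} {f : ℕ → (Fin d → ℝ) → ℝ} (hE : MeasurableSet E)
    (hv : boxMeas L E = ENNReal.ofReal v) (hf : ∀ k, TestFun L (f k))
    (hs : ∑' k, ∫⁻ x, ‖f k x - E.indicator 1 x‖ₑ ∂boxMeas L ≠ ∞) :
    ENNReal.ofReal p ≤ Filter.liminf
      (fun k => ∫⁻ x, ENNReal.ofReal (gradN (f k) x) ∂boxMeas L) Filter.atTop := by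
  refine le_of_forall_gt fun c hc => ?_
  obtain ⟨c', hc', hcc'⟩ := exists_between hc
  have hfr := Filter.frequently_lt_of_liminf_lt (by isBoundedDefault) hc'
  obtain ⟨φ, hφ, hφ'⟩ := Filter.extraction_of_frequently_atTop hfr
  refine lt_of_le_of_lt (hp E (fun k => f (φ k)) c' hE hv (fun k => hf _) ?_
    fun k => (hφ' k).le) hcc'
  exact ne_top_of_le_ne_top hs (ENNReal.tsum_comp_le_tsum_of_injective hφ.injective
    fun k => ∫⁻ x, ‖f k x - E.indicator 1 x‖ₑ ∂boxMeas L)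

lemma exists_sliceData {d : ℕ} {ℓ : ℝ} (hℓ : 0 ≤ ℓ) {L : Fin d → ℝ} {h : ℝ → ℝ}
    (hh : ∀ v, 0 ≤ v → IsoAt L v (h v))
    {E : Set (Fin (d + 1) → ℝ)} {f : ℕ → (Fin (d + 1) → ℝ) → ℝ} {C : ℝ≥0∞} {V : ℝ}
    (hC : C ≠ ∞) (hE : MeasurableSet E) (hV : boxMeas (vecCons ℓ L) E = ENNReal.ofReal V)
    (hf : ∀ k, TestFun (vecCons ℓ L) (f k))
    (hs : ∑' k, ∫⁻ x, ‖f k x - E.indicator 1 x‖ₑ ∂boxMeas (vecCons ℓ L) ≠ ∞)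
    (hP : ∀ k, ∫⁻ x, ENNReal.ofReal (gradN (f k) x) ∂boxMeas (vecCons ℓ L) ≤ C) :
    ∃ m G, SliceData ℓ h m G V C := by
  classical
  set Es : ℝ → Set (Fin d → ℝ) := fun t => {y | vecCons t y ∈ E} with hEs
  have hvm := measurable_vecCons (d := d)
  have hEm : MeasurableSet ((fun p : ℝ × (Fin d → ℝ) => (vecCons p.1 p.2 : Fin (d + 1) → ℝ)) ⁻¹'
      E) :=
    hvm hE
  have hEsm : ∀ t, MeasurableSet (Es t) := fun t => hEm.preimage measurable_prodMk_left
  have hμm : Measurable fun t => boxMeas L (Es t) := measurable_measure_prodMk_left hEm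
  have hvol : ∫⁻ t, boxMeas L (Es t) ∂coordMeas ℓ = ENNReal.ofReal V := by
    rw [← hV, ← (measurePreserving_vecCons ℓ L).measure_preimage hE.nullMeasurableSet,
      Measure.prod_apply hEm]
    rfl
  have hμfin : ∀ᵐ t ∂coordMeas ℓ, boxMeas L (Es t) < ∞ :=
    ae_lt_top hμm (by rw [hvol]; exact ENNReal.ofReal_ne_top)
  set S : ℝ → ℝ≥0∞ := fun t =>
    ∑' k, ∫⁻ y, ‖f k (vecCons t y) - (Es t).indicator 1 y‖ₑ ∂boxMeas L with hS
  have hdm : ∀ k, Measurable fun x => ‖f k x - E.indicator 1 x‖ₑ := fun k =>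
    ((hf k).smooth.continuous.measurable.sub (measurable_one.indicator hE)).enorm
  have hdm' : ∀ k, Measurable fun t =>
      ∫⁻ y, ‖f k (vecCons t y) - (Es t).indicator 1 y‖ₑ ∂boxMeas L := fun k =>
    ((hdm k).comp hvm).lintegral_prod_right'
  have hSint : ∫⁻ t, S t ∂coordMeas ℓ ≠ ∞ := by
    rw [hS, lintegral_tsum fun k => (hdm' k).aemeasurable]
    convert hs using 3 with k
    rw [lintegral_boxMeas_vecCons _ _ (hdm k)]
    rfl
  have hSfin : ∀ᵐ t ∂coordMeas ℓ, S t < ∞ :=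
    ae_lt_top (Measurable.tsum hdm') hSint
  set m : ℝ → ℝ := fun t => (boxMeas L (Es t)).toReal with hm
  set G : Set ℝ := {t | boxMeas L (Es t) < ∞ ∧ S t < ∞ ∧ (ℓ ≠ 0 → t ∈ Set.Ioc 0 ℓ)} with hG
  have hGae : ∀ᵐ t ∂coordMeas ℓ, t ∈ G := by
    have : ∀ᵐ t ∂coordMeas ℓ, ℓ ≠ 0 → t ∈ Set.Ioc 0 ℓ := by
      by_cases h0 : ℓ = 0
      · simp [h0]
      · simp only [coordMeas, h0, if_false]
        filter_upwards [ae_restrict_mem measurableSet_Ioc] with t ht _ using ht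
    filter_upwards [hμfin, hSfin, this] with t h1 h2 h3 using ⟨h1, h2, h3⟩
  have hlim : ∀ t ∈ G, Filter.Tendsto (fun k => sliceVol L (f k) t) Filter.atTop (nhds (m t)) := by
    intro t ht
    have h0 := ENNReal.tendsto_atTop_zero_of_tsum_ne_top ht.2.1.ne
    have hi : Integrable ((Es t).indicator (1 : (Fin d → ℝ) → ℝ)) (boxMeas L) := by
      rw [integrable_indicator_iff (hEsm t)]
      exact integrableOn_const ht.1.ne
    have he : m t = ∫ y, (Es t).indicator (1 : (Fin d → ℝ) → ℝ) y ∂boxMeas L := by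
      rw [integral_indicator_one (hEsm t)]; rfl
    rw [tendsto_iff_edist_tendsto_0]
    refine tendsto_of_tendsto_of_tendsto_of_le_of_le tendsto_const_nhds h0 (fun _ => zero_le) ?_
    intro k
    simp only
    rw [edist_eq_enorm_sub, he, sliceVol, ← integral_sub ((hf k).slice_integrable t) hi]
    exact enorm_integral_le_lintegral_enorm _
  have main : ∀ σ : ℝ → ℝ, Continuous σ → (∀ x, 0 ≤ σ x) → (∀ x, σ x ≤ 1) → ∀ (c : ℕ → ℝ) (c' : ℝ),
      Filter.Tendsto c Filter.atTop (nhds c') →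
      (∀ᶠ k in Filter.atTop, (∫⁻ t, ENNReal.ofReal √(1 - σ (sliceVol L (f k) t) ^ 2) *
          slicePer L (f k) t ∂coordMeas ℓ) + ENNReal.ofReal (c k) ≤
        ∫⁻ x, ENNReal.ofReal (gradN (f k) x) ∂boxMeas (vecCons ℓ L)) →
      (∫⁻ t, ENNReal.ofReal (√(1 - σ (m t) ^ 2) * h (m t)) ∂coordMeas ℓ) +
        ENNReal.ofReal c' ≤ C := by
    intro σ hσ hσ0 hσ1 c c' hc hle
    have hle' : ∀ᶠ k in Filter.atTop, (∫⁻ t, ENNReal.ofReal √(1 - σ (sliceVol L (f k) t) ^ 2) *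
          slicePer L (f k) t ∂coordMeas ℓ) + ENNReal.ofReal (c k) ≤ C :=
      hle.mono fun k hk => hk.trans (hP k)
    have hcc : Filter.Tendsto (fun k => ENNReal.ofReal (c k)) Filter.atTop
        (nhds (ENNReal.ofReal c')) := ENNReal.tendsto_ofReal hc
    have hcC : ENNReal.ofReal c' ≤ C :=
      le_of_tendsto hcc (hle'.mono fun k hk => le_add_self.trans hk)
    refine add_le_of_le_tsub_right_of_le hcC ?_
    have h1 : ∫⁻ t, ENNReal.ofReal (√(1 - σ (m t) ^ 2) * h (m t)) ∂coordMeas ℓ ≤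
        ∫⁻ t, Filter.liminf (fun k => ENNReal.ofReal √(1 - σ (sliceVol L (f k) t) ^ 2) *
          slicePer L (f k) t) Filter.atTop ∂coordMeas ℓ := by
      refine lintegral_mono_ae ?_
      filter_upwards [hGae] with t ht
      rw [ENNReal.ofReal_mul (Real.sqrt_nonneg _)]
      refine le_trans ?_ ENNReal.le_liminf_mul
      refine mul_le_mul' (le_of_eq ?_) ?_
      · have hα : Continuous fun x => ENNReal.ofReal √(1 - σ x ^ 2) :=
          ENNReal.continuous_ofReal.comp (by fun_prop)
        exact ((hα.tendsto _).comp (hlim t ht)).liminf_eq.symm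
      · exact le_liminf_slicePer (hh (m t) ENNReal.toReal_nonneg) (hEsm t)
          (ENNReal.ofReal_toReal ht.1.ne).symm (fun k => (hf k).slice t) ht.2.1.ne
    refine h1.trans ((lintegral_liminf_le fun k => ?_).trans ?_)
    · have := (hf k).continuous_sliceVol
      exact (Continuous.measurable (by fun_prop)).ennreal_ofReal.mul (hf k).measurable_slicePer
    · have h2 : Filter.Tendsto (fun k => C - ENNReal.ofReal (c k)) Filter.atTop
          (nhds (C - ENNReal.ofReal c')) :=
        ENNReal.Tendsto.sub tendsto_const_nhds hcc (Or.inl hC)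
      rw [← h2.liminf_eq]
      refine Filter.liminf_le_liminf ?_
      exact hle'.mono fun k hk => ENNReal.le_sub_of_add_le_right ENNReal.ofReal_ne_top hk
  have hint : ∀ σ : ℝ → ℝ, Continuous σ → Continuous fun p : ℝ × ℝ => ∫ x in p.1..p.2, σ x := by
    intro σ hσ
    have h1 : ∀ p : ℝ × ℝ, ∫ x in p.1..p.2, σ x = (∫ x in 0..p.2, σ x) - ∫ x in 0..p.1, σ x := by
      intro p
      rw [intervalIntegral.integral_interval_sub_left] <;> exact hσ.intervalIntegrable _ _
    have h2 : Continuous fun s : ℝ => ∫ x in 0..s, σ x :=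
      continuous_iff_continuousAt.2 fun s =>
        (hσ.integral_hasStrictDerivAt 0 s).hasDerivAt.continuousAt
    simp only [h1]
    fun_prop
  refine ⟨m, G, hμm.ennreal_toReal, fun t => ENNReal.toReal_nonneg, ?_, hGae, ?_, ?_⟩
  · rw [← hvol]
    refine lintegral_congr_ae ?_
    filter_upwards [hμfin] with t ht using ENNReal.ofReal_toReal ht.ne
  · intro h0 σ hσ hσ0 hσ1 t₀ ht₀ t₁ ht₁
    refine main σ hσ hσ0 hσ1
      (fun k => 2 * ∫ x in (sliceVol L (f k) t₀)..(sliceVol L (f k) t₁), σ x) _ ?_ ?_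
    · exact (((hint σ hσ).tendsto (m t₀, m t₁)).comp
        ((hlim t₀ ht₀).prodMk_nhds (hlim t₁ ht₁))).const_mul 2
    · refine Filter.Eventually.of_forall fun k => ?_
      exact (hf k).slicePer_add_le hσ hσ0 hσ1 (restrict_le_coordMeas h0) (hf k).sliceVol_periodic
        (Set.Ioc_subset_Icc_self (ht₀.2.2 h0)) (Set.Ioc_subset_Icc_self (ht₁.2.2 h0))
  · rintro rfl σ hσ hσ0 hσ1 t₁ ht₁
    refine main σ hσ hσ0 hσ1
      (fun k => 2 * ∫ x in 0..(sliceVol L (f k) t₁), σ x) _ ?_ ?_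
    · exact (((hint σ hσ).tendsto (0, m t₁)).comp
        (tendsto_const_nhds.prodMk_nhds (hlim t₁ ht₁))).const_mul 2
    · refine Filter.Eventually.of_forall fun k => ?_
      obtain ⟨ρ, hρ⟩ := (hf k).sliceVol_eq_zero
      set T := |ρ| + |t₁| + 1 with hT
      have hTρ : ρ < |T| := by
        have := le_abs_self T
        have := le_abs_self ρ
        have := abs_nonneg t₁
        linarith
      have e1 := hρ T hTρ
      have e2 := hρ (-T) (by rwa [abs_neg])
      have := abs_le.1 (le_refl |t₁|)
      have h3 := (hf k).slicePer_add_le hσ hσ0 hσ1 (restrict_le_coordMeas_zero (-T) T)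
        (e2.trans e1.symm) (t₀ := -T) (t₁ := t₁) (by constructor <;> linarith [abs_nonneg ρ])
        (by constructor <;> linarith [abs_nonneg ρ])
      rwa [e2] at h3

lemma continuous_intervalIntegral_prod {σ : ℝ → ℝ} (hσ : Continuous σ) :
    Continuous fun p : ℝ × ℝ => ∫ x in p.1..p.2, σ x := by
  have h1 : ∀ p : ℝ × ℝ, ∫ x in p.1..p.2, σ x = (∫ x in 0..p.2, σ x) - ∫ x in 0..p.1, σ x := by
    intro p
    rw [intervalIntegral.integral_interval_sub_left] <;> exact hσ.intervalIntegrable _ _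
  have h2 : Continuous fun s : ℝ => ∫ x in 0..s, σ x :=
    continuous_iff_continuousAt.2 fun s =>
      (hσ.integral_hasStrictDerivAt 0 s).hasDerivAt.continuousAt
  simp only [h1]
  fun_prop

lemma coordMeas_ne_zero {ℓ : ℝ} (hℓ : 0 ≤ ℓ) : coordMeas ℓ ≠ 0 := by
  rcases hℓ.eq_or_lt with rfl | h
  · simp only [coordMeas, if_true]
    exact NeZero.ne _
  · simp only [coordMeas, h.ne', if_false, ne_eq, Measure.restrict_eq_zero, Real.volume_Ioc,
      sub_zero, ENNReal.ofReal_eq_zero, not_le]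
    exact h

/-- The profile `m` of slice volumes ranges in `[μ, X]` and satisfies the reduced
isoperimetric inequality for every calibration `σ`. -/
structure Reduced (ℓ : ℝ) (h m : ℝ → ℝ) (μ X V c : ℝ) : Prop where
  meas : Measurable m
  nonneg : ∀ t, 0 ≤ m t
  vol : ∫⁻ t, ENNReal.ofReal (m t) ∂coordMeas ℓ = ENNReal.ofReal V
  min_nonneg : 0 ≤ μ
  min_le : μ ≤ X
  min_eq : ℓ = 0 → μ = 0
  cost_nonneg : 0 ≤ c
  range : ∀ᵐ t ∂coordMeas ℓ, μ ≤ m t ∧ m t ≤ X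
  le : ∀ σ : ℝ → ℝ, Continuous σ → (∀ x, 0 ≤ σ x) → (∀ x, σ x ≤ 1) →
    (∫⁻ t, ENNReal.ofReal (√(1 - σ (m t) ^ 2) * h (m t)) ∂coordMeas ℓ) +
      ENNReal.ofReal (2 * ∫ x in μ..X, σ x) ≤ ENNReal.ofReal c

lemma SliceData.exists_reduced {ℓ : ℝ} (hℓ : 0 ≤ ℓ) {h m : ℝ → ℝ} {G : Set ℝ} {V : ℝ} {C : ℝ≥0∞}
    (hD : SliceData ℓ h m G V C) (hC : C ≠ ∞) : ∃ μ X, Reduced ℓ h m μ X V C.toReal := by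
  have hGne : G.Nonempty := by
    have : (ae (coordMeas ℓ)).NeBot := ae_neBot.2 (coordMeas_ne_zero hℓ)
    exact hD.ae_mem.exists
  obtain ⟨t₀, ht₀⟩ := hGne
  have hbd : ∀ t ∈ G, 2 * m t ≤ C.toReal + 2 * m t₀ := by
    intro t ht
    have h1 : ENNReal.ofReal (2 * (m t - m t₀)) ≤ C := by
      by_cases h0 : ℓ = 0
      · have := le_trans le_add_self (hD.line h0 (fun _ => 1) continuous_const (by simp)
          (by simp) t ht)
        simp only [intervalIntegral.integral_const, smul_eq_mul, mul_one, sub_zero] at this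
        refine le_trans (ENNReal.ofReal_le_ofReal ?_) this
        linarith [hD.nonneg t₀]
      · have := le_trans le_add_self
          (hD.circle h0 (fun _ => 1) continuous_const (by simp) (by simp) t₀ ht₀ t ht)
        simpa using this
    have := (ENNReal.ofReal_le_iff_le_toReal hC).1 h1
    linarith
  have hne : (m '' G).Nonempty := ⟨_, t₀, ht₀, rfl⟩
  have hba : BddAbove (m '' G) := by
    refine ⟨(C.toReal + 2 * m t₀) / 2, ?_⟩
    rintro _ ⟨t, ht, rfl⟩
    linarith [hbd t ht]
  have hbb : BddBelow (m '' G) := ⟨0, by rintro _ ⟨t, _, rfl⟩; exact hD.nonneg t⟩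
  have hXle : ∀ t ∈ G, m t ≤ sSup (m '' G) := fun t ht => le_csSup hba ⟨t, ht, rfl⟩
  have hμle : ∀ t ∈ G, sInf (m '' G) ≤ m t := fun t ht => csInf_le hbb ⟨t, ht, rfl⟩
  have hμ0 : 0 ≤ sInf (m '' G) := le_csInf hne (by rintro _ ⟨t, _, rfl⟩; exact hD.nonneg t)
  obtain ⟨u, -, hu, huG⟩ := exists_seq_tendsto_sSup hne hba
  obtain ⟨w, -, hw, hwG⟩ := exists_seq_tendsto_sInf hne hbb
  by_cases h0 : ℓ = 0
  · refine ⟨0, sSup (m '' G), hD.meas, hD.nonneg, hD.vol, le_rfl,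
      (hD.nonneg t₀).trans (hXle _ ht₀), fun _ => rfl, ENNReal.toReal_nonneg, ?_, ?_⟩
    · filter_upwards [hD.ae_mem] with t ht using ⟨hD.nonneg t, hXle t ht⟩
    · intro σ hσ hσ0 hσ1
      rw [ENNReal.ofReal_toReal hC]
      have hl : Filter.Tendsto (fun k => ENNReal.ofReal (2 * ∫ x in 0..(u k), σ x)) Filter.atTop
          (nhds (ENNReal.ofReal (2 * ∫ x in 0..(sSup (m '' G)), σ x))) :=
        ENNReal.tendsto_ofReal ((((continuous_intervalIntegral_prod hσ).tendsto (0, _)).comp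
          (tendsto_const_nhds.prodMk_nhds hu)).const_mul 2)
      refine le_of_tendsto (hl.const_add _) (Filter.Eventually.of_forall fun k => ?_)
      obtain ⟨t, ht, htu⟩ := huG k
      rw [← htu]
      exact hD.line h0 σ hσ hσ0 hσ1 t ht
  · refine ⟨sInf (m '' G), sSup (m '' G), hD.meas, hD.nonneg, hD.vol, hμ0,
      (hμle _ ht₀).trans (hXle _ ht₀), fun h => absurd h h0, ENNReal.toReal_nonneg, ?_, ?_⟩
    · filter_upwards [hD.ae_mem] with t ht using ⟨hμle t ht, hXle t ht⟩
    · intro σ hσ hσ0 hσ1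
      rw [ENNReal.ofReal_toReal hC]
      have hl : Filter.Tendsto (fun k => ENNReal.ofReal (2 * ∫ x in (w k)..(u k), σ x)) Filter.atTop
          (nhds (ENNReal.ofReal (2 * ∫ x in (sInf (m '' G))..(sSup (m '' G)), σ x))) :=
        ENNReal.tendsto_ofReal ((((continuous_intervalIntegral_prod hσ).tendsto (_, _)).comp
          (hw.prodMk_nhds hu)).const_mul 2)
      refine le_of_tendsto (hl.const_add _) (Filter.Eventually.of_forall fun k => ?_)
      obtain ⟨t, ht, htu⟩ := huG k
      obtain ⟨s, hs, hsw⟩ := hwG k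
      rw [← htu, ← hsw]
      exact hD.circle h0 σ hσ hσ0 hσ1 s hs t ht

/-- Reduction of an isoperimetric inequality in one more dimension to a one-dimensional problem. -/
lemma isoAt_vecCons {d : ℕ} {ℓ : ℝ} (hℓ : 0 ≤ ℓ) {L : Fin d → ℝ} {h : ℝ → ℝ}
    (hh : ∀ v, 0 ≤ v → IsoAt L v (h v)) {v p : ℝ}
    (H : ∀ (m : ℝ → ℝ) (μ X c : ℝ), Reduced ℓ h m μ X v c → p ≤ c) :
    IsoAt (vecCons ℓ L) v p := by
  intro E f C hE hV hf hs hP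
  rcases eq_or_ne C ∞ with rfl | hC
  · exact le_top
  obtain ⟨m, G, hD⟩ := exists_sliceData hℓ hh hC hE hV hf hs hP
  obtain ⟨μ, X, hR⟩ := hD.exists_reduced hℓ hC
  exact ENNReal.ofReal_le_of_le_toReal (H m μ X _ hR)

lemma isoAt_of_nonpos {d : ℕ} (L : Fin d → ℝ) (v : ℝ) {p : ℝ} (hp : p ≤ 0) : IsoAt L v p := by
  intro E f C _ _ _ _ _
  rw [ENNReal.ofReal_of_nonpos hp]
  exact zero_le

lemma IsoAt.mono {d : ℕ} {L : Fin d → ℝ} {v p q : ℝ} (h : IsoAt L v p) (hq : q ≤ p) :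
    IsoAt L v q := fun E f C h1 h2 h3 h4 h5 =>
  (ENNReal.ofReal_le_ofReal hq).trans (h E f C h1 h2 h3 h4 h5)

lemma Reduced.volume_le {ℓ : ℝ} {h m : ℝ → ℝ} {μ X V c : ℝ} (hR : Reduced ℓ h m μ X V c)
    (hℓ : 0 < ℓ) : V ≤ ℓ * X := by
  have hX : 0 ≤ X := hR.min_nonneg.trans hR.min_le
  have : ENNReal.ofReal V ≤ ENNReal.ofReal (ℓ * X) := by
    rw [← hR.vol]
    calc ∫⁻ t, ENNReal.ofReal (m t) ∂coordMeas ℓ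
        ≤ ∫⁻ t, ENNReal.ofReal X ∂coordMeas ℓ := by
          refine lintegral_mono_ae ?_
          filter_upwards [hR.range] with t ht using ENNReal.ofReal_le_ofReal ht.2
      _ = ENNReal.ofReal (ℓ * X) := by
          simp [coordMeas, hℓ.ne', ENNReal.ofReal_mul hℓ.le, mul_comm]
  exact (ENNReal.ofReal_le_ofReal_iff (by positivity)).1 this

lemma Reduced.le_volume {ℓ : ℝ} {h m : ℝ → ℝ} {μ X V c : ℝ} (hR : Reduced ℓ h m μ X V c)
    (hℓ : 0 < ℓ) (hV : 0 ≤ V) : ℓ * μ ≤ V := by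
  have : ENNReal.ofReal (ℓ * μ) ≤ ENNReal.ofReal V := by
    rw [← hR.vol]
    calc ENNReal.ofReal (ℓ * μ) = ∫⁻ t, ENNReal.ofReal μ ∂coordMeas ℓ := by
          simp [coordMeas, hℓ.ne', ENNReal.ofReal_mul hℓ.le, mul_comm]
      _ ≤ ∫⁻ t, ENNReal.ofReal (m t) ∂coordMeas ℓ := by
          refine lintegral_mono_ae ?_
          filter_upwards [hR.range] with t ht using ENNReal.ofReal_le_ofReal ht.1
  exact (ENNReal.ofReal_le_ofReal_iff hV).1 this

lemma Reduced.osc_le {ℓ : ℝ} {h m : ℝ → ℝ} {μ X V c : ℝ} (hR : Reduced ℓ h m μ X V c) :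
    2 * (X - μ) ≤ c := by
  have := le_trans le_add_self (hR.le (fun _ => 1) continuous_const (by simp) (by simp))
  simp only [intervalIntegral.integral_const, smul_eq_mul, mul_one] at this
  exact (ENNReal.ofReal_le_ofReal_iff hR.cost_nonneg).1 this

lemma isFiniteMeasure_coordMeas {ℓ : ℝ} (hℓ : 0 < ℓ) : IsFiniteMeasure (coordMeas ℓ) := by
  simp only [coordMeas, hℓ.ne', if_false]
  infer_instance

lemma coordMeas_real_univ {ℓ : ℝ} (hℓ : 0 < ℓ) : (coordMeas ℓ).real Set.univ = ℓ := by
  simp [coordMeas, hℓ.ne', Measure.real, ENNReal.toReal_ofReal hℓ.le]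

lemma Reduced.integrable {ℓ : ℝ} {h m : ℝ → ℝ} {μ X V c : ℝ} (hR : Reduced ℓ h m μ X V c) :
    Integrable m (coordMeas ℓ) := by
  refine ⟨hR.meas.aestronglyMeasurable, ?_⟩
  rw [hasFiniteIntegral_iff_ofReal (Filter.Eventually.of_forall hR.nonneg), hR.vol]
  exact ENNReal.ofReal_lt_top

lemma Reduced.integral_eq {ℓ : ℝ} {h m : ℝ → ℝ} {μ X V c : ℝ} (hR : Reduced ℓ h m μ X V c)
    (hV : 0 ≤ V) : ∫ t, m t ∂coordMeas ℓ = V := by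
  rw [integral_eq_lintegral_of_nonneg_ae (Filter.Eventually.of_forall hR.nonneg)
    hR.meas.aestronglyMeasurable, hR.vol, ENNReal.toReal_ofReal hV]

lemma ofReal_integral_le {α : Type*} [MeasurableSpace α] {ν : Measure α} {q : α → ℝ}
    (hq : Integrable q ν) : ENNReal.ofReal (∫ t, q t ∂ν) ≤ ∫⁻ t, ENNReal.ofReal (q t) ∂ν := by
  rw [integral_eq_lintegral_pos_part_sub_lintegral_neg_part hq]
  refine ENNReal.ofReal_le_of_le_toReal ?_
  linarith [ENNReal.toReal_nonneg (a := ∫⁻ t, ENNReal.ofReal (-q t) ∂ν)]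

/-- Lower bound for the cost obtained from an integrable minorant of the slice contribution. -/
lemma Reduced.integral_add_le {ℓ : ℝ} {h m : ℝ → ℝ} {μ X V c : ℝ} (hR : Reduced ℓ h m μ X V c)
    {σ q : ℝ → ℝ} (hσ : Continuous σ) (hσ0 : ∀ x, 0 ≤ σ x) (hσ1 : ∀ x, σ x ≤ 1)
    (hq : Integrable q (coordMeas ℓ)) (hq0 : 0 ≤ ∫ t, q t ∂coordMeas ℓ)
    (hle : ∀ᵐ t ∂coordMeas ℓ, q t ≤ √(1 - σ (m t) ^ 2) * h (m t)) :
    ∫ t, q t ∂coordMeas ℓ + 2 * ∫ x in μ..X, σ x ≤ c := by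
  have h1 : 0 ≤ ∫ x in μ..X, σ x :=
    intervalIntegral.integral_nonneg hR.min_le fun x _ => hσ0 x
  rw [← ENNReal.ofReal_le_ofReal_iff hR.cost_nonneg, ENNReal.ofReal_add hq0 (by positivity)]
  refine le_trans (add_le_add ((ofReal_integral_le hq).trans (lintegral_mono_ae ?_)) le_rfl)
    (hR.le σ hσ hσ0 hσ1)
  filter_upwards [hle] with t ht using ENNReal.ofReal_le_ofReal ht

lemma one_add_mul_sub_sq_le_rpow {p y : ℝ} (hp0 : 0 < p) (hp1 : p < 1) (hy : -1 < y) :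
    1 + p * y - y ^ 2 ≤ (1 + y) ^ p := by
  have hx : 0 < 1 + y := by linarith
  have h1 : (1 + y) ^ (1 - p) ≤ 1 + (1 - p) * y :=
    rpow_one_add_le_one_add_mul_self hy.le (by linarith) (by linarith)
  have h2 : 0 < (1 + y) ^ (1 - p) := rpow_pos_of_pos hx _
  have h3 : (1 + y) ^ p * (1 + y) ^ (1 - p) = 1 + y := by
    rw [← rpow_add hx]; simp
  have h4 : 0 < (1 + y) ^ p := rpow_pos_of_pos hx _
  have h5 : 1 + y ≤ (1 + y) ^ p * (1 + (1 - p) * y) := by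
    exact h3.symm.trans_le (mul_le_mul_of_nonneg_left h1 h4.le)
  have h6 : 0 < 1 + (1 - p) * y := h2.trans_le h1
  by_contra! hc
  have h7 : (1 + y) ^ p * (1 + (1 - p) * y) < (1 + p * y - y ^ 2) * (1 + (1 - p) * y) :=
    mul_lt_mul_of_pos_right hc h6
  have h8 : 0 ≤ y ^ 2 * (p ^ 2 + (1 - p) * (1 + y)) :=
    mul_nonneg (sq_nonneg y) (add_nonneg (sq_nonneg p) (mul_nonneg (by linarith) hx.le))
  linarith [show (1 + p * y - y ^ 2) * (1 + (1 - p) * y) =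
    1 + y - y ^ 2 * (p ^ 2 + (1 - p) * (1 + y)) by ring]

/-- Large volumes: adding a circle factor does not create better regions. -/
lemma isoAt_large_step {d : ℕ} {ℓ : ℝ} (hℓ : 0 < ℓ) {L : Fin d → ℝ} {K p V₀ : ℝ} (hK : 0 < K)
    (hp0 : 0 < p) (hp1 : p < 1) (h : ∀ v, V₀ ≤ v → IsoAt L v (K * v ^ p)) :
    ∃ V₁, ∀ v, V₁ ≤ v → IsoAt (vecCons ℓ L) v (ℓ ^ (1 - p) * K * v ^ p) := by
  classical
  have hlim : Filter.Tendsto (fun x : ℝ => x ^ (1 - p)) Filter.atTop Filter.atTop :=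
    tendsto_rpow_atTop (by linarith)
  obtain ⟨B, hB⟩ := Filter.eventually_atTop.1 (hlim.eventually_ge_atTop (ℓ * K))
  refine ⟨ℓ * (max B (max 1 (2 * V₀))), fun v hv => ?_⟩
  refine isoAt_vecCons hℓ.le (h := fun x => if V₀ ≤ x then K * x ^ p else 0) ?_ ?_
  · intro x _
    by_cases hx : V₀ ≤ x
    · simpa only [hx, if_true] using h x hx
    · simpa only [hx, if_false] using isoAt_of_nonpos L x le_rfl
  intro m μ X c hR
  have hv' : max B (max 1 (2 * V₀)) ≤ v / ℓ := by rw [le_div_iff₀ hℓ]; linarith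
  obtain ⟨m0, hm0⟩ : ∃ m0, m0 = v / ℓ := ⟨_, rfl⟩
  rw [← hm0] at hv'
  have hvm : v = ℓ * m0 := by rw [hm0]; field_simp
  have h1 : B ≤ m0 := (le_max_left _ _).trans hv'
  have h2 : 1 ≤ m0 := ((le_max_left _ _).trans (le_max_right _ _)).trans hv'
  have h3 : 2 * V₀ ≤ m0 := ((le_max_right _ _).trans (le_max_right _ _)).trans hv'
  have hm0p : 0 < m0 := by linarith
  have hv0 : 0 < v := by rw [hvm]; positivity
  obtain ⟨H, hH⟩ : ∃ H, H = ℓ * (K * m0 ^ p) := ⟨_, rfl⟩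
  have hHp : 0 < H := by rw [hH]; have := rpow_pos_of_pos hm0p p; positivity
  have hgoal : ℓ ^ (1 - p) * K * v ^ p = H := by
    rw [hvm, mul_rpow hℓ.le hm0p.le, hH]
    have : ℓ ^ (1 - p) * ℓ ^ p = ℓ := by rw [← rpow_add hℓ]; simp
    linear_combination K * m0 ^ p * this
  have hHm : H ≤ m0 := by
    have e1 : m0 ^ (1 - p) * m0 ^ p = m0 := by rw [← rpow_add hm0p]; simp
    have e2 := mul_le_mul_of_nonneg_right (hB m0 h1) (rpow_pos_of_pos hm0p p).le
    rw [hH]; linarith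
  rw [hgoal]
  have hX : m0 ≤ X := by
    have := hR.volume_le hℓ; rw [hvm] at this; exact le_of_mul_le_mul_left this hℓ
  have hμ : μ ≤ m0 := by
    have := hR.le_volume hℓ hv0.le; rw [hvm] at this; exact le_of_mul_le_mul_left this hℓ
  have hosc := hR.osc_le
  by_cases hs : H ≤ 2 * (X - μ)
  · linarith
  push Not at hs
  obtain ⟨s, hsd⟩ : ∃ s, s = X - μ := ⟨_, rfl⟩
  rw [← hsd] at hs hosc
  have hs0 : 0 ≤ s := by linarith
  obtain ⟨u, hu⟩ : ∃ u, u = s / H := ⟨_, rfl⟩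
  have hsu : s = u * H := by rw [hu]; field_simp
  have hu0 : 0 ≤ u := by rw [hu]; positivity
  have hu1 : u ≤ 1 / 2 := by rw [hu, div_le_iff₀ hHp]; linarith
  have hFin := isFiniteMeasure_coordMeas hℓ
  have hint := hR.integrable
  have hα : 1 - u ^ 2 ≤ √(1 - u ^ 2) := by
    refine Real.le_sqrt_of_sq_le ?_
    have : 0 ≤ 1 - u ^ 2 := by nlinarith
    nlinarith [mul_nonneg (sq_nonneg u) this]
  set q : ℝ → ℝ := fun t => (1 - u ^ 2) * (K * m0 ^ p * (1 + p * (m t / m0 - 1) - u ^ 2)) with hq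
  have hqi : Integrable q (coordMeas ℓ) := by
    refine Integrable.const_mul (Integrable.const_mul ?_ _) _
    exact ((integrable_const 1).add
      (((hint.div_const _).sub (integrable_const 1)).const_mul _)).sub (integrable_const _)
  have hqv : ∫ t, q t ∂coordMeas ℓ = (1 - u ^ 2) * (1 - u ^ 2) * H := by
    have e : q = fun t => (1 - u ^ 2) * (K * m0 ^ p) * (1 - p - u ^ 2) +
        (1 - u ^ 2) * (K * m0 ^ p) * p / m0 * m t := by
      funext t; simp only [hq]; field_simp; ring
    rw [e, integral_add (integrable_const _) (hint.const_mul _), integral_const,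
      integral_const_mul, coordMeas_real_univ hℓ, hR.integral_eq hv0.le, hvm, hH, smul_eq_mul]
    field_simp
    ring
  have hu2 : 0 ≤ 1 - u ^ 2 := by nlinarith
  have key := hR.integral_add_le (σ := fun _ => u) (q := q) continuous_const (fun _ => hu0)
    (fun _ => by linarith) hqi (by rw [hqv]; positivity) ?_
  · rw [hqv] at key
    simp only [intervalIntegral.integral_const, smul_eq_mul] at key
    rw [← hsd, hsu] at key
    nlinarith [mul_nonneg (sq_nonneg (u ^ 2)) hHp.le]
  · filter_upwards [hR.range] with t ht
    have ht1 : V₀ ≤ m t := by linarith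
    have hmt : 0 < m t := by linarith
    simp only [ht1, if_true]
    have hy : -1 < m t / m0 - 1 := by have := div_pos hmt hm0p; linarith
    have hb := one_add_mul_sub_sq_le_rpow hp0 hp1 hy
    rw [add_sub_cancel, div_rpow hmt.le hm0p.le, le_div_iff₀ (rpow_pos_of_pos hm0p p)] at hb
    have habs : (m t / m0 - 1) ^ 2 ≤ u ^ 2 := by
      have : |m t / m0 - 1| ≤ u := by
        have e : m t / m0 - 1 = (m t - m0) / m0 := by field_simp
        rw [e, abs_div, abs_of_pos hm0p, div_le_iff₀ hm0p]
        have : |m t - m0| ≤ s := by rw [abs_le]; constructor <;> linarith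
        have := mul_le_mul_of_nonneg_left hHm hu0
        linarith
      rw [← sq_abs (m t / m0 - 1)]
      exact pow_le_pow_left₀ (abs_nonneg _) this 2
    have hpos := rpow_pos_of_pos hm0p p
    simp only [hq]
    refine mul_le_mul hα ?_ ?_ (Real.sqrt_nonneg _)
    · rw [mul_assoc]
      refine mul_le_mul_of_nonneg_left ?_ hK.le
      refine le_trans ?_ hb
      rw [mul_comm]
      exact mul_le_mul_of_nonneg_right (by linarith) hpos.le
    · refine mul_nonneg (by positivity) ?_
      have : m t / m0 ≥ 1 / 2 := by rw [ge_iff_le, le_div_iff₀ hm0p]; linarith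
      nlinarith

/-- The volume of the unit ball of `ℝ^d`. -/
def ballVol (d : ℕ) : ℝ := (volume (Metric.ball (0 : EuclideanSpace ℝ (Fin d)) 1)).toReal

lemma ballVol_pos (d : ℕ) : 0 < ballVol d :=
  ENNReal.toReal_pos (Metric.measure_ball_pos _ _ one_pos).ne' measure_ball_lt_top.ne

lemma boxMeas_zero (d : ℕ) : boxMeas (0 : Fin d → ℝ) = volume := by
  simp [boxMeas, coordMeas, volume_pi]

lemma volume_sum_sq_lt {d : ℕ} (hd : 1 ≤ d) {s : ℝ} (hs : 0 ≤ s) :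
    volume {y : Fin d → ℝ | ∑ i, y i ^ 2 < s ^ 2} =
      ENNReal.ofReal (s ^ d) * ENNReal.ofReal (ballVol d) := by
  have hm : MeasurableSet {y : Fin d → ℝ | ∑ i, y i ^ 2 < s ^ 2} :=
    measurableSet_lt (by fun_prop) (by fun_prop)
  have : Nonempty (Fin d) := ⟨⟨0, hd⟩⟩
  rw [← (PiLp.volume_preserving_ofLp (Fin d)).measure_preimage hm.nullMeasurableSet]
  have : (WithLp.ofLp ⁻¹' {y : Fin d → ℝ | ∑ i, y i ^ 2 < s ^ 2} : Set (EuclideanSpace ℝ (Fin d))) =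
      Metric.ball 0 s := by
    rw [EuclideanSpace.ball_zero_eq s hs]; rfl
  rw [this, Measure.addHaar_ball _ _ hs, finrank_euclideanSpace_fin, ballVol,
    ENNReal.ofReal_toReal measure_ball_lt_top.ne]

/-- The profile of the optimal calibration. -/
def capFun (d : ℕ) (u : ℝ) : ℝ := √(1 - u ^ ((2 : ℝ) / d))

lemma lintegral_capFun {d : ℕ} (hd : 1 ≤ d) :
    ∫⁻ u in Set.Ioc (0 : ℝ) 1, ENNReal.ofReal (capFun d u) =
      ∫⁻ t in Set.Ioi (0 : ℝ), ENNReal.ofReal (√(1 - t ^ 2) ^ d) := by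
  have hd0 : (0 : ℝ) < d := by exact_mod_cast hd
  rw [lintegral_eq_lintegral_meas_lt]
  · refine setLIntegral_congr_fun measurableSet_Ioi fun t (ht : 0 < t) => ?_
    have hset : {a : ℝ | t < capFun d a} ∩ Set.Ioc 0 1 = Set.Ioo 0 (√(1 - t ^ 2) ^ d) := by
      ext a
      simp only [Set.mem_inter_iff, Set.mem_ofPred_eq, Set.mem_Ioc, Set.mem_Ioo, capFun]
      have hkey : ∀ ha : 0 < a, (t < √(1 - a ^ ((2 : ℝ) / d)) ↔ a < √(1 - t ^ 2) ^ d) := by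
        intro ha
        have h1 : a ^ ((2 : ℝ) / d) = (a ^ ((1 : ℝ) / d)) ^ 2 := by
          rw [← Real.rpow_natCast, ← rpow_mul ha.le]; congr 1; push_cast; ring
        have h2 : a = (a ^ ((1 : ℝ) / d)) ^ d := by
          rw [← Real.rpow_natCast, ← rpow_mul ha.le, one_div, inv_mul_cancel₀ hd0.ne',
            Real.rpow_one]
        have hb : 0 < a ^ ((1 : ℝ) / d) := rpow_pos_of_pos ha _
        generalize a ^ ((1 : ℝ) / d) = b at h1 h2 hb
        rw [h1, h2, pow_lt_pow_iff_left₀ hb.le (Real.sqrt_nonneg _) (by lia),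
          Real.lt_sqrt ht.le, Real.lt_sqrt hb.le]
        constructor <;> intro h <;> linarith
      constructor
      · rintro ⟨h1, h2, h3⟩
        exact ⟨h2, (hkey h2).1 h1⟩
      · rintro ⟨h1, h2⟩
        refine ⟨(hkey h1).2 h2, h1, h2.le.trans (pow_le_one₀ (Real.sqrt_nonneg _) ?_)⟩
        rw [Real.sqrt_le_one]
        nlinarith
    rw [Measure.restrict_apply', hset, Real.volume_Ioo, sub_zero]
    exact measurableSet_Ioc
  · exact Filter.Eventually.of_forall fun u => Real.sqrt_nonneg _
  · unfold capFun
    exact Measurable.aemeasurable (by fun_prop)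

lemma lintegral_even {F : ℝ → ℝ≥0∞} (hF : ∀ t, F (-t) = F t) :
    ∫⁻ t, F t = 2 * ∫⁻ t in Set.Ioi 0, F t := by
  rw [← lintegral_add_compl F measurableSet_Ioi, two_mul]
  congr 1
  rw [Set.compl_Ioi, ← setLIntegral_congr Iio_ae_eq_Iic,
    ← lintegral_indicator measurableSet_Iio, ← lintegral_indicator measurableSet_Ioi,
    ← lintegral_neg_eq_self]
  refine lintegral_congr fun t => ?_
  by_cases h : 0 < t
  · simp [h, hF]
  · simp [h]

lemma ballVol_succ {d : ℕ} (hd : 1 ≤ d) :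
    ballVol d * (2 * ∫ u in (0 : ℝ)..1, capFun d u) = ballVol (d + 1) := by
  have hd0 : (0 : ℝ) < d := by exact_mod_cast hd
  have h1 : ENNReal.ofReal (ballVol (d + 1)) = ENNReal.ofReal (ballVol d) *
      (2 * ∫⁻ t in Set.Ioi (0 : ℝ), ENNReal.ofReal (√(1 - t ^ 2) ^ d)) := by
    have e0 := volume_sum_sq_lt (d := d + 1) (by lia) zero_le_one
    have hm : MeasurableSet {y : Fin (d + 1) → ℝ | ∑ i, y i ^ 2 < 1 ^ 2} :=
      measurableSet_lt (by fun_prop) (by fun_prop)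
    have e1 := (measurePreserving_vecCons 0 (0 : Fin d → ℝ)).measure_preimage hm.nullMeasurableSet
    rw [Measure.prod_apply (hm.preimage measurable_vecCons)] at e1
    have hz : (vecCons 0 (0 : Fin d → ℝ) : Fin (d + 1) → ℝ) = 0 := by
      ext i; refine Fin.cases ?_ (fun j => ?_) i <;> simp
    rw [hz, boxMeas_zero, boxMeas_zero, e0] at e1
    simp only [one_pow, ENNReal.ofReal_one, one_mul] at e1
    rw [← e1, ← lintegral_even (by simp), ← lintegral_const_mul' _ _ ENNReal.ofReal_ne_top]
    simp only [coordMeas, if_true]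
    refine lintegral_congr fun t => ?_
    rw [mul_comm, ← volume_sum_sq_lt hd (Real.sqrt_nonneg _)]
    congr 1
    ext y
    simp only [Set.mem_preimage, Set.mem_ofPred_eq, Fin.sum_univ_succ, Matrix.cons_val_zero,
      Matrix.cons_val_succ]
    have hy : 0 ≤ ∑ i, y i ^ 2 := Finset.sum_nonneg fun i _ => sq_nonneg _
    rcases le_total (t ^ 2) 1 with h | h
    · rw [Real.sq_sqrt (by linarith)]
      constructor <;> intro h <;> linarith
    · rw [Real.sqrt_eq_zero_of_nonpos (by linarith)]
      constructor <;> intro h <;> nlinarith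
  rw [← lintegral_capFun hd] at h1
  have hb : ∀ u, capFun d u ≤ 1 ∨ u < 0 := by
    intro u
    rcases lt_or_ge u 0 with h | h
    · exact Or.inr h
    · left
      rw [capFun, Real.sqrt_le_one]
      linarith [rpow_nonneg h ((2 : ℝ) / d)]
  have hint : ∫ u in (0 : ℝ)..1, capFun d u =
      (∫⁻ u in Set.Ioc (0 : ℝ) 1, ENNReal.ofReal (capFun d u)).toReal := by
    rw [intervalIntegral.integral_of_le zero_le_one, integral_eq_lintegral_of_nonneg_ae]
    · exact Filter.Eventually.of_forall fun u => Real.sqrt_nonneg _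
    · unfold capFun
      exact Measurable.aestronglyMeasurable (by fun_prop)
  rw [hint, ← ENNReal.toReal_ofReal (ballVol_pos (d + 1)).le, h1, ENNReal.toReal_mul,
    ENNReal.toReal_mul, ENNReal.toReal_ofReal (ballVol_pos d).le]
  rfl

/-- The calibration for slices of volume at most `X`. -/
def calib (d : ℕ) (X x : ℝ) : ℝ := capFun d (max x 0 / X)

lemma continuous_calib {d : ℕ} (X : ℝ) : Continuous (calib d X) := by
  unfold calib capFun
  have : Continuous fun u : ℝ => u ^ ((2 : ℝ) / d) :=
    continuous_id.rpow_const fun _ => Or.inr (by positivity)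
  exact Real.continuous_sqrt.comp (continuous_const.sub (this.comp (by fun_prop)))

lemma calib_nonneg (d : ℕ) (X x : ℝ) : 0 ≤ calib d X x := Real.sqrt_nonneg _

lemma calib_le_one (d : ℕ) {X : ℝ} (hX : 0 ≤ X) (x : ℝ) : calib d X x ≤ 1 := by
  rw [calib, capFun, Real.sqrt_le_one]
  linarith [rpow_nonneg (div_nonneg (le_max_right x 0) hX) ((2 : ℝ) / d)]

/-- The radius of the ball of volume `x` in `ℝ^d`. -/
def rad (d : ℕ) (x : ℝ) : ℝ := (x / ballVol d) ^ ((1 : ℝ) / d)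

/-- The perimeter of the ball of volume `x` in `ℝ^d`. -/
def eucPer (d : ℕ) (x : ℝ) : ℝ := d * x / rad d x

lemma rad_pos {d : ℕ} {x : ℝ} (hx : 0 < x) : 0 < rad d x :=
  rpow_pos_of_pos (div_pos hx (ballVol_pos d)) _

lemma rad_nonneg {d : ℕ} {x : ℝ} (hx : 0 ≤ x) : 0 ≤ rad d x :=
  rpow_nonneg (div_nonneg hx (ballVol_pos d).le) _

lemma ballVol_mul_rad_pow {d : ℕ} (hd : 1 ≤ d) {x : ℝ} (hx : 0 ≤ x) :
    ballVol d * rad d x ^ d = x := by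
  have hd0 : (d : ℝ) ≠ 0 := by positivity
  rw [rad, ← Real.rpow_natCast, ← rpow_mul (div_nonneg hx (ballVol_pos d).le), one_div,
    inv_mul_cancel₀ hd0, Real.rpow_one, mul_div_cancel₀ _ (ballVol_pos d).ne']

lemma calib_sq {d : ℕ} (hd : 1 ≤ d) {X x : ℝ} (hX : 0 < X) (hx0 : 0 ≤ x) (hx : x ≤ X) :
    calib d X x ^ 2 = 1 - (rad d x / rad d X) ^ 2 := by
  have hd0 : (d : ℝ) ≠ 0 := by positivity
  have h1 : (x / X) ^ ((2 : ℝ) / d) = (rad d x / rad d X) ^ 2 := by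
    rw [rad, rad, ← div_rpow (div_nonneg hx0 (ballVol_pos d).le)
      (div_nonneg hX.le (ballVol_pos d).le),
      div_div_div_cancel_right₀ (ballVol_pos d).ne', ← Real.rpow_natCast,
      ← rpow_mul (div_nonneg hx0 hX.le)]
    congr 1; push_cast; ring
  rw [calib, capFun, max_eq_left hx0, h1, Real.sq_sqrt]
  rw [← h1]
  have : (x / X) ^ ((2 : ℝ) / d) ≤ 1 :=
    rpow_le_one (div_nonneg hx0 hX.le) ((div_le_one hX).2 hx) (by positivity)
  linarith

lemma two_mul_integral_calib {d : ℕ} (hd : 1 ≤ d) {X : ℝ} (hX : 0 < X) :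
    2 * ∫ x in 0..X, calib d X x = ballVol (d + 1) * rad d X ^ d := by
  have h1 : ∫ x in 0..X, calib d X x = ∫ x in 0..X, capFun d (x / X) := by
    refine intervalIntegral.integral_congr fun x hx => ?_
    rw [Set.uIcc_of_le hX.le] at hx
    simp only [calib, max_eq_left hx.1]
  rw [h1, intervalIntegral.integral_comp_div (capFun d) hX.ne', zero_div, div_self hX.ne',
    ← ballVol_succ hd, smul_eq_mul]
  nth_rw 1 [← ballVol_mul_rad_pow hd hX.le]
  ring

/-- The arithmetic-geometric inequality behind the optimality of balls. -/
lemma eucPer_succ_le {d : ℕ} (hd : 1 ≤ d) {v R : ℝ} (hv : 0 < v) (hR : 0 < R) :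
    eucPer (d + 1) v ≤ d * v / R + ballVol (d + 1) * R ^ d := by
  have hr := rad_pos (d := d + 1) hv
  have hvr := ballVol_mul_rad_pow (d := d + 1) (by lia) hv.le
  unfold eucPer
  generalize rad (d + 1) v = r at hr hvr
  have hω := ballVol_pos (d + 1)
  generalize ballVol (d + 1) = ω at hω hvr
  have hb : 1 + (d : ℝ) * (R / r - 1) ≤ (R / r) ^ d := by
    have := one_add_mul_le_pow (a := R / r - 1) (by have := div_pos hR hr; linarith) d
    simpa using this
  have h2 : (2 : ℝ) ≤ R / r + r / R := by
    rw [div_add_div _ _ hr.ne' hR.ne', le_div_iff₀ (by positivity)]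
    nlinarith [sq_nonneg (R - r)]
  have h3 : (d : ℝ) + 1 ≤ d * (r / R) + (R / r) ^ d := by
    nlinarith [(by positivity : (0 : ℝ) ≤ d)]
  have h4 : ((d + 1 : ℕ) : ℝ) * v / r = ω * r ^ d * (d + 1) := by
    rw [← hvr]; push_cast; field_simp; ring
  have h5 : d * v / R + ω * R ^ d = ω * r ^ d * (d * (r / R) + (R / r) ^ d) := by
    rw [← hvr, div_pow]; field_simp; ring
  rw [h4, h5]
  exact mul_le_mul_of_nonneg_left h3 (by positivity)

lemma vecCons_zero_zero (d : ℕ) : (vecCons 0 (0 : Fin d → ℝ) : Fin (d + 1) → ℝ) = 0 := by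
  ext i; refine Fin.cases ?_ (fun j => ?_) i <;> simp

lemma rad_div_rad {d : ℕ} {x X : ℝ} (hx0 : 0 ≤ x) (hX : 0 < X) :
    rad d x / rad d X = (x / X) ^ ((1 : ℝ) / d) := by
  rw [rad, rad, ← div_rpow (div_nonneg hx0 (ballVol_pos d).le)
      (div_nonneg hX.le (ballVol_pos d).le),
      div_div_div_cancel_right₀ (ballVol_pos d).ne']

lemma sqrt_calib {d : ℕ} (hd : 1 ≤ d) {X x : ℝ} (hX : 0 < X) (hx0 : 0 ≤ x) (hx : x ≤ X) :
    √(1 - calib d X x ^ 2) = rad d x / rad d X := by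
  rw [calib_sq hd hX hx0 hx, sub_sub_self,
    Real.sqrt_sq (div_nonneg (rad_nonneg hx0) (rad_nonneg hX.le))]

lemma rad_div_mul_eucPer {d : ℕ} (X : ℝ) {x : ℝ} (hx0 : 0 ≤ x) :
    rad d x / rad d X * eucPer d x = d / rad d X * x := by
  rcases hx0.eq_or_lt with rfl | h
  · simp [eucPer]
  · have := (rad_pos (d := d) h).ne'
    unfold eucPer
    field_simp

lemma eucPer_nonneg (d : ℕ) {x : ℝ} (hx : 0 ≤ x) : 0 ≤ eucPer d x :=
  div_nonneg (by positivity) (rad_nonneg hx)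

lemma ballVol_one : ballVol 1 = 2 := by
  have h := volume_sum_sq_lt (d := 1) le_rfl (s := 1) zero_le_one
  have h2 : volume {y : Fin 1 → ℝ | ∑ i, y i ^ 2 < 1 ^ 2} = 2 := by
    have : {y : Fin 1 → ℝ | ∑ i, y i ^ 2 < 1 ^ 2} = Set.pi Set.univ fun _ => Set.Ioo (-1) 1 := by
      ext y
      simp [abs_lt]
    rw [this, volume_pi_pi]
    simp; norm_num
  rw [h2] at h
  simp only [one_pow, ENNReal.ofReal_one, one_mul] at h
  have := congrArg ENNReal.toReal h
  rw [ENNReal.toReal_ofReal (ballVol_pos 1).le] at this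
  simpa using this.symm

lemma eucPer_one {v : ℝ} (hv : 0 < v) : eucPer 1 v = 2 := by
  have : rad 1 v = v / 2 := by simp [rad, ballVol_one]
  rw [eucPer, this]
  field_simp
  simp

lemma isoAt_line {v : ℝ} (hv : 0 < v) : IsoAt (0 : Fin 1 → ℝ) v 2 := by
  classical
  rw [← vecCons_zero_zero 0]
  let h : ℝ → ℝ := fun x => if x = 0 ∨ x = 1 then 0 else 2 / v
  refine isoAt_vecCons (h := h) le_rfl (fun x hx => ?_) (fun m μ X c hR => ?_)
  · by_cases hx1 : x = 0 ∨ x = 1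
    · simp only [h, if_pos hx1]
      exact isoAt_of_nonpos _ _ le_rfl
    · intro E f C hE hEv
      exfalso
      rcases Set.eq_empty_or_nonempty E with rfl | ⟨y, hy⟩
      · rw [measure_empty] at hEv
        have := ENNReal.ofReal_eq_zero.1 hEv.symm
        exact hx1 (Or.inl (le_antisymm this hx))
      · have : E = Set.univ := Set.eq_univ_of_forall fun z => by rwa [Subsingleton.elim z y]
        rw [this, boxMeas_zero] at hEv
        have h1 : (volume (Set.univ : Set (Fin 0 → ℝ))) = 1 := by
          rw [← Set.pi_univ Set.univ, volume_pi_pi]; simp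
        rw [h1] at hEv
        exact hx1 (Or.inr (ENNReal.ofReal_eq_one.1 hEv.symm))
  · by_contra! hc
    have hX := hR.osc_le
    rw [hR.min_eq rfl, sub_zero] at hX
    have hint := hR.integral_eq hv.le
    have h2 := hR.integral_add_le (σ := fun _ => 0) (q := fun t => 2 / v * m t) continuous_const
      (by simp) (by simp) (hR.integrable.const_mul _)
      (by rw [integral_const_mul, hint]; positivity) ?_
    · rw [integral_const_mul, hint] at h2
      simp at h2
      rw [div_mul_cancel₀ _ hv.ne'] at h2
      linarith
    · filter_upwards [hR.range] with t ht
      have h3 := hR.nonneg t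
      simp only [ne_eq, OfNat.ofNat_ne_zero, not_false_eq_true, zero_pow, sub_zero, Real.sqrt_one,
        one_mul]
      by_cases h0 : m t = 0
      · simp [h0, h]
      · have h4 : ¬ (m t = 0 ∨ m t = 1) := by
          rintro (h5 | h5)
          · exact h0 h5
          · linarith
        simp only [h, if_neg h4]
        have : 0 ≤ 2 / v := by positivity
        nlinarith

/-- The isoperimetric inequality in Euclidean space. -/
lemma isoAt_euclidean {d : ℕ} (hd : 1 ≤ d) {v : ℝ} (hv : 0 ≤ v) :
    IsoAt (0 : Fin d → ℝ) v (eucPer d v) := by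
  rcases hv.eq_or_lt with rfl | hv
  · exact isoAt_of_nonpos _ _ (by simp [eucPer])
  induction d, hd using Nat.le_induction generalizing v with
  | base => rw [eucPer_one hv]; exact isoAt_line hv
  | succ d hd ih =>
    rw [← vecCons_zero_zero d]
    refine isoAt_vecCons (h := eucPer d) le_rfl (fun x hx => ?_) (fun m μ X c hR => ?_)
    · rcases hx.eq_or_lt with rfl | hx
      · exact isoAt_of_nonpos _ _ (by simp [eucPer])
      · exact ih hx.le hx
    · have hμ := hR.min_eq rfl
      subst hμ
      have hint := hR.integral_eq hv.le
      have hX : 0 < X := by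
        rcases hR.min_le.eq_or_lt with h | h
        · exfalso
          have : ∫ t, m t ∂coordMeas 0 = 0 := by
            refine integral_eq_zero_of_ae ?_
            filter_upwards [hR.range] with t ht
            exact le_antisymm (ht.2.trans h.ge) (hR.nonneg t)
          linarith
        · exact h
      have h2 := hR.integral_add_le (σ := calib d X) (q := fun t => d / rad d X * m t)
        (continuous_calib X) (calib_nonneg d X) (calib_le_one d hX.le) (hR.integrable.const_mul _)
        (by rw [integral_const_mul, hint]
            exact mul_nonneg (div_nonneg (by positivity) (rad_nonneg hX.le)) hv.le) ?_
      · rw [integral_const_mul, hint, two_mul_integral_calib hd hX] at h2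
        refine (eucPer_succ_le hd hv (rad_pos (d := d) hX)).trans (le_trans (le_of_eq ?_) h2)
        ring
      · filter_upwards [hR.range] with t ht
        rw [sqrt_calib hd hX ht.1 ht.2, rad_div_mul_eucPer X ht.1]

lemma rad_eq (d : ℕ) {x : ℝ} (hx : 0 ≤ x) :
    rad d x = x ^ ((1 : ℝ) / d) / ballVol d ^ ((1 : ℝ) / d) :=
  div_rpow hx (ballVol_pos d).le _

lemma eucPer_eq (d : ℕ) {x : ℝ} (hx : 0 < x) :
    eucPer d x = d * ballVol d ^ ((1 : ℝ) / d) * x ^ (1 - (1 : ℝ) / d) := by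
  have h1 : 0 < x ^ ((1 : ℝ) / d) := rpow_pos_of_pos hx _
  have h2 : 0 < ballVol d ^ ((1 : ℝ) / d) := rpow_pos_of_pos (ballVol_pos d) _
  rw [eucPer, rad_eq d hx.le, rpow_sub hx, Real.rpow_one]
  field_simp

lemma eucPer_eq_mul_rad_pow {d : ℕ} {x : ℝ} (hx : 0 < x) :
    eucPer (d + 1) x = (d + 1) * ballVol (d + 1) * rad (d + 1) x ^ d := by
  have hr := rad_pos (d := d + 1) hx
  have h := ballVol_mul_rad_pow (d := d + 1) (by lia) hx.le
  unfold eucPer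
  rw [div_eq_iff hr.ne']
  nth_rw 1 [← h]
  push_cast; ring

/-- The damping factor of the calibration near the minimal slice volume. -/
def damp (s μ x : ℝ) : ℝ := (μ / max x μ) ^ (1 - s)

lemma damp_nonneg {s μ : ℝ} (hμ : 0 < μ) (x : ℝ) : 0 ≤ damp s μ x :=
  rpow_nonneg (div_nonneg hμ.le (hμ.le.trans (le_max_right _ _))) _

lemma damp_le_one {s μ : ℝ} (hs : s ≤ 1) (hμ : 0 < μ) (x : ℝ) : damp s μ x ≤ 1 :=
  rpow_le_one (div_nonneg hμ.le (hμ.le.trans (le_max_right _ _)))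
    ((div_le_one (hμ.trans_le (le_max_right _ _))).2 (le_max_right _ _)) (by linarith)

lemma continuous_damp {s μ : ℝ} (hs : s ≤ 1) (hμ : 0 < μ) : Continuous (damp s μ) := by
  have h : ∀ x : ℝ, max x μ ≠ 0 := fun x => (hμ.trans_le (le_max_right _ _)).ne'
  exact (continuous_const.div (by fun_prop) h).rpow_const fun _ => Or.inr (by linarith)

lemma damp_mul_rpow {s μ x : ℝ} (hμ : 0 < μ) (hx : μ ≤ x) :
    damp s μ x * x ^ (1 - s) = μ ^ (1 - s) := by
  have hx0 := hμ.trans_le hx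
  rw [damp, max_eq_left hx, div_rpow hμ.le hx0.le, div_mul_cancel₀ _ (rpow_pos_of_pos hx0 _).ne']

lemma integral_damp {s μ X : ℝ} (hs : 0 < s) (hμ : 0 < μ) (hX : μ ≤ X) :
    ∫ x in μ..X, damp s μ x = μ ^ (1 - s) * ((X ^ s - μ ^ s) / s) := by
  have h1 : ∫ x in μ..X, damp s μ x = ∫ x in μ..X, μ ^ (1 - s) * x ^ (s - 1) := by
    refine intervalIntegral.integral_congr fun x hx => ?_
    rw [Set.uIcc_of_le hX] at hx
    have hx0 := hμ.trans_le hx.1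
    have h := damp_mul_rpow (s := s) hμ hx.1
    have h2 : x ^ (1 - s) * x ^ (s - 1) = 1 := by
      rw [← rpow_add hx0]; simp
    rw [← h, mul_assoc, h2, mul_one]
  rw [h1, intervalIntegral.integral_const_mul, integral_rpow (Or.inl (by linarith))]
  simp

lemma add_mul_le_sqrt {α w : ℝ} (hα0 : 0 ≤ α) (hα : α ≤ 1 / 2) (hw0 : 0 ≤ w) (hw1 : w ≤ 1) :
    α + 3 / 8 * w ≤ √(1 - (1 - α ^ 2) * (1 - w) ^ 2) := by
  refine Real.le_sqrt_of_sq_le ?_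
  have a1 : α * w ≤ 1 / 2 * w := mul_le_mul_of_nonneg_right hα hw0
  have a2 : w ^ 2 ≤ w := by nlinarith
  have a3 : 3 / 4 ≤ 1 - α ^ 2 := by nlinarith
  have a4 : 3 / 4 * w ≤ (1 - α ^ 2) * (2 * w - w ^ 2) :=
    (mul_le_mul_of_nonneg_right a3 hw0).trans
      (mul_le_mul_of_nonneg_left (by linarith) (by linarith))
  nlinarith

/-- A circle factor does not improve on balls as long as the slices are small. -/
lemma Reduced.eucPer_le {d : ℕ} (hd : 2 ≤ d) {ℓ a v c μ X : ℝ} {m : ℝ → ℝ} (hℓ : 0 < ℓ)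
    (hv : 0 < v) (hR : Reduced ℓ (fun x => if x ≤ a then eucPer d x else 0) m μ X v c)
    (hXa : X ≤ a) (hX : 0 < X) (hRX : rad d X ≤ 3 * ℓ / 32) (hvX : 2 ^ d * v / X ≤ ℓ / 2) :
    eucPer (d + 1) v ≤ c := by
  have hd1 : 1 ≤ d := by lia
  have hd0 : (2 : ℝ) ≤ d := by exact_mod_cast hd
  have hR0 := rad_pos (d := d) hX
  have hint := hR.integral_eq hv.le
  have hmain := (eucPer_succ_le hd1 hv (rad_pos (d := d) hX))
  rw [← two_mul_integral_calib hd1 hX] at hmain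
  rcases hR.min_nonneg.eq_or_lt with hμ | hμ
  · subst hμ
    have h2 := hR.integral_add_le (σ := calib d X) (q := fun t => d / rad d X * m t)
        (continuous_calib X) (calib_nonneg d X) (calib_le_one d hX.le) (hR.integrable.const_mul _)
        (by rw [integral_const_mul, hint]; positivity) ?_
    · rw [integral_const_mul, hint] at h2
      refine hmain.trans (le_trans (le_of_eq ?_) h2)
      ring
    · filter_upwards [hR.range] with t ht
      rw [if_pos (ht.2.trans hXa), sqrt_calib hd1 hX ht.1 ht.2, rad_div_mul_eucPer X ht.1]
  set s : ℝ := 1 / d with hs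
  have hs0 : 0 < s := by positivity
  have hs1 : s ≤ 1 / 2 := by rw [hs]; exact one_div_le_one_div_of_le (by norm_num) hd0
  set e : ℝ := d * ballVol d ^ s with he
  have hω : 0 < ballVol d ^ s := rpow_pos_of_pos (ballVol_pos d) _
  have he0 : 0 < e := by positivity
  set M : ℝ := μ ^ (1 - s) with hM
  have hM0 : 0 < M := rpow_pos_of_pos hμ _
  set σ : ℝ → ℝ := fun x => calib d X x * (1 - damp s μ x) with hσ
  have hw0 := damp_nonneg (s := s) hμ
  have hw1 := damp_le_one (s := s) (by linarith) hμ
  have hwc := continuous_damp (s := s) (by linarith) hμ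
  have hσc : Continuous σ := (continuous_calib X).mul (continuous_const.sub hwc)
  have := isFiniteMeasure_coordMeas hℓ
  have hq2 : Integrable (fun t => 1 - 2 ^ d / X * m t) (coordMeas ℓ) :=
    (integrable_const _).sub (hR.integrable.const_mul _)
  have hqi : Integrable (fun t => d / rad d X * m t + 3 / 8 * e * M * (1 - 2 ^ d / X * m t))
      (coordMeas ℓ) := (hR.integrable.const_mul _).add (hq2.const_mul _)
  have hqint : ∫ t, (d / rad d X * m t + 3 / 8 * e * M * (1 - 2 ^ d / X * m t)) ∂coordMeas ℓ =
      d / rad d X * v + 3 / 8 * e * M * (ℓ - 2 ^ d * v / X) := by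
    rw [integral_add (hR.integrable.const_mul _) (hq2.const_mul _), integral_const_mul,
      integral_const_mul, integral_sub (integrable_const _) (hR.integrable.const_mul _),
      integral_const_mul, hint, integral_const, coordMeas_real_univ hℓ]
    simp only [smul_eq_mul]
    ring
  have hA : 3 / 8 * e * M * (ℓ / 2) ≤ 3 / 8 * e * M * (ℓ - 2 ^ d * v / X) :=
    mul_le_mul_of_nonneg_left (by linarith) (by positivity)
  have hA0 : 0 ≤ 3 / 8 * e * M * (ℓ / 2) := by positivity
  have h2 := hR.integral_add_le (σ := σ)
    (q := fun t => d / rad d X * m t + 3 / 8 * e * M * (1 - 2 ^ d / X * m t)) hσc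
    (fun x => mul_nonneg (calib_nonneg d X x) (by linarith [hw1 x]))
    (fun x => mul_le_one₀ (calib_le_one d hX.le x) (by linarith [hw1 x]) (by linarith [hw0 x]))
    hqi (by rw [hqint]; have : 0 ≤ d / rad d X * v := by positivity
            linarith) ?_
  · rw [hqint] at h2
    have hi1 : ∫ x in (0:ℝ)..μ, calib d X x ≤ μ := by
      have := intervalIntegral.integral_mono_on (μ := volume) (a := 0) (b := μ) hμ.le
        ((continuous_calib (d := d) X).intervalIntegrable _ _)
        (intervalIntegrable_const (c := (1 : ℝ))) fun x _ => calib_le_one d hX.le x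
      simpa using this
    have hi2 : ∫ x in μ..X, (calib d X x - damp s μ x) ≤ ∫ x in μ..X, σ x := by
      refine intervalIntegral.integral_mono_on hR.min_le
        (((continuous_calib X).sub hwc).intervalIntegrable _ _) (hσc.intervalIntegrable _ _)
        fun x _ => ?_
      simp only [hσ]
      nlinarith [hw0 x, calib_le_one d hX.le x]
    rw [intervalIntegral.integral_sub ((continuous_calib X).intervalIntegrable _ _)
      (hwc.intervalIntegrable _ _), integral_damp hs0 hμ hR.min_le] at hi2
    have hi3 := intervalIntegral.integral_add_adjacent_intervals
      ((continuous_calib (d := d) X).intervalIntegrable (μ := volume) 0 μ)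
      ((continuous_calib (d := d) X).intervalIntegrable μ X)
    have hμM : M * μ ^ s = μ := by
      rw [hM, ← rpow_add hμ]; simp
    have hXs : X ^ s = ballVol d ^ s * rad d X := by
      rw [rad_eq d hX.le, mul_div_cancel₀ _ hω.ne']
    have hsd : (X ^ s - μ ^ s) / s = d * (X ^ s - μ ^ s) := by
      rw [hs]; field_simp
    rw [← hM, hsd] at hi2
    have hi4 : M * (d * (X ^ s - μ ^ s)) = e * M * rad d X - d * μ := by
      rw [hXs, mul_sub, mul_sub]
      have : M * (d * μ ^ s) = d * μ := by nth_rw 2 [← hμM]; ring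
      rw [this, he]; ring
    rw [hi4] at hi2
    have hi5 : 3 / 8 * e * M * (ℓ / 2) - 2 * (e * M * rad d X) ≥ 0 := by
      have : e * M * rad d X ≤ e * M * (3 * ℓ / 32) :=
        mul_le_mul_of_nonneg_left hRX (by positivity)
      nlinarith
    have hi6 : μ ≤ d * μ := by nlinarith
    have hi7 : d * v / rad d X = d / rad d X * v := by ring
    rw [hi7] at hmain
    linarith
  · filter_upwards [hR.range] with t ht
    generalize m t = x at ht
    have hx0 := hμ.trans_le ht.1
    rw [if_pos (ht.2.trans hXa)]
    have hP := eucPer_nonneg d hx0.le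
    set α : ℝ := rad d x / rad d X with hα
    have hα0 : 0 ≤ α := div_nonneg (rad_nonneg hx0.le) hR0.le
    have hsq := calib_sq hd1 hX hx0.le ht.2
    rw [← hα] at hsq
    have hw0 := hw0 x
    have hw1 := hw1 x
    have hσsq : 1 - σ x ^ 2 = 1 - (1 - α ^ 2) * (1 - damp s μ x) ^ 2 := by
      simp only [hσ, mul_pow, hsq]
    have hα1 : 0 ≤ 1 - α ^ 2 := by rw [← hsq]; positivity
    rw [← rad_div_mul_eucPer X hx0.le, ← hα, hσsq]
    have hMw : e * M = damp s μ x * eucPer d x := by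
      rw [eucPer_eq d hx0, ← hs, hM, ← damp_mul_rpow hμ ht.1, he]; ring
    have hMw2 : 3 / 8 * e * M = 3 / 8 * damp s μ x * eucPer d x := by
      rw [mul_assoc, hMw]; ring
    by_cases hxX : x ≤ X / 2 ^ d
    · have hα2 : α ≤ 1 / 2 := by
        rw [hα, rad_div_rad hx0.le hX]
        have h3 : x / X ≤ (1 / 2) ^ (d : ℝ) := by
          rw [Real.rpow_natCast, div_le_iff₀ hX, one_div, inv_pow, ← div_eq_inv_mul]
          exact hxX
        refine (rpow_le_rpow (div_nonneg hx0.le hX.le) h3 (by positivity)).trans (le_of_eq ?_)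
        rw [← Real.rpow_mul (by norm_num), mul_one_div_cancel (by positivity), Real.rpow_one]
      have h4 : α + 3 / 8 * damp s μ x ≤ √(1 - (1 - α ^ 2) * (1 - damp s μ x) ^ 2) :=
        add_mul_le_sqrt hα0 hα2 hw0 hw1
      have h5 := mul_le_mul_of_nonneg_right h4 hP
      rw [hMw2]
      have h6 : 3 / 8 * damp s μ x * eucPer d x * (1 - 2 ^ d / X * x) ≤
          3 / 8 * damp s μ x * eucPer d x :=
        mul_le_of_le_one_right (by positivity) (by
          have : 0 ≤ 2 ^ d / X * x := by positivity
          linarith)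
      linarith
    · have h3 : 1 - 2 ^ d / X * x ≤ 0 := by
        rw [not_le, div_lt_iff₀ (by positivity)] at hxX
        have : 1 ≤ 2 ^ d / X * x := by
          rw [div_mul_eq_mul_div, le_div_iff₀ hX]; linarith
        linarith
      have h4 : α ≤ √(1 - (1 - α ^ 2) * (1 - damp s μ x) ^ 2) := by
        refine Real.le_sqrt_of_sq_le ?_
        have h5 : (1 - damp s μ x) ^ 2 ≤ 1 := pow_le_one₀ (by linarith) (by linarith)
        have h6 := mul_le_mul_of_nonneg_left h5 hα1
        linarith
      have h5 := mul_le_mul_of_nonneg_right h4 hP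
      have h6 : 3 / 8 * e * M * (1 - 2 ^ d / X * x) ≤ 0 :=
        mul_nonpos_of_nonneg_of_nonpos (by positivity) h3
      linarith

lemma isoAt_small_step {d : ℕ} (hd : 2 ≤ d) {ℓ : ℝ} (hℓ : 0 < ℓ) {L : Fin d → ℝ} {a : ℝ}
    (ha : 0 < a) (h : ∀ v, 0 ≤ v → v ≤ a → IsoAt L v (eucPer d v)) :
    ∃ a', 0 < a' ∧ ∀ v, 0 ≤ v → v ≤ a' → IsoAt (vecCons ℓ L) v (eucPer (d + 1) v) := by
  have hω := ballVol_pos d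
  have hω' := ballVol_pos (d + 1)
  set x₀ : ℝ := min a (ballVol d * (3 * ℓ / 32) ^ d) with hx₀
  have hx₀0 : 0 < x₀ := lt_min ha (by positivity)
  have hrad : Filter.Tendsto (fun v => rad (d + 1) v) (nhds 0) (nhds 0) := by
    have : ContinuousAt (fun v : ℝ => rad (d + 1) v) 0 :=
      (continuousAt_id.div_const _).rpow_const (Or.inr (by positivity))
    have h0 : rad (d + 1) 0 = 0 := by
      rw [rad, zero_div, Real.zero_rpow (by positivity)]
    simpa [ContinuousAt, h0] using this
  have e1 : ∀ᶠ v in nhds (0 : ℝ),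
      v / ℓ + (d + 1) * ballVol (d + 1) * rad (d + 1) v ^ d / 2 < x₀ := by
    have : Filter.Tendsto (fun v : ℝ => v / ℓ + (d + 1) * ballVol (d + 1) * rad (d + 1) v ^ d / 2)
        (nhds 0) (nhds (0 / ℓ + (d + 1) * ballVol (d + 1) * 0 ^ d / 2)) :=
      (Filter.tendsto_id.div_const _).add (((hrad.pow d).const_mul _).div_const _)
    rw [zero_pow (by lia)] at this
    exact this.eventually_lt_const (by simpa using hx₀0)
  have e2 : ∀ᶠ v in nhds (0 : ℝ),
      4 ^ d * ballVol (d + 1) / ballVol d * rad (d + 1) v < ℓ / 2 := by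
    have := hrad.const_mul (4 ^ d * ballVol (d + 1) / ballVol d)
    rw [mul_zero] at this
    exact this.eventually_lt_const (by positivity)
  obtain ⟨ε, hε, hε2⟩ := Metric.eventually_nhds_iff.1 (e1.and e2)
  refine ⟨ε / 2, by positivity, fun v hv0 hv => ?_⟩
  rcases hv0.eq_or_lt with rfl | hv0
  · exact isoAt_of_nonpos _ _ (by simp [eucPer])
  obtain ⟨h1, h2⟩ := hε2 (y := v) (by rw [Real.dist_eq, sub_zero, abs_of_pos hv0]; linarith)
  refine isoAt_vecCons (h := fun x => if x ≤ a then eucPer d x else 0) hℓ.le (fun x hx => ?_)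
    (fun m μ X c hR => ?_)
  · split_ifs with hxa
    · exact h x hx hxa
    · exact isoAt_of_nonpos _ _ le_rfl
  by_contra! hc
  have hr := rad_pos (d := d + 1) hv0
  have hvr := ballVol_mul_rad_pow (d := d + 1) (by lia) hv0.le
  have hP := eucPer_eq_mul_rad_pow (d := d) hv0
  have hX : 0 < X := by
    have := hR.volume_le hℓ
    by_contra! h0
    nlinarith
  have hμ := hR.le_volume hℓ hv0.le
  have hXx : X ≤ x₀ := by
    have := hR.osc_le
    have h3 : μ ≤ v / ℓ := by rw [le_div_iff₀ hℓ]; linarith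
    rw [hP] at hc
    linarith
  have hXa : X ≤ a := hXx.trans (min_le_left _ _)
  have hXR := ballVol_mul_rad_pow (d := d) (by lia) hX.le
  have hR0 := rad_pos (d := d) hX
  have hRX : rad d X ≤ 3 * ℓ / 32 := by
    have h3 : X ≤ ballVol d * (3 * ℓ / 32) ^ d := hXx.trans (min_le_right _ _)
    rw [← hXR] at h3
    exact (pow_le_pow_iff_left₀ hR0.le (by positivity) (by lia)).1 (le_of_mul_le_mul_left h3 hω)
  have hlow : rad (d + 1) v / 2 ≤ rad d X := by
    have hint := hR.integral_eq hv0.le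
    have h3 := hR.integral_add_le (σ := fun _ => 0) (q := fun t => d / rad d X * m t)
      continuous_const (by simp) (by simp) (hR.integrable.const_mul _)
      (by rw [integral_const_mul, hint]; positivity) ?_
    · rw [integral_const_mul, hint] at h3
      simp only [intervalIntegral.integral_const, smul_zero, mul_zero, add_zero] at h3
      have h4 := h3.trans hc.le
      rw [eucPer, div_mul_eq_mul_div, div_le_div_iff₀ hR0 hr] at h4
      have hd0 : (2 : ℝ) ≤ d := by exact_mod_cast hd
      push_cast at h4
      have h5 : v * (d * rad (d + 1) v) ≤ v * ((d + 1) * rad d X) := by linarith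
      have h6 := le_of_mul_le_mul_left h5 hv0
      nlinarith
    · filter_upwards [hR.range] with t ht
      have ht0 := hR.nonneg t
      rw [if_pos (ht.2.trans hXa), ← rad_div_mul_eucPer X ht0]
      simp only [ne_eq, OfNat.ofNat_ne_zero, not_false_eq_true, zero_pow, sub_zero, Real.sqrt_one,
        one_mul]
      refine mul_le_of_le_one_left (eucPer_nonneg d ht0) ?_
      rw [rad_div_rad ht0 hX]
      exact rpow_le_one (div_nonneg ht0 hX.le) ((div_le_one hX).2 ht.2) (by positivity)
  refine absurd (hR.eucPer_le hd hℓ hv0 hXa hX hRX ?_) hc.not_ge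
  rw [div_le_iff₀ hX]
  have h3 : ballVol d * (rad (d + 1) v / 2) ^ d ≤ X := by
    rw [← hXR]
    exact mul_le_mul_of_nonneg_left (pow_le_pow_left₀ (by positivity) hlow d) hω.le
  have h7 := mul_le_mul_of_nonneg_left h3 (by positivity : 0 ≤ ℓ / 2)
  rw [div_pow] at h7
  rw [div_mul_eq_mul_div, div_lt_iff₀ hω] at h2
  have h4 := mul_le_mul_of_nonneg_right h2.le (by positivity : 0 ≤ rad (d + 1) v ^ d / 2 ^ d)
  have h5 : (4 : ℝ) ^ d = 2 ^ d * 2 ^ d := by rw [← mul_pow]; norm_num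
  rw [h5] at h4
  have h6 : 2 ^ d * (ballVol (d + 1) * rad (d + 1) v ^ (d + 1)) =
      2 ^ d * 2 ^ d * ballVol (d + 1) * rad (d + 1) v * (rad (d + 1) v ^ d / 2 ^ d) := by
    field_simp; ring
  rw [hvr] at h6
  linarith

lemma isoAt_small_one {n : ℕ} (hn : 2 ≤ n) {ℓ : ℝ} (hℓ : 0 < ℓ) :
    ∃ a, 0 < a ∧ ∀ v, 0 ≤ v → v ≤ a →
      IsoAt (vecCons ℓ (0 : Fin n → ℝ)) v (eucPer (n + 1) v) :=
  isoAt_small_step hn hℓ one_pos fun _ hv _ => isoAt_euclidean (by lia) hv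

lemma isoAt_small_three {n : ℕ} (hn : 2 ≤ n) {ℓ₁ ℓ₂ ℓ₃ : ℝ} (h₁ : 0 < ℓ₁) (h₂ : 0 < ℓ₂)
    (h₃ : 0 < ℓ₃) : ∃ a, 0 < a ∧ ∀ v, 0 ≤ v → v ≤ a →
      IsoAt (vecCons ℓ₁ (vecCons ℓ₂ (vecCons ℓ₃ (0 : Fin n → ℝ)))) v (eucPer (n + 3) v) := by
  obtain ⟨a, ha, h⟩ := isoAt_small_one hn h₃
  obtain ⟨a', ha', h'⟩ := isoAt_small_step (by lia) h₂ ha h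
  exact isoAt_small_step (by lia) h₁ ha' h'

lemma isoAt_large_three {n : ℕ} (hn : 2 ≤ n) {ℓ₁ ℓ₂ ℓ₃ : ℝ} (h₁ : 0 < ℓ₁) (h₂ : 0 < ℓ₂)
    (h₃ : 0 < ℓ₃) : ∃ R₀, ∀ R, R₀ ≤ R →
      IsoAt (vecCons ℓ₁ (vecCons ℓ₂ (vecCons ℓ₃ (0 : Fin n → ℝ))))
        (ℓ₁ * ℓ₂ * ℓ₃ * (ballVol n * R ^ n)) (ℓ₁ * ℓ₂ * ℓ₃ * (n * ballVol n * R ^ (n - 1))) := by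
  have hω := ballVol_pos n
  have hn0 : (2 : ℝ) ≤ n := by exact_mod_cast hn
  have hs0 : 0 < (1 : ℝ) / n := by positivity
  have hs1 : (1 : ℝ) / n ≤ 1 / 2 := one_div_le_one_div_of_le (by norm_num) hn0
  obtain ⟨V₃, H₃⟩ := isoAt_large_step (L := (0 : Fin n → ℝ)) (p := 1 - 1 / (n : ℝ)) (V₀ := 1) h₃
    (K := n * ballVol n ^ ((1 : ℝ) / n)) (by positivity) (by linarith) (by linarith)
    fun v hv => by
      rw [← eucPer_eq n (by linarith)]
      exact isoAt_euclidean (by lia) (by linarith)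
  obtain ⟨V₂, H₂⟩ := isoAt_large_step h₂ (by positivity) (by linarith) (by linarith) H₃
  obtain ⟨V₁, H₁⟩ := isoAt_large_step h₁ (by positivity) (by linarith) (by linarith) H₂
  have hc : 0 < ℓ₁ * ℓ₂ * ℓ₃ * ballVol n := by positivity
  have hlim : Filter.Tendsto (fun R : ℝ => ℓ₁ * ℓ₂ * ℓ₃ * ballVol n * R ^ n) Filter.atTop
      Filter.atTop := (Filter.tendsto_pow_atTop (by lia)).const_mul_atTop hc
  obtain ⟨R₀, hR₀⟩ := Filter.eventually_atTop.1
    ((hlim.eventually_ge_atTop V₁).and (Filter.eventually_gt_atTop 0))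
  refine ⟨R₀, fun R hR => ?_⟩
  obtain ⟨hV, hR0⟩ := hR₀ R hR
  rw [mul_assoc] at hV
  convert H₁ _ hV using 1
  rw [sub_sub_self]
  generalize hs : (1 : ℝ) / n = s
  have hsn : s * n = 1 := by rw [← hs]; field_simp
  have e1 : (ℓ₁ * ℓ₂ * ℓ₃ * (ballVol n * R ^ n)) ^ (1 - s) =
      ℓ₁ * ℓ₂ * ℓ₃ * (ballVol n * R ^ n) / (ℓ₁ ^ s * ℓ₂ ^ s * ℓ₃ ^ s * ballVol n ^ s * R) := by
    rw [rpow_sub (by positivity), Real.rpow_one, mul_rpow (by positivity) (by positivity),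
      mul_rpow (by positivity) (by positivity), mul_rpow (by positivity) (by positivity),
      mul_rpow (by positivity) (by positivity)]
    congr 1
    rw [← Real.rpow_natCast R n, ← Real.rpow_mul hR0.le, mul_comm (n : ℝ), hsn, Real.rpow_one]
    ring
  rw [e1]
  have p1 : 0 < ℓ₁ ^ s := rpow_pos_of_pos h₁ _
  have p2 : 0 < ℓ₂ ^ s := rpow_pos_of_pos h₂ _
  have p3 : 0 < ℓ₃ ^ s := rpow_pos_of_pos h₃ _
  have p4 : 0 < ballVol n ^ s := rpow_pos_of_pos hω _
  obtain ⟨k, rfl⟩ : ∃ k, n = k + 1 := ⟨n - 1, by lia⟩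
  simp only [add_tsub_cancel_right]
  field_simp
  ring

section hausdorff
variable {X Y : Type*} [EMetricSpace X] [MeasurableSpace X] [BorelSpace X]
  [EMetricSpace Y] [MeasurableSpace Y] [BorelSpace Y]

lemma LipschitzOnWith.euclideanHausdorffMeasure_image_le {K : ℝ≥0} {f : X → Y} {s : Set X}
    (h : LipschitzOnWith K f s) (d : ℕ) : μHE[d] (f '' s) ≤ (K : ℝ≥0∞) ^ d * μHE[d] s := by
  have := h.hausdorffMeasure_image_le (d := d) (Nat.cast_nonneg d)
  simp only [Measure.euclideanHausdorffMeasure_def, Measure.smul_apply, ENNReal.smul_def,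
    smul_eq_mul]
  rw [ENNReal.rpow_natCast] at this
  calc _ ≤ _ * ((K : ℝ≥0∞) ^ d * μH[d] s) := by gcongr
    _ = _ := by ring

lemma euclideanHausdorffMeasure_image_of_isometryOn {f : X → Y} {s : Set X} (d : ℕ)
    (h : ∀ x ∈ s, ∀ y ∈ s, edist (f x) (f y) = edist x y) : μHE[d] (f '' s) = μHE[d] s := by
  have h1 : Isometry (s.domRestrict f) := fun x y => h x x.2 y y.2
  have h2 := h1.euclideanHausdorffMeasure_image (d := d) Set.univ
  have h3 := (isometry_subtype_coe (s := s)).euclideanHausdorffMeasure_image (d := d) Set.univ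
  simp only [Set.image_univ, Set.range_domRestrict, Subtype.range_coe] at h2 h3
  rw [h2, h3]

end hausdorff

section tube
variable {V : Type*} [NormedAddCommGroup V] [InnerProductSpace ℝ V] [MeasurableSpace V]
  [BorelSpace V] [FiniteDimensional ℝ V]

open Module

lemma volume_slab {ν : V} (hν : ‖ν‖ = 1) (a b : ℝ) (P : Set (ℝ ∙ ν)ᗮ) :
    volume {y : V | inner ℝ ν y ∈ Set.Icc a b ∧ (ℝ ∙ ν)ᗮ.orthogonalProjectionOnto y ∈ P} =
      ENNReal.ofReal (b - a) * volume P := by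
  let e := LinearIsometryEquiv.toSpanUnitSingleton (𝕜 := ℝ) ν hν
  have he : volume (e.symm ⁻¹' (Set.Icc a b)) = ENNReal.ofReal (b - a) := by
    rw [e.symm.measurePreserving.measure_preimage measurableSet_Icc.nullMeasurableSet,
      Real.volume_Icc]
  have hm := (ℝ ∙ ν).measurePreserving_measurableEquivProd (0 : V)
  rw [InnerProductSpace.euclideanHausdorffMeasure_eq_volume] at hm
  have := hm.measure_preimage_equiv ((e.symm ⁻¹' (Set.Icc a b)) ×ˢ P)
  rw [Measure.volume_eq_prod, Measure.prod_prod, he] at this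
  rw [← this]
  congr 1
  ext y
  have hy : e.symm ((ℝ ∙ ν).orthogonalProjectionOnto y) = inner ℝ ν y := by
    apply e.injective
    rw [e.apply_symm_apply]
    ext
    have := Submodule.starProjection_unit_singleton ℝ hν y
    exact this
  simp only [Set.mem_ofPred_eq, Set.mem_preimage, Set.mem_prod,
    Submodule.measurableEquivProd_apply, vsub_eq_sub, sub_zero]
  rw [hy]

lemma volume_tube_le {d : ℕ} (hd : finrank ℝ V = d + 1) {ν : V} (hν : ‖ν‖ = 1) {A : Set V}
    {τ η : ℝ} (hA : ∀ x ∈ A, ∀ y ∈ A, dist x y ≤ η) :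
    volume {y : V | ∃ s ∈ Set.Icc 0 τ, y + s • ν ∈ A} ≤
      ENNReal.ofReal (τ + η) * μHE[d] A := by
  rcases A.eq_empty_or_nonempty with rfl | ⟨p, hp⟩
  · simp
  have : Fact (finrank ℝ V = d + 1) := ⟨hd⟩
  have hfr : finrank ℝ (ℝ ∙ ν)ᗮ = d :=
    Submodule.finrank_orthogonal_span_singleton (n := d) (norm_ne_zero_iff.1 (by simp [hν]))
  obtain ⟨c, hc⟩ : ∃ c : ℝ, ∀ x ∈ A, inner ℝ ν x ∈ Set.Icc c (c + η) := by
    have hb : BddBelow ((fun x => inner ℝ ν x) '' A) := by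
      refine ⟨inner ℝ ν p - η, ?_⟩
      rintro _ ⟨x, hx, rfl⟩
      have h1 := real_inner_le_norm ν (p - x)
      rw [hν, one_mul, inner_sub_right, ← dist_eq_norm] at h1
      have := hA p hp x hx
      simp only; linarith
    refine ⟨sInf ((fun x => inner ℝ ν x) '' A), fun x hx => ⟨csInf_le hb ⟨x, hx, rfl⟩, ?_⟩⟩
    rw [← sub_le_iff_le_add]
    refine le_csInf ⟨_, p, hp, rfl⟩ ?_
    rintro _ ⟨y, hy, rfl⟩
    have h1 := real_inner_le_norm ν (x - y)
    rw [hν, one_mul, inner_sub_right, ← dist_eq_norm] at h1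
    have := hA x hx y hy
    simp only; linarith
  set pr := (ℝ ∙ ν)ᗮ.orthogonalProjectionOnto
  calc volume {y : V | ∃ s ∈ Set.Icc 0 τ, y + s • ν ∈ A}
      ≤ volume {y : V | inner ℝ ν y ∈ Set.Icc (c - τ) (c + η) ∧ pr y ∈ pr '' A} := by
        apply measure_mono
        rintro y ⟨s, ⟨hs0, hs1⟩, hy⟩
        have h1 := hc _ hy
        have h2 : inner ℝ ν (s • ν) = s := by
          rw [inner_smul_right, real_inner_self_eq_norm_sq, hν]; simp
        rw [inner_add_right, h2] at h1
        refine ⟨⟨by linarith [h1.1], by linarith [h1.2]⟩, _, hy, ?_⟩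
        have : pr (s • ν) = 0 := by
          rw [map_smul, Submodule.orthogonalProjectionOnto_orthogonalComplement_singleton_eq_zero,
            smul_zero]
        rw [map_add, this, add_zero]
    _ = ENNReal.ofReal (τ + η) * volume (pr '' A) := by
        rw [volume_slab hν]; congr 2; ring
    _ ≤ _ := by
        gcongr
        rw [← InnerProductSpace.euclideanHausdorffMeasure_eq_volume, hfr]
        have := ((ℝ ∙ ν)ᗮ.lipschitzWith_orthogonalProjectionOnto.lipschitzOnWith
          (s := A)).euclideanHausdorffMeasure_image_le d
        simpa using this

end tube

open Module in
lemma lintegral_tube_le {V : Type*} [NormedAddCommGroup V] [InnerProductSpace ℝ V]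
    [MeasurableSpace V] [BorelSpace V] [FiniteDimensional ℝ V] {d : ℕ} (hd : finrank ℝ V = d + 1)
    {K : Set V} (hK : MeasurableSet K) (hfin : ∀ ρ, μHE[d] (K ∩ Metric.closedBall 0 ρ) ≠ ∞)
    {φ : V → ℝ} (hφ : Continuous φ) (hc : HasCompactSupport φ) {ε : ℝ≥0∞} (hε : ε ≠ 0) :
    ∃ τ₀ > 0, ∀ ν : V, ‖ν‖ = 1 → ∀ τ, 0 < τ → τ ≤ τ₀ →
      ∫⁻ y, {y | ∃ s ∈ Set.Icc 0 τ, y + s • ν ∈ K}.indicator (fun y => ENNReal.ofReal (φ y)) y ≤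
        ENNReal.ofReal τ * (∫⁻ x in K, ENNReal.ofReal (φ x) ∂μHE[d] + ε) := by
  obtain ⟨ρ, hρ⟩ := hc.isCompact.isBounded.subset_closedBall (0 : V)
  obtain ⟨M, hM⟩ := hc.exists_bound_of_continuous hφ
  set K' := K ∩ Metric.closedBall 0 (ρ + 1)
  have hK'm : MeasurableSet K' := hK.inter Metric.isClosed_closedBall.measurableSet
  set H := μHE[d] K' with hH
  have hHfin : H ≠ ∞ := hfin _
  set I' := ∫⁻ x in K', ENNReal.ofReal (φ x) ∂μHE[d] with hI'
  have hI'fin : I' ≠ ∞ := by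
    refine ne_top_of_le_ne_top (ENNReal.mul_ne_top ENNReal.ofReal_ne_top hHfin)
      (?_ : I' ≤ ENNReal.ofReal M * H)
    rw [hI', hH, ← setLIntegral_const]
    exact lintegral_mono fun x => ENNReal.ofReal_le_ofReal ((le_abs_self _).trans (hM x))
  obtain ⟨δ, hδ0, hδ1, hδ⟩ : ∃ δ : ℝ, 0 < δ ∧ δ ≤ 1 ∧
      ENNReal.ofReal (1 + δ) * (I' + ENNReal.ofReal δ * H) ≤ I' + ε := by
    have h1 : Filter.Tendsto (fun δ : ℝ => ENNReal.ofReal (1 + δ)) (nhdsWithin 0 (Set.Ioi 0))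
        (nhds 1) := by
      have : Filter.Tendsto (fun δ : ℝ => ENNReal.ofReal (1 + δ)) (nhds 0)
        (nhds (ENNReal.ofReal (1 + 0))) := (ENNReal.continuous_ofReal.comp (by fun_prop)).tendsto _
      simpa using this.mono_left nhdsWithin_le_nhds
    have h2 : Filter.Tendsto (fun δ : ℝ => ENNReal.ofReal δ) (nhdsWithin 0 (Set.Ioi 0))
        (nhds 0) := by
      have := ENNReal.continuous_ofReal.tendsto 0
      simpa using this.mono_left nhdsWithin_le_nhds
    have h3 : Filter.Tendsto (fun δ : ℝ => ENNReal.ofReal (1 + δ) * (I' + ENNReal.ofReal δ * H))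
        (nhdsWithin 0 (Set.Ioi 0)) (nhds (1 * (I' + 0 * H))) := by
      refine ENNReal.Tendsto.mul h1 (Or.inl one_ne_zero) (tendsto_const_nhds.add
        (ENNReal.Tendsto.mul_const h2 (Or.inr hHfin))) (Or.inr (by simp))
    simp only [one_mul, zero_mul, add_zero] at h3
    have h4 := h3.eventually_le_const (ENNReal.lt_add_right hI'fin hε)
    obtain ⟨δ, h5, h6⟩ := (h4.and (Ioc_mem_nhdsGT (one_pos (α := ℝ)))).exists
    exact ⟨δ, h6.1, h6.2, h5⟩
  obtain ⟨η, hη0, hη⟩ := Metric.uniformContinuous_iff.1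
    (hc.uniformContinuous_of_continuous hφ) δ hδ0
  refine ⟨min 1 (η / 3), by positivity, fun ν hν τ hτ0 hτ => ?_⟩
  have hτ1 : τ ≤ 1 := hτ.trans (min_le_left _ _)
  have hτη : τ ≤ η / 3 := hτ.trans (min_le_right _ _)
  obtain ⟨D, hDm, hDb, hDd, hDu, hDdisj⟩ :=
    SeparableSpace.exists_measurable_partition_diam_le V (mul_pos hδ0 hτ0)
  set A : ℕ → Set V := fun j => K' ∩ D j
  have hAm : ∀ j, MeasurableSet (A j) := fun j => hK'm.inter (hDm j)
  have hAd : ∀ j, ∀ x ∈ A j, ∀ y ∈ A j, dist x y ≤ δ * τ := fun j x hx y hy =>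
    (Metric.dist_le_diam_of_mem (hDb j) hx.2 hy.2).trans (hDd j)
  have hAu : ⋃ j, A j = K' := by rw [← Set.inter_iUnion, hDu, Set.inter_univ]
  have hAdisj : Pairwise (Function.onFun Disjoint A) := fun i j hij =>
    (hDdisj hij).mono Set.inter_subset_right Set.inter_subset_right
  set m : ℕ → ℝ≥0∞ := fun j => ⨅ x ∈ A j, (ENNReal.ofReal (φ x) + ENNReal.ofReal δ)
  set T : ℕ → Set V := fun j => {y | ∃ s ∈ Set.Icc 0 τ, y + s • ν ∈ A j}
  have hpt : ∀ y, {y | ∃ s ∈ Set.Icc 0 τ, y + s • ν ∈ K}.indicator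
      (fun y => ENNReal.ofReal (φ y)) y ≤
      ∑' j, (toMeasurable volume (T j)).indicator (fun _ => m j) y := by
    intro y
    by_cases hy : y ∈ {y | ∃ s ∈ Set.Icc 0 τ, y + s • ν ∈ K}
    · rw [Set.indicator_of_mem hy]
      by_cases h0 : φ y = 0
      · simp [h0]
      obtain ⟨s, hs, hsK⟩ := hy
      have hyρ : ‖y‖ ≤ ρ := by simpa using hρ (subset_tsupport _ h0)
      have hsν : ‖s • ν‖ ≤ τ := by
        rw [norm_smul, hν, mul_one, Real.norm_eq_abs, abs_of_nonneg hs.1]; exact hs.2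
      have hK'y : y + s • ν ∈ K' := by
        refine ⟨hsK, ?_⟩
        rw [mem_closedBall_zero_iff]
        linarith [norm_add_le y (s • ν)]
      obtain ⟨j, hj⟩ := Set.mem_iUnion.1 (hAu ▸ hK'y)
      refine le_trans ?_ (ENNReal.le_tsum j)
      rw [Set.indicator_of_mem (subset_toMeasurable volume (T j) (show y ∈ T j from ⟨s, hs, hj⟩))]
      refine le_iInf₂ fun x hx => ?_
      refine (ENNReal.ofReal_le_ofReal ?_).trans ENNReal.ofReal_add_le
      have h1 : dist y x < η := by
        have h2 := hAd j _ hj _ hx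
        have h3 : dist y (y + s • ν) ≤ τ := by rw [dist_eq_norm]; simpa using hsν
        nlinarith [dist_triangle y (y + s • ν) x]
      have h2 := hη h1
      rw [Real.dist_eq] at h2
      linarith [le_abs_self (φ y - φ x)]
    · rw [Set.indicator_of_notMem hy]; exact zero_le
  calc _ ≤ ∫⁻ y, ∑' j, (toMeasurable volume (T j)).indicator (fun _ => m j) y := lintegral_mono hpt
    _ = ∑' j, m j * volume (T j) := by
        rw [lintegral_tsum fun j => (measurable_const.indicator
          (measurableSet_toMeasurable _ _)).aemeasurable]
        congr 1; ext j
        rw [lintegral_indicator_const (measurableSet_toMeasurable _ _), measure_toMeasurable]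
    _ ≤ ∑' j, ENNReal.ofReal (τ + δ * τ) *
          ∫⁻ x in A j, (ENNReal.ofReal (φ x) + ENNReal.ofReal δ) ∂μHE[d] := by
        refine ENNReal.tsum_le_tsum fun j => ?_
        calc _ ≤ m j * (ENNReal.ofReal (τ + δ * τ) * μHE[d] (A j)) := by
              gcongr; exact volume_tube_le hd hν (hAd j)
          _ = ENNReal.ofReal (τ + δ * τ) * ∫⁻ x in A j, m j ∂μHE[d] := by
              rw [setLIntegral_const]; ring
          _ ≤ _ := by
              gcongr _ * ?_
              exact setLIntegral_mono' (hAm j) fun x hx => iInf₂_le x hx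
    _ = ENNReal.ofReal τ * (ENNReal.ofReal (1 + δ) * (I' + ENNReal.ofReal δ * H)) := by
        rw [ENNReal.tsum_mul_left, ← lintegral_iUnion hAm hAdisj, hAu,
          lintegral_add_right _ measurable_const, setLIntegral_const, ← mul_assoc,
          ← ENNReal.ofReal_mul hτ0.le]
        congr 2; ring
    _ ≤ _ := by
        gcongr
        refine hδ.trans ?_
        gcongr
        exact lintegral_mono_set Set.inter_subset_left

lemma exists_segment_mem_frontier {V : Type*} [NormedAddCommGroup V] [NormedSpace ℝ V] {S : Set V}
    {y ν : V} {τ : ℝ} (hτ : 0 ≤ τ) (h0 : y ∉ S) (h1 : y + τ • ν ∈ S) :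
    ∃ s ∈ Set.Icc 0 τ, y + s • ν ∈ frontier S := by
  by_contra! hcon
  have hpre : IsPreconnected ((fun s : ℝ => y + s • ν) '' Set.Icc 0 τ) :=
    isPreconnected_Icc.image _ (by fun_prop)
  have hsub : (fun s : ℝ => y + s • ν) '' Set.Icc 0 τ ⊆ interior S ∪ interior Sᶜ := by
    rintro _ ⟨s, hs, rfl⟩
    have := hcon s hs
    rw [interior_compl]
    by_contra h
    simp only [Set.mem_union, Set.mem_compl_iff, not_or, not_not] at h
    exact this ⟨h.2, h.1⟩
  have hdis : Disjoint (interior S) (interior Sᶜ) :=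
    disjoint_compl_right.mono interior_subset interior_subset
  rcases hpre.subset_or_subset isOpen_interior isOpen_interior hdis hsub with h | h
  · exact h0 (interior_subset (h ⟨0, ⟨le_rfl, hτ⟩, by simp⟩))
  · exact interior_subset (h ⟨τ, ⟨hτ, le_rfl⟩, rfl⟩) h1

section mollify
variable {V : Type*} [NormedAddCommGroup V] [InnerProductSpace ℝ V]
    [MeasurableSpace V] [BorelSpace V] [FiniteDimensional ℝ V]

/-- Convolution of the indicator of a set with a normalized bump function. -/
def mollify (b : ContDiffBump (0 : V)) (S : Set V) (x : V) : ℝ :=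
  ∫ y in S, b.normed volume (x - y)

variable (b : ContDiffBump (0 : V)) {S : Set V}

lemma contDiff_mollify (hS : MeasurableSet S) : ContDiff ℝ 1 (mollify b S) := by
  have h := b.hasCompactSupport_normed (μ := volume).contDiff_convolution_right (n := 1)
    (ContinuousLinearMap.lsmul ℝ ℝ) (μ := volume) (f := S.indicator fun _ => (1 : ℝ))
    ((locallyIntegrable_const 1).indicator hS) b.contDiff_normed
  refine (congrArg (ContDiff ℝ 1) (funext fun x => ?_)).mpr h
  rw [mollify, convolution_lsmul, ← integral_indicator hS]
  congr 1; ext y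
  by_cases hy : y ∈ S <;> simp [hy]

lemma integrable_bump_sub (x : V) : Integrable fun y => b.normed volume (x - y) :=
  b.integrable_normed.comp_sub_left x

lemma ofReal_mollify (x : V) :
    ENNReal.ofReal (mollify b S x) = ∫⁻ y in S, ENNReal.ofReal (b.normed volume (x - y)) :=
  ofReal_integral_eq_lintegral_ofReal (integrable_bump_sub b x).restrict
    (ae_of_all _ fun _ => b.nonneg_normed _)

lemma lintegral_bump_sub (x : V) : ∫⁻ y, ENNReal.ofReal (b.normed volume (x - y)) = 1 := by
  rw [← ofReal_integral_eq_lintegral_ofReal (integrable_bump_sub b x)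
    (ae_of_all _ fun _ => b.nonneg_normed _),
    integral_sub_left_eq_self (fun y => b.normed volume y) volume x, b.integral_normed,
    ENNReal.ofReal_one]

lemma mollify_nonneg (x : V) : 0 ≤ mollify b S x :=
  integral_nonneg fun _ => b.nonneg_normed _

lemma mollify_le_one (x : V) : mollify b S x ≤ 1 := by
  rw [← ENNReal.ofReal_le_one, ofReal_mollify, ← lintegral_bump_sub b x]
  exact setLIntegral_le_lintegral _ _

lemma bump_sub_eq_zero {x y : V} (h : y ∉ Metric.ball x b.rOut) : b.normed volume (x - y) = 0 := by
  by_contra hne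
  have : x - y ∈ Function.support (b.normed volume) := hne
  rw [b.support_normed_eq, mem_ball_zero_iff, ← dist_eq_norm, dist_comm] at this
  exact h this

lemma mollify_eq_one {x : V} (h : Metric.ball x b.rOut ⊆ S) : mollify b S x = 1 := by
  rw [mollify, setIntegral_eq_integral_of_forall_compl_eq_zero fun y hy =>
      bump_sub_eq_zero b fun hy' => hy (h hy'),
    integral_sub_left_eq_self (fun y => b.normed volume y) volume x, b.integral_normed]

lemma mollify_add {w : V} (hw : ∀ y, y + w ∈ S ↔ y ∈ S) (hS : MeasurableSet S) (x : V) :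
    mollify b S (x + w) = mollify b S x := by
  rw [mollify, mollify, ← integral_indicator hS, ← integral_indicator hS,
    ← integral_add_right_eq_self _ w]
  congr 1; ext y
  by_cases hy : y ∈ S
  · rw [Set.indicator_of_mem hy, Set.indicator_of_mem ((hw y).2 hy), add_sub_add_right_eq_sub]
  · rw [Set.indicator_of_notMem hy, Set.indicator_of_notMem (mt (hw y).1 hy)]

open Module in
lemma ofReal_fderiv_mollify_le {d : ℕ} (hd : finrank ℝ V = d + 1) (hS : MeasurableSet S)
    {K : Set V} (hK : IsClosed K) (hSK : frontier S ⊆ K)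
    (hfin : ∀ ρ, μHE[d] (K ∩ Metric.closedBall 0 ρ) ≠ ∞) (x : V) {ν : V} (hν : ‖ν‖ = 1) :
    ENNReal.ofReal (fderiv ℝ (mollify b S) x ν) ≤
      ∫⁻ y in K, ENNReal.ofReal (b.normed volume (x - y)) ∂μHE[d] := by
  set J := ∫⁻ y in K, ENNReal.ofReal (b.normed volume (x - y)) ∂μHE[d] with hJ
  refine _root_.le_of_forall_pos_le_add fun ε hε => ?_
  by_cases htop : J + ε = ∞
  · rw [htop]; exact le_top
  have hcs : HasCompactSupport fun y => b.normed volume (x - y) :=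
    b.hasCompactSupport_normed.comp_homeomorph (Homeomorph.subLeft x)
  have hcont : Continuous fun y => b.normed volume (x - y) :=
    b.continuous_normed.comp (by fun_prop)
  obtain ⟨τ₀, hτ₀, H⟩ := lintegral_tube_le hd hK.measurableSet hfin hcont hcs hε.ne'
  have key : ∀ τ, 0 < τ → τ ≤ τ₀ →
      mollify b S (x + τ • ν) ≤ mollify b S x + τ * (J + ε).toReal := by
    intro τ hτ0 hτ
    rw [← ENNReal.ofReal_le_ofReal_iff (by have := mollify_nonneg b (S := S) x; positivity),
      ENNReal.ofReal_add (mollify_nonneg b x) (by positivity), ENNReal.ofReal_mul hτ0.le,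
      ENNReal.ofReal_toReal htop, ofReal_mollify, ofReal_mollify]
    have e1 : ∫⁻ y in S, ENNReal.ofReal (b.normed volume (x + τ • ν - y)) =
        ∫⁻ y, S.indicator (fun _ => 1) (y + τ • ν) * ENNReal.ofReal (b.normed volume (x - y)) := by
      rw [← lintegral_indicator hS, ← lintegral_add_right_eq_self _ (τ • ν)]
      congr 1; ext y
      by_cases hy : y + τ • ν ∈ S
      · rw [Set.indicator_of_mem hy, Set.indicator_of_mem hy, add_sub_add_right_eq_sub, one_mul]
      · rw [Set.indicator_of_notMem hy, Set.indicator_of_notMem hy, zero_mul]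
    rw [e1, ← lintegral_indicator hS]
    refine le_trans (le_trans (lintegral_mono fun y => ?_) (lintegral_add_left ?_ _).le)
      (add_le_add le_rfl (H ν hν τ hτ0 hτ))
    · by_cases hy : y + τ • ν ∈ S
      · rw [Set.indicator_of_mem hy, one_mul]
        by_cases hy' : y ∈ S
        · rw [Set.indicator_of_mem hy']; exact le_self_add
        · obtain ⟨s, hs, hsf⟩ := exists_segment_mem_frontier hτ0.le hy' hy
          rw [Set.indicator_of_mem (s := {y | ∃ s ∈ Set.Icc 0 τ, y + s • ν ∈ K})
            (show _ from ⟨s, hs, hSK hsf⟩)]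
          exact le_add_self
      · rw [Set.indicator_of_notMem hy, zero_mul]; exact zero_le
    · exact (ENNReal.measurable_ofReal.comp hcont.measurable).indicator hS
  have hder : HasDerivAt (fun τ : ℝ => mollify b S (x + τ • ν))
      (fderiv ℝ (mollify b S) x ν) 0 := by
    have h1 := ((contDiff_mollify b hS).differentiable one_ne_zero x).hasFDerivAt
    have h2 : HasDerivAt (fun τ : ℝ => x + τ • ν) ν 0 := by
      simpa using ((hasDerivAt_id (0 : ℝ)).smul_const ν).const_add x
    have h3 : HasFDerivAt (mollify b S) (fderiv ℝ (mollify b S) x) (x + (0 : ℝ) • ν) := by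
      simpa using h1
    exact h3.comp_hasDerivAt (0 : ℝ) h2
  have hle : fderiv ℝ (mollify b S) x ν ≤ (J + ε).toReal := by
    refine le_of_tendsto hder.tendsto_slope_zero_right ?_
    filter_upwards [Ioc_mem_nhdsGT hτ₀] with τ hτ
    have := key τ hτ.1 hτ.2
    simp only [zero_add, zero_smul, add_zero, smul_eq_mul]
    rw [inv_mul_le_iff₀ hτ.1]
    linarith
  calc _ ≤ ENNReal.ofReal (J + ε).toReal := ENNReal.ofReal_le_ofReal hle
    _ = _ := ENNReal.ofReal_toReal htop

end mollify

/-- `q` is the quotient map from Euclidean space onto the product of circles and lines whose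
`i`-th factor has length `L i` (a line if `L i = 0`). -/
structure FlatCover {d : ℕ} (L : Fin d → ℝ) {M : Type*} [MetricSpace M] (q : EucSp d → M) :
    Prop where
  nonneg : ∀ i, 0 ≤ L i
  surjective : Function.Surjective q
  dist_eq : ∀ x y, dist (q x) (q y) = √(∑ i, ‖((x i - y i : ℝ) : AddCircle (L i))‖ ^ 2)

/-- The fundamental cell with corner `z`. -/
def cell {d : ℕ} (L : Fin d → ℝ) (z : EucSp d) : Set (EucSp d) :=
  {x | ∀ i, L i ≠ 0 → x i ∈ Set.Ioc (z i) (z i + L i)}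

lemma measurableSet_cell {d : ℕ} (L : Fin d → ℝ) (z : EucSp d) : MeasurableSet (cell L z) := by
  have : cell L z = ⋂ i, ⋂ _ : L i ≠ 0, (fun x : EucSp d => x i) ⁻¹' Set.Ioc (z i) (z i + L i) := by
    ext; simp [cell]
  rw [this]
  refine MeasurableSet.iInter fun i => MeasurableSet.iInter fun _ => ?_
  exact measurableSet_Ioc.preimage (by fun_prop)

lemma norm_coe_addCircle_le (p t : ℝ) : ‖(t : AddCircle p)‖ ≤ |t| := by
  rw [AddCircle.norm_eq]
  rcases eq_or_ne p 0 with rfl | hp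
  · simp
  have h := round_le (p⁻¹ * t) 0
  have : t - round (p⁻¹ * t) * p = p * (p⁻¹ * t - round (p⁻¹ * t)) := by
    field_simp
  rw [this, abs_mul]
  calc _ ≤ |p| * |p⁻¹ * t - (0 : ℤ)| := by gcongr
    _ = |t| := by rw [← abs_mul]; congr 1; simp; field_simp

namespace FlatCover
variable {d : ℕ} {L : Fin d → ℝ} {M : Type*} [MetricSpace M] {q : EucSp d → M}

lemma dist_le (hq : FlatCover L q) (x y : EucSp d) : dist (q x) (q y) ≤ dist x y := by
  rw [hq.dist_eq, EuclideanSpace.dist_eq]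
  refine Real.sqrt_le_sqrt (Finset.sum_le_sum fun i _ => ?_)
  rw [Real.dist_eq]
  gcongr
  exact norm_coe_addCircle_le _ _

lemma lipschitz (hq : FlatCover L q) : LipschitzWith 1 q :=
  LipschitzWith.of_dist_le_mul fun x y => by simpa using hq.dist_le x y

lemma continuous (hq : FlatCover L q) : Continuous q := hq.lipschitz.continuous

lemma exists_radius (hq : FlatCover L q) :
    ∃ r > 0, ∀ x y, dist x y ≤ r → dist (q x) (q y) = dist x y := by
  obtain ⟨r, hr0, hr⟩ : ∃ r > 0, ∀ i, L i ≠ 0 → r ≤ L i / 2 := by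
    refine ⟨if h : (Finset.univ : Finset (Fin d)).Nonempty then
      Finset.univ.inf' h fun i => if L i = 0 then 1 else L i / 2 else 1, ?_, fun i hi => ?_⟩
    · split_ifs with h
      · rw [gt_iff_lt, Finset.lt_inf'_iff]
        intro i _
        split_ifs with hi
        · exact one_pos
        · have := (hq.nonneg i).lt_of_ne' hi; positivity
      · exact one_pos
    · rw [dif_pos ⟨i, Finset.mem_univ i⟩]
      exact (Finset.inf'_le _ (Finset.mem_univ i)).trans (by simp [hi])
  refine ⟨r, hr0, fun x y hxy => ?_⟩
  rw [hq.dist_eq, EuclideanSpace.dist_eq]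
  congr 1
  refine Finset.sum_congr rfl fun i _ => ?_
  rw [Real.dist_eq]
  rcases eq_or_ne (L i) 0 with hi | hi
  · rw [hi, AddCircle.norm_eq_of_zero]
  · congr 1
    refine (AddCircle.norm_coe_eq_abs_iff (L i) hi).2 ?_
    rw [abs_of_nonneg (hq.nonneg i)]
    have h1 : |x i - y i| ≤ dist x y := by
      rw [dist_eq_norm]
      simpa using PiLp.norm_apply_le (x - y) i
    linarith [hr i hi]

lemma eq_iff (hq : FlatCover L q) {x y : EucSp d} :
    q x = q y ↔ ∀ i, ∃ k : ℤ, x i = y i + k * L i := by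
  rw [← dist_eq_zero, hq.dist_eq, Real.sqrt_eq_zero (Finset.sum_nonneg fun _ _ => sq_nonneg _),
    Finset.sum_eq_zero_iff_of_nonneg fun _ _ => sq_nonneg _]
  refine forall_congr' fun i => ?_
  simp only [Finset.mem_univ, true_implies, sq_eq_zero_iff, norm_eq_zero, AddCircle.coe_eq_zero_iff,
    zsmul_eq_mul]
  exact exists_congr fun k => ⟨fun h => by linarith, fun h => by linarith⟩

lemma exists_lift (hq : FlatCover L q) (x : EucSp d) (m : M) :
    ∃ y, q y = m ∧ dist x y = dist (q x) m := by
  obtain ⟨y, rfl⟩ := hq.surjective m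
  refine ⟨WithLp.toLp 2 fun i => y i + round ((L i)⁻¹ * (x i - y i)) * L i, ?_, ?_⟩
  · rw [hq.eq_iff]
    exact fun i => ⟨_, rfl⟩
  · rw [hq.dist_eq, EuclideanSpace.dist_eq]
    congr 1
    refine Finset.sum_congr rfl fun i _ => ?_
    rw [AddCircle.norm_eq, Real.dist_eq]
    congr 2
    simp only; ring

lemma isOpenMap (hq : FlatCover L q) : IsOpenMap q := by
  intro U hU
  rw [Metric.isOpen_iff] at hU ⊢
  rintro _ ⟨x, hx, rfl⟩
  obtain ⟨ε, hε, h⟩ := hU x hx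
  refine ⟨ε, hε, fun m hm => ?_⟩
  obtain ⟨y, rfl, hy⟩ := hq.exists_lift x m
  refine ⟨y, h ?_, rfl⟩
  rw [Metric.mem_ball, dist_comm, hy, dist_comm]; exact hm

lemma injOn_cell (hq : FlatCover L q) (z : EucSp d) : Set.InjOn q (cell L z) := by
  intro x hx y hy hxy
  rw [hq.eq_iff] at hxy
  ext i
  obtain ⟨k, hk⟩ := hxy i
  rcases eq_or_ne (L i) 0 with hi | hi
  · rw [hk, hi, mul_zero, add_zero]
  have h1 := hx i hi
  have h2 := hy i hi
  have hpos := (hq.nonneg i).lt_of_ne' hi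
  have hk0 : k = 0 := by
    have h3 : (k : ℝ) * L i < 1 * L i := by linarith [h1.2, h2.1]
    have h4 : (-1 : ℝ) * L i < k * L i := by linarith [h1.1, h2.2]
    have h5 := lt_of_mul_lt_mul_right h3 hpos.le
    have h6 := lt_of_mul_lt_mul_right h4 hpos.le
    have h7 : k < 1 := by exact_mod_cast h5
    have h8 : -1 < k := by exact_mod_cast h6
    omega
  rw [hk, hk0]; simp

lemma exists_mem_cell (hq : FlatCover L q) (z : EucSp d) (m : M) : ∃ x ∈ cell L z, q x = m := by
  obtain ⟨y, rfl⟩ := hq.surjective m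
  have H : ∀ i, ∃ k : ℤ, L i ≠ 0 → y i + k * L i ∈ Set.Ioc (z i) (z i + L i) := by
    intro i
    rcases eq_or_ne (L i) 0 with hi | hi
    · exact ⟨0, fun h => (h hi).elim⟩
    obtain ⟨k, hk, -⟩ := existsUnique_add_zsmul_mem_Ioc ((hq.nonneg i).lt_of_ne' hi) (y i) (z i)
    exact ⟨k, fun _ => by simpa using hk⟩
  choose k hk using H
  refine ⟨WithLp.toLp 2 fun i => y i + k i * L i, fun i hi => hk i hi, ?_⟩
  rw [hq.eq_iff]
  exact fun i => ⟨k i, rfl⟩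

variable [MeasurableSpace M] [BorelSpace M]

/-- Hausdorff measures on the quotient are computed on a fundamental cell. -/
lemma euclideanHausdorffMeasure_eq (hq : FlatCover L q) (k : ℕ) {K : Set M} (hK : MeasurableSet K)
    (z : EucSp d) : μHE[k] K = μHE[k] (q ⁻¹' K ∩ cell L z) := by
  obtain ⟨r, hr0, hr⟩ := hq.exists_radius
  obtain ⟨D, hDm, hDb, hDd, hDu, hDdisj⟩ :=
    SeparableSpace.exists_measurable_partition_diam_le (EucSp d) hr0
  have : SecondCountableTopology M := by
    have : TopologicalSpace.SeparableSpace M :=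
      hq.surjective.denseRange.separableSpace hq.continuous
    exact UniformSpace.secondCountable_of_separable M
  set A : ℕ → Set (EucSp d) := fun j => (q ⁻¹' K ∩ cell L z) ∩ D j
  have hAm : ∀ j, MeasurableSet (A j) := fun j =>
    ((hK.preimage hq.continuous.measurable).inter (measurableSet_cell L z)).inter (hDm j)
  have hAdisj : Pairwise (Function.onFun Disjoint A) := fun i j hij =>
    (hDdisj hij).mono Set.inter_subset_right Set.inter_subset_right
  have hAu : ⋃ j, A j = q ⁻¹' K ∩ cell L z := by rw [← Set.inter_iUnion, hDu, Set.inter_univ]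
  have hKu : K = ⋃ j, q '' A j := by
    rw [← Set.image_iUnion, hAu]
    ext m
    constructor
    · intro hm
      obtain ⟨x, hx, rfl⟩ := hq.exists_mem_cell z m
      exact ⟨x, ⟨hm, hx⟩, rfl⟩
    · rintro ⟨x, hx, rfl⟩; exact hx.1
  have hinj : ∀ j, Set.InjOn q (A j) := fun j => (hq.injOn_cell z).mono fun x hx => hx.1.2
  have hdisj : Pairwise (Function.onFun Disjoint fun j => q '' A j) := fun i j hij => by
    refine Set.disjoint_left.2 ?_
    rintro _ ⟨x, hx, rfl⟩ ⟨y, hy, hxy⟩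
    have : y = x := hq.injOn_cell z hy.1.2 hx.1.2 hxy
    exact Set.disjoint_left.1 (hAdisj hij) hx (this ▸ hy)
  rw [hKu, measure_iUnion hdisj fun j =>
    (hAm j).image_of_continuousOn_injOn hq.continuous.continuousOn (hinj j), ← hKu, ← hAu,
    measure_iUnion hAdisj hAm]
  congr 1; ext j
  refine euclideanHausdorffMeasure_image_of_isometryOn k fun x hx y hy => ?_
  rw [edist_dist, edist_dist, hr x y ((Metric.dist_le_diam_of_mem (hDb j) hx.2 hy.2).trans (hDd j))]

end FlatCover

lemma setLIntegral_cell_lintegral {d : ℕ} {L : Fin d → ℝ} {m : Measure (EucSp d)} [SigmaFinite m]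
    {a : ℝ≥0∞} (hm : ∀ z, m (cell L z) = a) {g : EucSp d → ℝ≥0∞} (hg : Measurable g) :
    ∫⁻ x in cell L 0, ∫⁻ y, g (x - y) ∂m = a * ∫⁻ u, g u := by
  have hc := measurableSet_cell L 0
  have hmem : ∀ u y : EucSp d, u + y ∈ cell L 0 ↔ y ∈ cell L (-u) := by
    intro u y
    refine forall_congr' fun i => forall_congr' fun _ => ?_
    simp only [Set.mem_Ioc, PiLp.add_apply, PiLp.zero_apply, PiLp.neg_apply]
    constructor <;> rintro ⟨h1, h2⟩ <;> constructor <;> linarith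
  calc ∫⁻ x in cell L 0, ∫⁻ y, g (x - y) ∂m
      = ∫⁻ x, ∫⁻ y, (cell L 0).indicator 1 x * g (x - y) ∂m := by
        rw [← lintegral_indicator hc]
        refine lintegral_congr fun x => ?_
        have hgx : Measurable fun y => g (x - y) := hg.comp (by fun_prop)
        rw [lintegral_const_mul _ hgx]
        by_cases hx : x ∈ cell L 0 <;> simp [hx]
    _ = ∫⁻ y, (∫⁻ x, (cell L 0).indicator 1 x * g (x - y)) ∂m := by
        refine lintegral_lintegral_swap (μ := volume) (ν := m)
          (f := fun x y => (cell L 0).indicator 1 x * g (x - y)) (Measurable.aemeasurable ?_)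
        exact ((measurable_one.indicator hc).comp measurable_fst).mul
          (hg.comp (measurable_fst.sub measurable_snd))
    _ = ∫⁻ y, (∫⁻ u, (cell L 0).indicator 1 (u + y) * g u) ∂m := by
        refine lintegral_congr fun y => ?_
        rw [← lintegral_add_right_eq_self (μ := (volume : Measure (EucSp d))) _ y]
        simp
    _ = ∫⁻ u, ∫⁻ y, (cell L 0).indicator 1 (u + y) * g u ∂m := by
        refine lintegral_lintegral_swap (μ := m) (ν := volume)
          (f := fun y u => (cell L 0).indicator 1 (u + y) * g u) (Measurable.aemeasurable ?_)
        exact ((measurable_one.indicator hc).comp (measurable_snd.add measurable_fst)).mul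
          (hg.comp measurable_snd)
    _ = ∫⁻ u, a * g u := by
        refine lintegral_congr fun u => ?_
        have hgu : Measurable fun y => (cell L 0).indicator (1 : EucSp d → ℝ≥0∞) (u + y) :=
          (measurable_one.indicator hc).comp (by fun_prop)
        rw [lintegral_mul_const _ hgu, ← hm (-u),
          ← lintegral_indicator_one (measurableSet_cell L (-u))]
        congr 2; ext y
        by_cases hy : y ∈ cell L (-u)
        · simp [hy, (hmem u y).2 hy]
        · simp [hy, mt (hmem u y).1 hy]
    _ = _ := lintegral_const_mul _ hg

lemma measurePreserving_toLp_boxMeas {d : ℕ} (L : Fin d → ℝ) :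
    MeasurePreserving (WithLp.toLp 2 : (Fin d → ℝ) → EucSp d) (boxMeas L)
      (volume.restrict (cell L 0)) := by
  classical
  have h := (PiLp.volume_preserving_toLp (Fin d)).restrict_preimage (measurableSet_cell L 0)
  suffices hb : boxMeas L = (volume : Measure (Fin d → ℝ)).restrict
      (WithLp.toLp 2 ⁻¹' cell L 0) by rw [hb]; exact h
  have : coordMeas = fun ℓ => volume.restrict (if ℓ = 0 then Set.univ else Set.Ioc 0 ℓ) := by
    ext1 ℓ; rw [coordMeas]; split_ifs <;> simp
  rw [boxMeas, this]
  rw [← Measure.restrict_pi_pi, ← volume_pi]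
  congr 1
  ext x
  simp only [Set.mem_pi, Set.mem_univ, true_implies, cell, Set.mem_preimage, Set.mem_ofPred_eq]
  refine forall_congr' fun i => ?_
  by_cases hi : L i = 0 <;> simp [hi]

lemma FlatCover.isLocallyFiniteMeasure {d : ℕ} {L : Fin d → ℝ} {M : Type*} [MetricSpace M]
    {q : EucSp d → M} [MeasurableSpace M] [BorelSpace M] (hq : FlatCover L q) (k : ℕ) {K : Set M}
    (hK : MeasurableSet K) (hfin : μHE[k] K ≠ ∞) :
    IsLocallyFiniteMeasure ((μHE[k] : Measure (EucSp d)).restrict (q ⁻¹' K)) := by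
  refine ⟨fun x => ?_⟩
  let z : EucSp d := WithLp.toLp 2 fun i => x i - L i / 2
  refine ⟨cell L z, ?_, ?_⟩
  · have h : ∀ᶠ y in nhds x, ∀ i, L i ≠ 0 → |y i - x i| < L i / 2 := by
      rw [Filter.eventually_all]
      intro i
      rcases eq_or_ne (L i) 0 with hi | hi
      · simp [hi]
      have hc : Continuous fun y : EucSp d => |y i - x i| := by fun_prop
      have := (hc.tendsto x).eventually_lt_const
        (show |x i - x i| < L i / 2 by
          have := (hq.nonneg i).lt_of_ne' hi
          simpa using this)
      filter_upwards [this] with y hy _ using hy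
    filter_upwards [h] with y hy i hi
    have := abs_lt.1 (hy i hi)
    simp only [z]
    constructor <;> linarith
  · rw [Measure.restrict_apply (measurableSet_cell L z), Set.inter_comm,
      ← hq.euclideanHausdorffMeasure_eq k hK]
    exact hfin.lt_top

/-- The Euclidean length of the gradient is the largest directional derivative. -/
lemma ofReal_gradN_toLp_le {d : ℕ} (F : EucSp d → ℝ) (x : Fin d → ℝ)
    {J : ℝ≥0∞} (h : ∀ ν : EucSp d, ‖ν‖ = 1 → ENNReal.ofReal (fderiv ℝ F (WithLp.toLp 2 x) ν) ≤ J) :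
    ENNReal.ofReal (gradN (fun y => F (WithLp.toLp 2 y)) x) ≤ J := by
  set D := fderiv ℝ F (WithLp.toLp 2 x)
  set g : Fin d → ℝ := fun i => D (EuclideanSpace.single i 1)
  have h1 : ∀ i, fderiv ℝ (fun y : Fin d → ℝ => F (WithLp.toLp 2 y)) x (Pi.single i 1) = g i := by
    intro i
    have e : (fun y : Fin d → ℝ => F (WithLp.toLp 2 y)) =
        F ∘ (PiLp.continuousLinearEquiv 2 ℝ (fun _ : Fin d => ℝ)).symm := rfl
    rw [e, ContinuousLinearEquiv.comp_right_fderiv]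
    rfl
  have hG : gradN (fun y => F (WithLp.toLp 2 y)) x = √(∑ i, g i ^ 2) := by
    rw [gradN]; simp_rw [h1]
  rw [hG]
  rcases eq_or_ne (√(∑ i, g i ^ 2)) 0 with h0 | h0
  · simp [h0]
  set G := √(∑ i, g i ^ 2)
  have hGsq : G ^ 2 = ∑ i, g i ^ 2 := Real.sq_sqrt (Finset.sum_nonneg fun _ _ => sq_nonneg _)
  have hG0 : 0 < G := (Real.sqrt_nonneg _).lt_of_ne' h0
  have hν : ‖(G⁻¹ • WithLp.toLp 2 g : EucSp d)‖ = 1 := by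
    rw [norm_smul, EuclideanSpace.norm_eq, Real.norm_eq_abs, abs_of_pos (inv_pos.2 hG0)]
    simp only [Real.norm_eq_abs, sq_abs]
    exact inv_mul_cancel₀ h0
  refine le_of_eq_of_le ?_ (h _ hν)
  congr 1
  have hD : D (WithLp.toLp 2 g) = G ^ 2 := by
    have : (WithLp.toLp 2 g : EucSp d) = ∑ i, g i • EuclideanSpace.single i (1 : ℝ) := by
      ext j; simp [Finset.sum_apply, Pi.single_apply]
    rw [this, map_sum, hGsq]
    refine Finset.sum_congr rfl fun i _ => ?_
    rw [map_smul, smul_eq_mul, sq]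
  rw [map_smul, hD, smul_eq_mul]
  field_simp

/-- Projection onto the line coordinates. -/
def lineProj {d : ℕ} (L : Fin d → ℝ) : EucSp d →L[ℝ] EucSp d :=
  LinearMap.toContinuousLinearMap
    { toFun := fun x => WithLp.toLp 2 fun i => open Classical in if L i = 0 then x i else 0
      map_add' := fun x y => by ext i; simp only [PiLp.add_apply]; split_ifs <;> simp
      map_smul' := fun c x => by ext i; simp }

lemma lineProj_apply {d : ℕ} (L : Fin d → ℝ) (x : EucSp d) (i : Fin d) :
    lineProj L x i = open Classical in if L i = 0 then x i else 0 := rfl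

lemma norm_lineProj_le {d : ℕ} (L : Fin d → ℝ) (x : EucSp d) : ‖lineProj L x‖ ≤ ‖x‖ := by
  rw [EuclideanSpace.norm_eq, EuclideanSpace.norm_eq]
  refine Real.sqrt_le_sqrt (Finset.sum_le_sum fun i _ => ?_)
  rw [lineProj_apply]
  split_ifs <;> simp [sq_nonneg]

lemma exists_cutoff {d : ℕ} (L : Fin d → ℝ) : ∃ (C : ℝ) (χ : ℕ → EucSp d → ℝ), 0 ≤ C ∧
    (∀ k, ContDiff ℝ 1 (χ k)) ∧ (∀ k x, 0 ≤ χ k x) ∧ (∀ k x, χ k x ≤ 1) ∧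
    (∀ k x ν, ‖ν‖ = 1 → fderiv ℝ (χ k) x ν ≤ C / (k + 1)) ∧
    (∀ k i x, χ k (x + EuclideanSpace.single i (L i)) = χ k x) ∧
    (∀ k, ∃ ρ : ℝ, ∀ x, χ k x ≠ 0 → ∀ i, L i = 0 → |x i| ≤ ρ) ∧
    ∀ x, ∀ᶠ k in Filter.atTop, χ k x = 1 := by
  let b : ContDiffBump (0 : EucSp d) := ⟨1, 2, one_pos, one_lt_two⟩
  obtain ⟨C, hC⟩ := (b.hasCompactSupport.fderiv (𝕜 := ℝ)).exists_bound_of_continuous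
    (b.contDiff (n := 1) |>.continuous_fderiv one_ne_zero)
  have hC0 : 0 ≤ C := (norm_nonneg _).trans (hC 0)
  have hk : ∀ k : ℕ, (0 : ℝ) < k + 1 := fun k => by positivity
  refine ⟨C, fun k x => b (((k : ℝ) + 1)⁻¹ • lineProj L x), hC0, fun k => ?_, fun k x => b.nonneg,
    fun k x => b.le_one, fun k x ν hν => ?_, fun k i x => ?_, fun k => ⟨2 * (k + 1), ?_⟩,
    fun x => ?_⟩
  · exact b.contDiff.comp ((lineProj L).contDiff.const_smul _)
  · have hD : HasFDerivAt (fun x => b (((k : ℝ) + 1)⁻¹ • lineProj L x))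
        ((fderiv ℝ b (((k : ℝ) + 1)⁻¹ • lineProj L x)).comp (((k : ℝ) + 1)⁻¹ • lineProj L)) x :=
      ((b.contDiff (n := 1)).differentiable one_ne_zero _).hasFDerivAt.comp x
        (((k : ℝ) + 1)⁻¹ • lineProj L).hasFDerivAt
    rw [hD.fderiv]
    refine (le_abs_self _).trans ?_
    rw [← Real.norm_eq_abs]
    simp only [ContinuousLinearMap.comp_apply, _root_.smul_apply, map_smul, norm_smul,
      norm_inv, Real.norm_eq_abs, abs_of_pos (hk k)]
    rw [← Real.norm_eq_abs, div_eq_inv_mul]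
    refine mul_le_mul_of_nonneg_left ?_ (inv_pos.2 (hk k)).le
    refine (ContinuousLinearMap.le_opNorm _ _).trans ?_
    calc _ ≤ C * 1 := mul_le_mul (hC _) ((norm_lineProj_le L ν).trans hν.le) (norm_nonneg _) hC0
      _ = C := mul_one C
  · suffices h : lineProj L (x + EuclideanSpace.single i (L i)) = lineProj L x by simp only [h]
    ext j
    rw [lineProj_apply, lineProj_apply]
    split_ifs with hj
    · rcases eq_or_ne j i with rfl | hji
      · simp [hj]
      · simp [hji]
    · rfl
  · intro x hx i hi
    have h : ((k : ℝ) + 1)⁻¹ • lineProj L x ∈ Metric.ball 0 2 := by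
      rw [← b.support_eq]; exact hx
    rw [mem_ball_zero_iff, norm_smul, norm_inv, Real.norm_eq_abs, abs_of_pos (hk k),
      inv_mul_lt_iff₀ (hk k)] at h
    have h2 := PiLp.norm_apply_le (lineProj L x) i
    rw [lineProj_apply, if_pos hi, Real.norm_eq_abs] at h2
    linarith
  · filter_upwards [Filter.eventually_ge_atTop ⌈‖x‖⌉₊] with k hkx
    refine b.one_of_mem_closedBall ?_
    change _ ∈ Metric.closedBall (0 : EucSp d) 1
    rw [mem_closedBall_zero_iff, norm_smul, norm_inv, Real.norm_eq_abs, abs_of_pos (hk k),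
      inv_mul_le_iff₀ (hk k)]
    have h1 : ‖x‖ ≤ k := (Nat.le_ceil _).trans (by exact_mod_cast hkx)
    linarith [norm_lineProj_le L x]

lemma fderiv_mul_apply_le {V : Type*} [NormedAddCommGroup V] [NormedSpace ℝ V] {χ m : V → ℝ}
    (hχ : Differentiable ℝ χ) (hm : Differentiable ℝ m) {x ν : V} (h0 : 0 ≤ χ x) (h1 : χ x ≤ 1)
    (hm0 : 0 ≤ m x) {c : ℝ} (hc : fderiv ℝ χ x ν ≤ c) :
    ENNReal.ofReal (fderiv ℝ (fun x => χ x * m x) x ν) ≤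
      ENNReal.ofReal (fderiv ℝ m x ν) + ENNReal.ofReal c * ENNReal.ofReal (m x) := by
  rw [fderiv_fun_mul (hχ x) (hm x)]
  simp only [_root_.add_apply, _root_.smul_apply, smul_eq_mul]
  refine ENNReal.ofReal_add_le.trans (add_le_add ?_ ?_)
  · rw [ENNReal.ofReal_mul h0]
    exact mul_le_of_le_one_left' (ENNReal.ofReal_le_one.2 h1)
  · rw [mul_comm, ENNReal.ofReal_mul' hm0]
    gcongr

lemma enorm_sub_add_le {a : ℝ} (h0 : 0 ≤ a) (h1 : a ≤ 1) :
    ‖a - 1‖ₑ + 1 ≤ ENNReal.ofReal a + 2 * (1 - ENNReal.ofReal a) := by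
  have e1 : ‖a - 1‖ₑ = ENNReal.ofReal (1 - a) := by
    rw [← Real.enorm_of_nonneg (by linarith : 0 ≤ 1 - a), ← enorm_neg]; congr 1; ring
  have e2 : (1 : ℝ≥0∞) - ENNReal.ofReal a = ENNReal.ofReal (1 - a) := by
    rw [ENNReal.ofReal_sub _ h0, ENNReal.ofReal_one]
  rw [e1, e2, ← ENNReal.ofReal_one, ← ENNReal.ofReal_ofNat 2,
    ← ENNReal.ofReal_mul (by norm_num), ← ENNReal.ofReal_add (by linarith) (by norm_num),
    ← ENNReal.ofReal_add h0 (by linarith)]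
  exact ENNReal.ofReal_le_ofReal (by linarith)

namespace FlatCover
variable {d : ℕ} {L : Fin (d + 1) → ℝ} {M : Type*} [MetricSpace M] {q : EucSp (d + 1) → M}
  [MeasurableSpace M] [BorelSpace M]

/-- Smooth periodic approximations of a closed set in the quotient. -/
lemma exists_testFun (hq : FlatCover L q) {U : Set M} (hU : IsClosed U) {v : ℝ}
    (hv : μHE[d + 1] U = ENNReal.ofReal v) (hfin : μHE[d] (frontier U) ≠ ∞) :
    ∃ (C : ℝ) (F : ℕ → (Fin (d + 1) → ℝ) → ℝ), (∀ k, TestFun L (F k)) ∧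
      (∀ k : ℕ, ∫⁻ x, ENNReal.ofReal (gradN (F k) x) ∂boxMeas L ≤
        μHE[d] (frontier U) + ENNReal.ofReal (C / (k + 1)) * ENNReal.ofReal v) ∧
      Filter.Tendsto (fun k => ∫⁻ x, ‖F k x - (WithLp.toLp 2 ⁻¹' (q ⁻¹' U)).indicator 1 x‖ₑ
        ∂boxMeas L) Filter.atTop (nhds 0) := by
  obtain ⟨C, χ, hC, hχs, hχ0, hχ1, hχd, hχp, hχsupp, hχlim⟩ := exists_cutoff L
  set S := q ⁻¹' U
  set K := q ⁻¹' frontier U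
  have hSc : IsClosed S := hU.preimage hq.continuous
  have hS : MeasurableSet S := hSc.measurableSet
  have hK : IsClosed K := isClosed_frontier.preimage hq.continuous
  have hSK : frontier S ⊆ K := hq.continuous.frontier_preimage_subset U
  have hvol : (μHE[d + 1] : Measure (EucSp (d + 1))) = volume :=
    EuclideanSpace.euclideanHausdorffMeasure_eq_volume _
  have := hq.isLocallyFiniteMeasure d isClosed_frontier.measurableSet hfin
  have hKfin : ∀ ρ, μHE[d] (K ∩ Metric.closedBall 0 ρ) ≠ ∞ := by
    intro ρ
    have h := (isCompact_closedBall (0 : EucSp (d + 1)) ρ).measure_lt_top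
      (μ := (μHE[d] : Measure (EucSp (d + 1))).restrict K)
    rw [Measure.restrict_apply measurableSet_closedBall, Set.inter_comm] at h
    exact h.ne
  have hcK : ∀ z, (μHE[d] : Measure (EucSp (d + 1))).restrict K (cell L z)
      = μHE[d] (frontier U) := by
    intro z
    rw [Measure.restrict_apply (measurableSet_cell L z), Set.inter_comm,
      ← hq.euclideanHausdorffMeasure_eq d isClosed_frontier.measurableSet]
  have hcS : ∀ z, (volume : Measure (EucSp (d + 1))).restrict S (cell L z)
      = ENNReal.ofReal v := by
    intro z
    rw [Measure.restrict_apply (measurableSet_cell L z), Set.inter_comm, ← hv,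
      hq.euclideanHausdorffMeasure_eq (d + 1) hU.measurableSet z, hvol]
  have hKnull : volume.restrict (cell L 0) K = 0 := by
    rw [Measure.restrict_apply hK.measurableSet, ← hvol,
      ← hq.euclideanHausdorffMeasure_eq (d + 1) isClosed_frontier.measurableSet]
    exact (Measure.euclideanHausdorffMeasure_zero_or_top d.lt_succ_self _).resolve_right hfin
  let b : ℕ → ContDiffBump (0 : EucSp (d + 1)) := fun k =>
    ⟨1 / (k + 2), 1 / (k + 1), by positivity, by
      apply one_div_lt_one_div_of_lt <;> [positivity; linarith]⟩
  have hbn : ∀ k, Measurable fun u => ENNReal.ofReal ((b k).normed volume u) := fun k =>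
    ((b k).continuous_normed (μ := volume)).measurable.ennreal_ofReal
  have hbI : ∀ k, ∫⁻ u, ENNReal.ofReal ((b k).normed volume u) = 1 := fun k => by
    rw [← ofReal_integral_eq_lintegral_ofReal (b k).integrable_normed
      (ae_of_all _ fun _ => (b k).nonneg_normed _), (b k).integral_normed, ENNReal.ofReal_one]
  let J : ℕ → EucSp (d + 1) → ℝ≥0∞ := fun k x =>
    ∫⁻ y in K, ENNReal.ofReal ((b k).normed volume (x - y)) ∂μHE[d]
  let m : ℕ → EucSp (d + 1) → ℝ := fun k => mollify (b k) S
  have hm : ∀ k, ContDiff ℝ 1 (m k) := fun k => contDiff_mollify (b k) hS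
  have hJm : ∀ k, Measurable (J k) := fun k => by
    refine Measurable.lintegral_prod_right' (f := fun p : EucSp (d + 1) × EucSp (d + 1) =>
      ENNReal.ofReal ((b k).normed volume (p.1 - p.2))) ?_
    exact (hbn k).comp (measurable_fst.sub measurable_snd)
  have hJI : ∀ k, ∫⁻ x in cell L 0, J k x = μHE[d] (frontier U) := fun k => by
    rw [setLIntegral_cell_lintegral hcK (hbn k), hbI, mul_one]
  have hmI : ∀ k, ∫⁻ x in cell L 0, ENNReal.ofReal (m k x) = ENNReal.ofReal v := fun k => by
    simp only [m, ofReal_mollify]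
    rw [setLIntegral_cell_lintegral hcS (hbn k), hbI, mul_one]
  let F : ℕ → EucSp (d + 1) → ℝ := fun k x => χ k x * m k x
  have hF0 : ∀ k x, 0 ≤ F k x := fun k x => mul_nonneg (hχ0 k x) (mollify_nonneg _ x)
  have hFm : ∀ k x, F k x ≤ m k x := fun k x =>
    mul_le_of_le_one_left (mollify_nonneg _ x) (hχ1 k x)
  have hF1 : ∀ k x, F k x ≤ 1 := fun k x => (hFm k x).trans (mollify_le_one _ x)
  have hFs : ∀ k, ContDiff ℝ 1 (F k) := fun k => (hχs k).mul (hm k)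
  have hmp := measurePreserving_toLp_boxMeas L
  refine ⟨C, fun k x => F k (WithLp.toLp 2 x), fun k => ?_, fun k => ?_, ?_⟩
  · refine ⟨(hFs k).comp (PiLp.contDiff_toLp), fun i x => ?_, ?_, fun _ => hF0 _ _,
      fun _ => hF1 _ _⟩
    · have e : (WithLp.toLp 2 (x + Pi.single i (L i)) : EucSp (d + 1)) =
          WithLp.toLp 2 x + EuclideanSpace.single i (L i) := rfl
      have h : m k (WithLp.toLp 2 x + EuclideanSpace.single i (L i)) = m k (WithLp.toLp 2 x) := by
        refine mollify_add (b k) (fun y => ?_) hS _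
        have : q (y + EuclideanSpace.single i (L i)) = q y := by
          rw [hq.eq_iff]
          intro j
          rcases eq_or_ne j i with rfl | hji
          · exact ⟨1, by simp⟩
          · exact ⟨0, by simp [hji]⟩
        simp only [S, Set.mem_preimage, this]
      simp only [F, e, hχp, h]
    · obtain ⟨ρ, hρ⟩ := hχsupp k
      exact ⟨ρ, fun x hx => hρ _ (left_ne_zero_of_mul hx)⟩
  · calc ∫⁻ x, ENNReal.ofReal (gradN (fun x => F k (WithLp.toLp 2 x)) x) ∂boxMeas L
        ≤ ∫⁻ x, (fun y => J k y + ENNReal.ofReal (C / (k + 1)) * ENNReal.ofReal (m k y))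
            (WithLp.toLp 2 x) ∂boxMeas L := by
          refine lintegral_mono fun x => ofReal_gradN_toLp_le (F k) x fun ν hν => ?_
          refine (fderiv_mul_apply_le ((hχs k).differentiable one_ne_zero)
            ((hm k).differentiable one_ne_zero) (hχ0 k _) (hχ1 k _) (mollify_nonneg _ _)
            (hχd k _ ν hν)).trans (add_le_add_left ?_ _)
          exact ofReal_fderiv_mollify_le (b k) (by simp) hS hK hSK hKfin _ hν
      _ = ∫⁻ y in cell L 0, (J k y + ENNReal.ofReal (C / (k + 1)) * ENNReal.ofReal (m k y)) :=
          hmp.lintegral_comp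
            ((hJm k).add ((hm k).continuous.measurable.ennreal_ofReal.const_mul _))
      _ ≤ _ := by
          rw [lintegral_add_left (hJm k),
            lintegral_const_mul _ (hm k).continuous.measurable.ennreal_ofReal, hJI, hmI]
  · have hgI : ∫⁻ x in cell L 0, S.indicator (1 : EucSp (d + 1) → ℝ≥0∞) x = ENNReal.ofReal v := by
      rw [lintegral_indicator_one hS, ← hcS 0, Measure.restrict_apply hS,
        Measure.restrict_apply (measurableSet_cell L 0), Set.inter_comm]
    have hgm : Measurable (S.indicator (1 : EucSp (d + 1) → ℝ≥0∞)) := measurable_one.indicator hS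
    have hFme : ∀ k, Measurable fun x => ENNReal.ofReal (F k x) := fun k =>
      (hFs k).continuous.measurable.ennreal_ofReal
    have hlim : Filter.Tendsto (fun k => ∫⁻ x in cell L 0,
        (S.indicator 1 x - ENNReal.ofReal (F k x))) Filter.atTop (nhds 0) := by
      rw [← lintegral_zero (μ := volume.restrict (cell L 0))]
      refine tendsto_lintegral_of_dominated_convergence (S.indicator 1)
        (fun k => hgm.sub (hFme k)) (fun k => ae_of_all _ fun x => tsub_le_self)
        (by rw [hgI]; exact ENNReal.ofReal_ne_top) ?_
      have hae : ∀ᵐ x ∂volume.restrict (cell L 0), x ∉ K := measure_eq_zero_iff_ae_notMem.1 hKnull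
      filter_upwards [hae] with x hx
      refine tendsto_const_nhds.congr' ?_
      by_cases hxS : x ∈ S
      · have hint : x ∈ interior S := by
          by_contra h
          exact hx (hSK ⟨subset_closure hxS, h⟩)
        obtain ⟨ε, hε, hb⟩ := Metric.isOpen_iff.1 isOpen_interior x hint
        have h1 : ∀ᶠ k : ℕ in Filter.atTop, (1 : ℝ) / (k + 1) < ε :=
          tendsto_one_div_add_atTop_nhds_zero_nat.eventually_lt_const hε
        filter_upwards [h1, hχlim x] with k hk1 hk2
        have : m k x = 1 := mollify_eq_one (b k)
          ((Metric.ball_subset_ball hk1.le).trans (hb.trans interior_subset))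
        simp [F, hk2, this, hxS]
      · exact Filter.Eventually.of_forall fun k => by simp [hxS]
    have hlim2 := ENNReal.Tendsto.const_mul hlim (a := 2) (Or.inr (by norm_num))
    rw [mul_zero] at hlim2
    refine tendsto_of_tendsto_of_tendsto_of_le_of_le tendsto_const_nhds hlim2
      (fun _ => _root_.zero_le) fun k => ?_
    have e : ∫⁻ x, ‖F k (WithLp.toLp 2 x) - (WithLp.toLp 2 ⁻¹' S).indicator 1 x‖ₑ ∂boxMeas L =
        ∫⁻ x in cell L 0, ‖F k x - S.indicator 1 x‖ₑ :=
      hmp.lintegral_comp (f := fun x => ‖F k x - S.indicator 1 x‖ₑ)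
        (((hFs k).continuous.measurable.sub (measurable_one.indicator hS)).enorm)
    simp only [e]
    have hsub : Measurable fun x => S.indicator (1 : EucSp (d + 1) → ℝ≥0∞) x -
        ENNReal.ofReal (F k x) := hgm.sub (hFme k)
    have key : (∫⁻ x in cell L 0, ‖F k x - S.indicator 1 x‖ₑ) + ENNReal.ofReal v ≤
        2 * (∫⁻ x in cell L 0, (S.indicator 1 x - ENNReal.ofReal (F k x))) + ENNReal.ofReal v := by
      calc _ = ∫⁻ x in cell L 0, (‖F k x - S.indicator 1 x‖ₑ + S.indicator 1 x) := by
            rw [lintegral_add_right _ hgm, hgI]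
        _ ≤ ∫⁻ x in cell L 0, (ENNReal.ofReal (F k x) +
              2 * (S.indicator 1 x - ENNReal.ofReal (F k x))) := by
            refine lintegral_mono fun x => ?_
            by_cases hx : x ∈ S
            · simpa [hx] using enorm_sub_add_le (hF0 k x) (hF1 k x)
            · simp [hx, Real.enorm_of_nonneg (hF0 k x)]
        _ ≤ _ := by
            rw [lintegral_add_left (hFme k), lintegral_const_mul _ hsub, add_comm]
            gcongr
            rw [← hmI k]
            exact lintegral_mono fun x => ENNReal.ofReal_le_ofReal (hFm k x)
    exact (ENNReal.add_le_add_iff_right ENNReal.ofReal_ne_top).1 key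

/-- A relaxed isoperimetric inequality bounds the Hausdorff measure of the boundary. -/
theorem le_of_isoAt (hq : FlatCover L q) {v p : ℝ} (hI : IsoAt L v p) {U : Set M}
    (hU : IsClosed U) (hv : μHE[d + 1] U = ENNReal.ofReal v) :
    ENNReal.ofReal p ≤ μHE[d] (frontier U) := by
  rcases eq_or_ne (μHE[d] (frontier U)) ∞ with hfin | hfin
  · simp [hfin]
  obtain ⟨C, F, hF, hG, hlim⟩ := hq.exists_testFun hU hv hfin
  refine ENNReal.le_of_forall_pos_le_add fun ε hε _ => ?_
  obtain ⟨ε', hε'0, hε's⟩ := ENNReal.exists_pos_sum_of_countable one_ne_zero ℕ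
  have hc : Filter.Tendsto (fun k : ℕ => ENNReal.ofReal (C / (k + 1)) * ENNReal.ofReal v)
      Filter.atTop (nhds 0) := by
    have h1 : Filter.Tendsto (fun k : ℕ => C / ((k : ℝ) + 1)) Filter.atTop (nhds 0) := by
      simpa [div_eq_mul_inv] using
        (tendsto_one_div_add_atTop_nhds_zero_nat (𝕜 := ℝ)).const_mul C
    have h2 := ENNReal.Tendsto.mul_const (ENNReal.tendsto_ofReal h1) (b := ENNReal.ofReal v)
      (Or.inr ENNReal.ofReal_ne_top)
    simpa using h2
  have hch : ∀ j, ∃ k, ∫⁻ x, ‖F k x - (WithLp.toLp 2 ⁻¹' (q ⁻¹' U)).indicator 1 x‖ₑ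
      ∂boxMeas L < ε' j ∧ ENNReal.ofReal (C / (k + 1)) * ENNReal.ofReal v < ε := by
    intro j
    exact ((hlim.eventually_lt_const (by exact_mod_cast hε'0 j)).and
      (hc.eventually_lt_const (by exact_mod_cast hε))).exists
  choose φ hφ1 hφ2 using hch
  refine hI (WithLp.toLp 2 ⁻¹' (q ⁻¹' U)) (fun j => F (φ j)) _ ?_ ?_ (fun j => hF _) ?_ fun j => ?_
  · exact (hU.preimage hq.continuous).measurableSet.preimage (by fun_prop)
  · rw [(measurePreserving_toLp_boxMeas L).measure_preimage
      (hU.preimage hq.continuous).measurableSet.nullMeasurableSet,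
      Measure.restrict_apply (hU.preimage hq.continuous).measurableSet,
      ← EuclideanSpace.euclideanHausdorffMeasure_eq_volume,
      ← hq.euclideanHausdorffMeasure_eq (d + 1) hU.measurableSet, hv]
  · exact ((ENNReal.tsum_le_tsum fun j => (hφ1 j).le).trans_lt (hε's.trans one_lt_top)).ne
  · exact (hG _).trans (add_le_add_right (hφ2 j).le _)

end FlatCover

section shell
variable {V : Type*} [NormedAddCommGroup V] [InnerProductSpace ℝ V]

/-- Radial retraction, along the range of the projection `P`, onto `{x | ‖P x‖ = R}`. -/
def radialRetract (P : V →L[ℝ] V) (R : ℝ) (y : V) : V := y - ((‖P y‖ - R) * ‖P y‖⁻¹) • P y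

variable {P : V →L[ℝ] V} {R : ℝ}

lemma proj_proj (hP : ∀ x y, inner ℝ (P x) y = inner ℝ (P x) (P y)) (x : V) : P (P x) = P x := by
  rw [← sub_eq_zero, ← inner_self_eq_zero (𝕜 := ℝ), inner_sub_left]
  have h1 : ∀ a y, inner ℝ (P a) (y - P y) = 0 := fun a y => by
    rw [inner_sub_right, hP a y, sub_self]
  have h2 : P (P x) - P x = -(P x - P (P x)) := by abel
  rw [h2, inner_neg_right, inner_neg_right, h1, h1, sub_self]

lemma norm_proj_le (hP : ∀ x y, inner ℝ (P x) y = inner ℝ (P x) (P y)) (x : V) : ‖P x‖ ≤ ‖x‖ := by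
  rcases eq_or_ne ‖P x‖ 0 with h | h
  · rw [h]; exact norm_nonneg x
  have h1 := real_inner_le_norm (P x) x
  rw [hP, real_inner_self_eq_norm_sq, sq] at h1
  exact le_of_mul_le_mul_left h1 ((norm_nonneg _).lt_of_ne' h)

lemma sq_add_sq_le_norm_sub_sq (hP : ∀ x y, inner ℝ (P x) y = inner ℝ (P x) (P y)) (hR : 0 < R)
    {x x' : V} (hx : ‖P x‖ = R) (hx' : ‖P x'‖ = R) {s s' : ℝ} (hs : 0 ≤ s) (hs' : 0 ≤ s') :
    ‖x - x'‖ ^ 2 + (s - s') ^ 2 ≤ ‖(x + (s * R⁻¹) • P x) - (x' + (s' * R⁻¹) • P x')‖ ^ 2 := by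
  have e : (x + (s * R⁻¹) • P x) - (x' + (s' * R⁻¹) • P x') =
      (x - x') + ((s * R⁻¹) • P x - (s' * R⁻¹) • P x') := by abel
  set c := inner ℝ (P x) (P x')
  have hc : c ≤ R ^ 2 := by
    have := real_inner_le_norm (P x) (P x')
    rw [hx, hx', ← sq] at this; exact this
  have hxx : inner ℝ (P x) (P x) = R ^ 2 := by rw [real_inner_self_eq_norm_sq, hx]
  have hxx' : inner ℝ (P x') (P x') = R ^ 2 := by rw [real_inner_self_eq_norm_sq, hx']
  have hcc : inner ℝ (P x') (P x) = c := real_inner_comm _ _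
  have hcc' : inner ℝ (P x) (P x') = c := rfl
  rw [e, norm_add_sq_real, ← real_inner_self_eq_norm_sq ((s * R⁻¹) • P x - (s' * R⁻¹) • P x')]
  have h1 : inner ℝ (x - x') ((s * R⁻¹) • P x - (s' * R⁻¹) • P x') =
      (s * R⁻¹ + s' * R⁻¹) * (R ^ 2 - c) := by
    rw [real_inner_comm]
    simp only [inner_sub_left, inner_sub_right, inner_smul_left, conj_trivial, hP x x, hP x x',
      hP x' x, hP x' x', hxx, hxx', hcc, hcc']
    ring
  have h2 : inner ℝ ((s * R⁻¹) • P x - (s' * R⁻¹) • P x') ((s * R⁻¹) • P x - (s' * R⁻¹) • P x') =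
      (s - s') ^ 2 + 2 * (s * R⁻¹) * (s' * R⁻¹) * (R ^ 2 - c) := by
    simp only [inner_sub_left, inner_sub_right, inner_smul_left, inner_smul_right, conj_trivial,
      hxx, hxx', hcc, hcc']
    field_simp
    ring
  rw [h1, h2]
  have hRi := (inv_pos.2 hR).le
  have a1 : 0 ≤ (s * R⁻¹ + s' * R⁻¹) * (R ^ 2 - c) := by
    have := sub_nonneg.2 hc; positivity
  have a2 : 0 ≤ 2 * (s * R⁻¹) * (s' * R⁻¹) * (R ^ 2 - c) := by
    have := sub_nonneg.2 hc; positivity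
  linarith

lemma abs_inner_sub_le (hP : ∀ x y, inner ℝ (P x) y = inner ℝ (P x) (P y)) (hR : 0 < R)
    {x y p : V} (hx : ‖P x‖ = R) (hy : ‖P y‖ = R) {δ : ℝ} (hxp : dist x p ≤ δ)
    (hyp : dist y p ≤ δ) : |inner ℝ (R⁻¹ • P p) (x - y)| ≤ δ / R * ‖x - y‖ := by
  have h0 : inner ℝ (P x + P y) (P x - P y) = 0 := by
    rw [inner_add_left, inner_sub_right, inner_sub_right, real_inner_self_eq_norm_sq,
      real_inner_self_eq_norm_sq, hx, hy, real_inner_comm (P y) (P x)]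
    ring
  have e : inner ℝ (R⁻¹ • P p) (x - y) =
      inner ℝ ((2 * R)⁻¹ • ((P p - P x) + (P p - P y))) (P x - P y) := by
    have e1 : (2 * R)⁻¹ • ((P p - P x) + (P p - P y)) = R⁻¹ • P p - (2 * R)⁻¹ • (P x + P y) := by
      rw [mul_inv]; module
    rw [e1, inner_sub_left, inner_smul_left _ (P x - P y), inner_smul_left _ (P x - P y), h0,
      mul_zero, sub_zero, inner_smul_left, hP, map_sub]
  rw [e]
  refine (abs_real_inner_le_norm _ _).trans ?_
  have h1 : ‖P p - P x‖ ≤ δ := by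
    rw [← map_sub]
    refine (norm_proj_le hP _).trans ?_
    rwa [← dist_eq_norm, dist_comm]
  have h2 : ‖P p - P y‖ ≤ δ := by
    rw [← map_sub]
    refine (norm_proj_le hP _).trans ?_
    rwa [← dist_eq_norm, dist_comm]
  have h3 : ‖P x - P y‖ ≤ ‖x - y‖ := by rw [← map_sub]; exact norm_proj_le hP _
  rw [norm_smul, norm_inv, Real.norm_eq_abs, abs_of_pos (by positivity : 0 < 2 * R)]
  have h4 := (norm_add_le (P p - P x) (P p - P y)).trans (add_le_add h1 h2)
  have h5 : (2 * R)⁻¹ * ‖P p - P x + (P p - P y)‖ ≤ δ / R := by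
    rw [inv_mul_le_iff₀ (by positivity)]
    refine h4.trans (le_of_eq ?_)
    field_simp; ring
  exact mul_le_mul h5 h3 (norm_nonneg _) (by
    refine le_trans ?_ h5; positivity)

lemma proj_radialRetract (hP : ∀ x y, inner ℝ (P x) y = inner ℝ (P x) (P y)) {y : V}
    (hy : 0 < ‖P y‖) : P (radialRetract P R y) = (R * ‖P y‖⁻¹) • P y := by
  rw [radialRetract, map_sub, map_smul, proj_proj hP]
  have : (R * ‖P y‖⁻¹) = 1 - (‖P y‖ - R) * ‖P y‖⁻¹ := by field_simp; ring
  rw [this, sub_smul, one_smul]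

lemma radialRetract_add_smul (hP : ∀ x y, inner ℝ (P x) y = inner ℝ (P x) (P y)) (hR : 0 < R)
    {y : V} (hy : 0 < ‖P y‖) :
    radialRetract P R y + ((‖P y‖ - R) * R⁻¹) • P (radialRetract P R y) = y := by
  rw [proj_radialRetract hP hy, radialRetract, smul_smul]
  have : (‖P y‖ - R) * R⁻¹ * (R * ‖P y‖⁻¹) = (‖P y‖ - R) * ‖P y‖⁻¹ := by field_simp
  rw [this, sub_add_cancel]

lemma norm_proj_add_smul (hP : ∀ x y, inner ℝ (P x) y = inner ℝ (P x) (P y)) (hR : 0 < R)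
    {x : V} (hx : ‖P x‖ = R) {s : ℝ} (hs : 0 ≤ s) : ‖P (x + (s * R⁻¹) • P x)‖ = R + s := by
  rw [map_add, map_smul, proj_proj hP]
  have : P x + (s * R⁻¹) • P x = (1 + s * R⁻¹) • P x := by module
  rw [this, norm_smul, hx, Real.norm_eq_abs, abs_of_pos (by positivity)]
  field_simp

lemma radialRetract_add (hP : ∀ x y, inner ℝ (P x) y = inner ℝ (P x) (P y)) (hR : 0 < R)
    {x : V} (hx : ‖P x‖ = R) {s : ℝ} (hs : 0 ≤ s) :
    radialRetract P R (x + (s * R⁻¹) • P x) = x := by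
  rw [radialRetract, norm_proj_add_smul hP hR hx hs, map_add, map_smul, proj_proj hP]
  have h : R + s ≠ 0 := by positivity
  have : (R + s - R) * (R + s)⁻¹ * (1 + s * R⁻¹) = s * R⁻¹ := by field_simp; ring
  have e : P x + (s * R⁻¹) • P x = (1 + s * R⁻¹) • P x := by module
  rw [e, smul_smul, this]; abel

lemma continuousOn_radialRetract (P : V →L[ℝ] V) (R : ℝ) :
    ContinuousOn (radialRetract P R) {y | 0 < ‖P y‖} := by
  unfold radialRetract
  refine continuousOn_id.sub (ContinuousOn.smul (ContinuousOn.mul (by fun_prop)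
    (ContinuousOn.inv₀ (by fun_prop) fun y hy => hy.ne')) (by fun_prop))

open Module

lemma norm_sq_add_smul_orthogonal {ν : V} (hν : ‖ν‖ = 1) (w : (ℝ ∙ ν)ᗮ) (s : ℝ) :
    ‖(w : V) + s • ν‖ ^ 2 = ‖w‖ ^ 2 + s ^ 2 := by
  have h : inner ℝ (w : V) ν = 0 := by
    rw [real_inner_comm]; exact Submodule.mem_orthogonal_singleton_iff_inner_right.1 w.2
  rw [norm_add_sq_real, inner_smul_right, h, norm_smul, hν, mul_pow, Real.norm_eq_abs, sq_abs]
  simp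

lemma norm_sq_eq_orthogonalProjectionOnto_add {ν : V} (hν : ‖ν‖ = 1) (x : V) :
    ‖x‖ ^ 2 = ‖(ℝ ∙ ν)ᗮ.orthogonalProjectionOnto x‖ ^ 2 + inner ℝ ν x ^ 2 := by
  rw [← norm_sq_add_smul_orthogonal hν]
  congr 2
  have h1 := (ℝ ∙ ν).starProjection_add_starProjection_orthogonal x
  rw [Submodule.starProjection_unit_singleton ℝ hν] at h1
  rw [add_comm]; exact h1.symm

variable [MeasurableSpace V] [BorelSpace V] [FiniteDimensional ℝ V]

lemma mul_euclideanHausdorffMeasure_le_of_dist_le {d : ℕ} (hd : finrank ℝ V = d + 1) {P : V →L[ℝ] V}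
    (hP : ∀ x y, inner ℝ (P x) y = inner ℝ (P x) (P y)) {R : ℝ} (hR : 0 < R) {S : Set V}
    (hS : ∀ x ∈ S, ‖P x‖ = R) {c : ℝ≥0} (hc : 1 < c)
    (hdist : ∀ x ∈ S, ∀ y ∈ S, dist x y ≤ R * √(1 - (c ^ 2 : ℝ)⁻¹)) (η : ℝ) :
    ENNReal.ofReal η * μHE[d] S ≤
      (c : ℝ≥0∞) ^ d * volume {y | ‖P y‖ ∈ Set.Icc R (R + η) ∧ radialRetract P R y ∈ S} := by
  rcases S.eq_empty_or_nonempty with rfl | ⟨p, hp⟩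
  · simp
  have hc1 : (1 : ℝ) < c := by exact_mod_cast hc
  set ν := R⁻¹ • P p
  have hν : ‖ν‖ = 1 := by
    rw [norm_smul, hS p hp, norm_inv, Real.norm_eq_abs, abs_of_pos hR, inv_mul_cancel₀ hR.ne']
  have : Fact (finrank ℝ V = d + 1) := ⟨hd⟩
  have hfr : finrank ℝ (ℝ ∙ ν)ᗮ = d :=
    Submodule.finrank_orthogonal_span_singleton (n := d) (norm_ne_zero_iff.1 (by simp [hν]))
  set pr := (ℝ ∙ ν)ᗮ.orthogonalProjectionOnto
  have hanti : ∀ x ∈ S, ∀ y ∈ S, dist x y ≤ c * dist (pr x) (pr y) := by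
    intro x hx y hy
    have h1 := abs_inner_sub_le hP hR (hS x hx) (hS y hy) (hdist x hx p hp) (hdist y hy p hp)
    rw [mul_div_cancel_left₀ _ hR.ne'] at h1
    have hnn : 0 ≤ 1 - ((c : ℝ) ^ 2)⁻¹ := by
      rw [sub_nonneg]; exact inv_le_one_of_one_le₀ (one_le_pow₀ hc1.le)
    have h2 : inner ℝ ν (x - y) ^ 2 ≤ (1 - ((c : ℝ) ^ 2)⁻¹) * ‖x - y‖ ^ 2 := by
      rw [← sq_abs, ← Real.sq_sqrt hnn, ← mul_pow]
      exact pow_le_pow_left₀ (abs_nonneg _) h1 2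
    have h3 := norm_sq_eq_orthogonalProjectionOnto_add hν (x - y)
    rw [dist_eq_norm, dist_eq_norm, ← map_sub]
    refine abs_le_of_sq_le_sq' ?_ (by positivity) |>.2
    have h4 : ((c : ℝ) ^ 2)⁻¹ * ‖x - y‖ ^ 2 ≤ ‖pr (x - y)‖ ^ 2 := by linarith
    rwa [inv_mul_le_iff₀ (by positivity), ← mul_pow] at h4
  have hle1 : μHE[d] S ≤ (c : ℝ≥0∞) ^ d * volume (pr '' S) := by
    have hinj : Set.InjOn pr S := fun x hx y hy hxy => by
      have := hanti x hx y hy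
      rw [hxy, dist_self, mul_zero] at this
      exact dist_le_zero.1 this
    have hinv := hinj.leftInvOn_invFunOn
    have hL : LipschitzOnWith c (Function.invFunOn pr S) (pr '' S) := by
      refine LipschitzOnWith.of_dist_le_mul ?_
      rintro _ ⟨x, hx, rfl⟩ _ ⟨y, hy, rfl⟩
      rw [hinv hx, hinv hy]
      exact hanti x hx y hy
    have := hL.euclideanHausdorffMeasure_image_le d
    rw [hinv.image_image] at this
    refine this.trans (le_of_eq ?_)
    rw [← InnerProductSpace.euclideanHausdorffMeasure_eq_volume, hfr]
  set T := {y | ‖P y‖ ∈ Set.Icc R (R + η) ∧ radialRetract P R y ∈ S}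
  let Ψ : V → V := fun y => (pr (radialRetract P R y) : V) + (‖P y‖ - R) • ν
  have hΨ : LipschitzOnWith 1 Ψ T := by
    refine LipschitzOnWith.of_dist_le_mul fun y hy y' hy' => ?_
    rw [NNReal.coe_one, one_mul, dist_eq_norm, dist_eq_norm]
    refine abs_le_of_sq_le_sq' ?_ (norm_nonneg _) |>.2
    have e : Ψ y - Ψ y' = (pr (radialRetract P R y - radialRetract P R y') : V) +
        ((‖P y‖ - R) - (‖P y'‖ - R)) • ν := by
      simp only [Ψ, map_sub, Submodule.coe_sub]; module
    rw [e, norm_sq_add_smul_orthogonal hν]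
    have h1 := sq_add_sq_le_norm_sub_sq hP hR (hS _ hy.2) (hS _ hy'.2)
      (sub_nonneg.2 hy.1.1) (sub_nonneg.2 hy'.1.1)
    rw [radialRetract_add_smul hP hR (hR.trans_le hy.1.1),
      radialRetract_add_smul hP hR (hR.trans_le hy'.1.1)] at h1
    refine le_trans (add_le_add_left ?_ _) h1
    gcongr
    exact (ℝ ∙ ν)ᗮ.norm_orthogonalProjectionOnto_apply_le _
  have hle2 : ENNReal.ofReal η * volume (pr '' S) ≤ volume T := by
    have h1 := volume_slab hν 0 η (pr '' S)
    rw [sub_zero] at h1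
    rw [← h1]
    calc _ ≤ volume (Ψ '' T) := by
          apply measure_mono
          rintro z ⟨⟨hz0, hz1⟩, x, hx, hxz⟩
          have hn := norm_proj_add_smul hP hR (hS x hx) hz0
          have hr := radialRetract_add hP hR (hS x hx) hz0
          refine ⟨x + (inner ℝ ν z * R⁻¹) • P x, ⟨?_, ?_⟩, ?_⟩
          · rw [hn]; constructor <;> linarith
          · rw [hr]; exact hx
          · simp only [Ψ]
            rw [hr, hn, hxz, add_sub_cancel_left]
            have h1 := (ℝ ∙ ν).starProjection_add_starProjection_orthogonal z
            rw [Submodule.starProjection_unit_singleton ℝ hν] at h1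
            rw [add_comm]; exact h1
      _ ≤ _ := by
          have := hΨ.euclideanHausdorffMeasure_image_le (finrank ℝ V)
          rw [InnerProductSpace.euclideanHausdorffMeasure_eq_volume] at this
          simpa using this
  calc _ ≤ ENNReal.ofReal η * ((c : ℝ≥0∞) ^ d * volume (pr '' S)) := by gcongr
    _ = (c : ℝ≥0∞) ^ d * (ENNReal.ofReal η * volume (pr '' S)) := by ring
    _ ≤ _ := by gcongr

/-- A piece of the tube `{‖P x‖ = R}` has area at most the volume of a shell over it, divided by
the thickness of the shell. -/
lemma mul_euclideanHausdorffMeasure_le_volume_shell {d : ℕ} (hd : finrank ℝ V = d + 1)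
    {P : V →L[ℝ] V} (hP : ∀ x y, inner ℝ (P x) y = inner ℝ (P x) (P y)) {R : ℝ} (hR : 0 < R)
    {S : Set V} (hSm : MeasurableSet S) (hS : ∀ x ∈ S, ‖P x‖ = R) (η : ℝ) :
    ENNReal.ofReal η * μHE[d] S ≤
      volume {y | ‖P y‖ ∈ Set.Icc R (R + η) ∧ radialRetract P R y ∈ S} := by
  set W := {y : V | ‖P y‖ ∈ Set.Icc R (R + η)}
  have hWm : MeasurableSet W := measurableSet_Icc.preimage (by fun_prop)
  have hWpos : W ⊆ {y | 0 < ‖P y‖} := fun y hy => hR.trans_le hy.1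
  have hsub : ∀ {A : Set V}, MeasurableSet A →
      MeasurableSet {y | ‖P y‖ ∈ Set.Icc R (R + η) ∧ radialRetract P R y ∈ A} := by
    intro A hA
    have h := ((continuousOn_radialRetract P R).mono hWpos).domRestrict.measurable hA
    have := (MeasurableEmbedding.subtype_coe hWm).measurableSet_image.2 h
    convert this using 1
    ext y
    simp [W, Set.domRestrict]
    tauto
  have key : ∀ c : ℝ≥0, 1 < c → ENNReal.ofReal η * μHE[d] S ≤ (c : ℝ≥0∞) ^ d *
      volume {y | ‖P y‖ ∈ Set.Icc R (R + η) ∧ radialRetract P R y ∈ S} := by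
    intro c hc
    have hc1 : (1 : ℝ) < c := by exact_mod_cast hc
    have hδ : 0 < R * √(1 - (c ^ 2 : ℝ)⁻¹) := by
      refine mul_pos hR (Real.sqrt_pos.2 (sub_pos.2 (inv_lt_one_of_one_lt₀ ?_)))
      exact one_lt_pow₀ hc1 two_ne_zero
    obtain ⟨D, hDm, hDb, hDd, hDu, hDdisj⟩ :=
      SeparableSpace.exists_measurable_partition_diam_le V hδ
    have hSu : ⋃ j, S ∩ D j = S := by rw [← Set.inter_iUnion, hDu, Set.inter_univ]
    calc ENNReal.ofReal η * μHE[d] S = ENNReal.ofReal η * ∑' j, μHE[d] (S ∩ D j) := by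
          rw [← measure_iUnion (fun i j hij => (hDdisj hij).mono Set.inter_subset_right
            Set.inter_subset_right) fun j => hSm.inter (hDm j), hSu]
      _ = ∑' j, ENNReal.ofReal η * μHE[d] (S ∩ D j) := ENNReal.tsum_mul_left.symm
      _ ≤ ∑' j, (c : ℝ≥0∞) ^ d *
            volume {y | ‖P y‖ ∈ Set.Icc R (R + η) ∧ radialRetract P R y ∈ S ∩ D j} :=
          ENNReal.tsum_le_tsum fun j => mul_euclideanHausdorffMeasure_le_of_dist_le hd hP hR
            (fun x hx => hS x hx.1) hc (fun x hx y hy =>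
              (Metric.dist_le_diam_of_mem (hDb j) hx.2 hy.2).trans (hDd j)) η
      _ = (c : ℝ≥0∞) ^ d *
            volume {y | ‖P y‖ ∈ Set.Icc R (R + η) ∧ radialRetract P R y ∈ S} := by
          rw [ENNReal.tsum_mul_left, ← measure_iUnion]
          · congr 2
            ext y
            simp only [Set.mem_iUnion, Set.mem_ofPred_eq]
            conv_rhs => rw [← hSu, Set.mem_iUnion]
            exact exists_and_left
          · intro i j hij
            refine Set.disjoint_left.2 fun y hy hy' => ?_
            exact Set.disjoint_left.1 (hDdisj hij) hy.2.2 hy'.2.2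
          · exact fun j => hsub (hSm.inter (hDm j))
  have hlim : Filter.Tendsto (fun c : ℝ≥0 => (c : ℝ≥0∞) ^ d *
      volume {y | ‖P y‖ ∈ Set.Icc R (R + η) ∧ radialRetract P R y ∈ S}) (nhdsWithin 1 (Set.Ioi 1))
      (nhds ((1 : ℝ≥0∞) ^ d *
        volume {y | ‖P y‖ ∈ Set.Icc R (R + η) ∧ radialRetract P R y ∈ S})) := by
    refine ENNReal.Tendsto.mul_const ?_ (Or.inl (by simp))
    have h : Continuous fun c : ℝ≥0 => (c : ℝ≥0∞) ^ d :=
      (ENNReal.continuous_pow d).comp ENNReal.continuous_coe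
    have := (h.tendsto 1).mono_left (nhdsWithin_le_nhds (s := Set.Ioi 1))
    simpa using this
  rw [one_pow, one_mul] at hlim
  have : (nhdsWithin (1 : ℝ≥0) (Set.Ioi 1)).NeBot := nhdsGT_neBot _
  exact ge_of_tendsto hlim (eventually_nhdsWithin_of_forall fun c hc => key c hc)

end shell

lemma volume_norm_mem_Icc {n : ℕ} (hn : n ≠ 0) {R η : ℝ} (hR : 0 < R) (hη : 0 < η) :
    volume {y : EucSp n | ‖y‖ ∈ Set.Icc R (R + η)} =
      ENNReal.ofReal (ballVol n * ((R + η) ^ n - R ^ n)) := by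
  have : Nonempty (Fin n) := ⟨⟨0, Nat.pos_of_ne_zero hn⟩⟩
  have e : {y : EucSp n | ‖y‖ ∈ Set.Icc R (R + η)} =
      Metric.closedBall 0 (R + η) \ Metric.ball 0 R := by
    ext y; simp [and_comm]
  have hb : volume (Metric.ball (0 : EucSp n) 1) = ENNReal.ofReal (ballVol n) :=
    (ENNReal.ofReal_toReal measure_ball_lt_top.ne).symm
  rw [e, measure_sdiff (Metric.ball_subset_closedBall.trans
    (Metric.closedBall_subset_closedBall (by linarith))) measurableSet_ball.nullMeasurableSet
    measure_ball_lt_top.ne, Measure.addHaar_closedBall _ _ (by positivity),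
    Measure.addHaar_ball _ _ hR.le, hb, finrank_euclideanSpace_fin,
    ← ENNReal.ofReal_mul (by positivity), ← ENNReal.ofReal_mul (by positivity),
    ← ENNReal.ofReal_sub _ (mul_nonneg (by positivity) (ballVol_pos n).le)]
  congr 1; ring

lemma volume_norm_le {n : ℕ} {R : ℝ} (hR : 0 ≤ R) :
    volume {y : EucSp n | ‖y‖ ∈ Set.Iic R} = ENNReal.ofReal (ballVol n * R ^ n) := by
  have e : {y : EucSp n | ‖y‖ ∈ Set.Iic R} = Metric.closedBall 0 R := by
    ext y; simp
  have hb : volume (Metric.ball (0 : EucSp n) 1) = ENNReal.ofReal (ballVol n) :=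
    (ENNReal.ofReal_toReal measure_ball_lt_top.ne).symm
  rw [e, Measure.addHaar_closedBall _ _ hR, hb, finrank_euclideanSpace_fin,
    ← ENNReal.ofReal_mul (by positivity), mul_comm]

lemma le_of_forall_mul_le_volume_shell {n : ℕ} (hn : n ≠ 0) {R a : ℝ} (ha : 0 ≤ a) (hR : 0 < R)
    {A : ℝ≥0∞} (h : ∀ η > 0, ENNReal.ofReal η * A ≤
      ENNReal.ofReal a * volume {y : EucSp n | ‖y‖ ∈ Set.Icc R (R + η)}) :
    A ≤ ENNReal.ofReal (a * (n * ballVol n * R ^ (n - 1))) := by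
  have hd : HasDerivAt (fun η : ℝ => a * (ballVol n * (R + η) ^ n))
      (a * (n * ballVol n * R ^ (n - 1))) 0 := by
    have := (((hasDerivAt_id (0 : ℝ)).const_add R).pow n).const_mul (ballVol n) |>.const_mul a
    simp only [id, add_zero, mul_one] at this
    exact this.congr_deriv (by ring)
  have hs := ENNReal.tendsto_ofReal (hd.tendsto_slope_zero_right)
  refine ge_of_tendsto hs (eventually_nhdsWithin_of_forall fun η (hη : 0 < η) => ?_)
  have h1 := h η hη
  rw [volume_norm_mem_Icc hn hR hη, ← ENNReal.ofReal_mul ha] at h1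
  simp only [zero_add, add_zero, smul_eq_mul]
  rw [ENNReal.ofReal_mul (inv_pos.2 hη).le, ENNReal.ofReal_inv_of_pos hη,
    ← ENNReal.div_eq_inv_mul, ENNReal.le_div_iff_mul_le (by simp [hη]) (by simp), mul_comm]
  refine h1.trans (le_of_eq ?_)
  congr 1; ring

lemma euclideanHausdorffMeasure_sphere_le (d : ℕ) {R : ℝ} (hR : 0 < R) :
    μHE[d] (Metric.sphere (0 : EucSp (d + 1)) R) ≤
      ENNReal.ofReal ((d + 1 : ℕ) * ballVol (d + 1) * R ^ d) := by
  have h := le_of_forall_mul_le_volume_shell (n := d + 1) (R := R) (a := 1)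
    (A := μHE[d] (Metric.sphere (0 : EucSp (d + 1)) R)) d.succ_ne_zero zero_le_one hR ?_
  · simpa using h
  · intro η _
    have := mul_euclideanHausdorffMeasure_le_volume_shell (d := d) (by simp)
      (P := ContinuousLinearMap.id ℝ (EucSp (d + 1))) (fun _ _ => rfl) hR
      (Metric.isClosed_sphere (x := (0 : EucSp (d + 1))) (ε := R)).measurableSet
      (fun x hx => by simpa using hx) η
    rw [ENNReal.ofReal_one, one_mul]
    exact this.trans (measure_mono fun y hy => hy.1)

/-- The tubes around the lines through the origin in a fundamental cell have the volume of a
product of `n`-dimensional balls with a set of measure `a`. -/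
def TubeVol {d : ℕ} (L : Fin d → ℝ) (a : ℝ) (n : ℕ) : Prop :=
  ∀ B : Set ℝ, MeasurableSet B → volume (cell L 0 ∩ {x | ‖lineProj L x‖ ∈ B}) =
    ENNReal.ofReal a * volume {y : EucSp n | ‖y‖ ∈ B}

lemma tubeVol_zero (n : ℕ) : TubeVol (0 : Fin n → ℝ) 1 n := by
  intro B _
  rw [ENNReal.ofReal_one, one_mul]
  congr 1
  ext x
  have : lineProj (0 : Fin n → ℝ) x = x := by ext i; simp [lineProj_apply]
  simp [cell, this]

lemma norm_lineProj_vecCons {d : ℕ} (L : Fin d → ℝ) {ℓ : ℝ} (hℓ : ℓ ≠ 0) (t : ℝ) (x : Fin d → ℝ) :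
    ‖lineProj (vecCons ℓ L) (WithLp.toLp 2 (vecCons t x))‖ = ‖lineProj L (WithLp.toLp 2 x)‖ := by
  rw [EuclideanSpace.norm_eq, EuclideanSpace.norm_eq, Fin.sum_univ_succ]
  simp [lineProj_apply, hℓ]

lemma tubeVol_vecCons {d : ℕ} {L : Fin d → ℝ} {a : ℝ} {n : ℕ} (h : TubeVol L a n) {ℓ : ℝ}
    (hℓ : 0 < ℓ) : TubeVol (vecCons ℓ L) (ℓ * a) n := by
  intro B hB
  have key : ∀ {k : ℕ} (L : Fin k → ℝ), volume (cell L 0 ∩ {x | ‖lineProj L x‖ ∈ B}) =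
      boxMeas L {x | ‖lineProj L (WithLp.toLp 2 x)‖ ∈ B} := by
    intro k L
    have hm : MeasurableSet {x | ‖lineProj L x‖ ∈ B} := hB.preimage (by fun_prop)
    rw [Set.inter_comm, ← Measure.restrict_apply hm]
    exact ((measurePreserving_toLp_boxMeas L).measure_preimage hm.nullMeasurableSet).symm
  have hm : MeasurableSet {x : Fin (d + 1) → ℝ | ‖lineProj (vecCons ℓ L) (WithLp.toLp 2 x)‖ ∈ B} :=
    hB.preimage (by fun_prop)
  rw [key, ← (measurePreserving_vecCons ℓ L).measure_preimage hm.nullMeasurableSet]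
  have e : (fun p : ℝ × (Fin d → ℝ) => (Matrix.vecCons p.1 p.2 : Fin (d + 1) → ℝ)) ⁻¹'
      {x | ‖lineProj (Matrix.vecCons ℓ L) (WithLp.toLp 2 x)‖ ∈ B} =
      Set.univ ×ˢ {x | ‖lineProj L (WithLp.toLp 2 x)‖ ∈ B} := by
    ext p
    simp only [Set.mem_preimage, Set.mem_ofPred_eq, Set.mem_prod, Set.mem_univ, true_and]
    rw [norm_lineProj_vecCons L hℓ.ne']
  have hc : coordMeas ℓ Set.univ = ENNReal.ofReal ℓ := by
    simp [coordMeas, hℓ.ne']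
  rw [e, Measure.prod_prod, hc, ← key, h B hB, ENNReal.ofReal_mul hℓ.le, mul_assoc]

lemma inner_lineProj {d : ℕ} (L : Fin d → ℝ) (x y : EucSp d) :
    inner ℝ (lineProj L x) y = inner ℝ (lineProj L x) (lineProj L y) := by
  simp only [PiLp.inner_apply, lineProj_apply]
  refine Finset.sum_congr rfl fun i _ => ?_
  split_ifs <;> simp

lemma radialRetract_lineProj_mem_cell {d : ℕ} {L : Fin d → ℝ} {R : ℝ} {y z : EucSp d} :
    radialRetract (lineProj L) R y ∈ cell L z ↔ y ∈ cell L z := by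
  refine forall_congr' fun i => forall_congr' fun hi => ?_
  have : radialRetract (lineProj L) R y i = y i := by
    simp [radialRetract, lineProj_apply, hi]
  rw [this]

lemma TubeVol.euclideanHausdorffMeasure_le {d : ℕ} {L : Fin (d + 1) → ℝ} {a : ℝ} {n : ℕ}
    (h : TubeVol L a n) (ha : 0 ≤ a) (hn : n ≠ 0) {R : ℝ} (hR : 0 < R) :
    μHE[d] (cell L 0 ∩ {x | ‖lineProj L x‖ = R}) ≤
      ENNReal.ofReal (a * (n * ballVol n * R ^ (n - 1))) := by
  refine le_of_forall_mul_le_volume_shell hn ha hR fun η _ => ?_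
  rw [← h _ measurableSet_Icc]
  refine (mul_euclideanHausdorffMeasure_le_volume_shell (by simp) (inner_lineProj L) hR
    ((measurableSet_cell L 0).inter ?_) (fun x hx => hx.2) η).trans (measure_mono fun y hy => ?_)
  · exact measurableSet_eq_fun (by fun_prop) measurable_const
  · exact ⟨radialRetract_lineProj_mem_cell.1 hy.2.1, hy.1⟩

namespace FlatCover
variable {d : ℕ} {L : Fin (d + 1) → ℝ} {M : Type*} [MetricSpace M] {q : EucSp (d + 1) → M}
  [MeasurableSpace M] [BorelSpace M]

/-- Small round balls embed isometrically in the quotient. -/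
theorem exists_ball (hq : FlatCover L q) : ∃ R₁ > 0, ∀ R, 0 < R → R ≤ R₁ →
    ∃ U : Set M, IsClosedRegion U ∧
      μHE[d + 1] U = ENNReal.ofReal (ballVol (d + 1) * R ^ (d + 1)) ∧
      μHE[d] (frontier U) ≤ ENNReal.ofReal ((d + 1 : ℕ) * ballVol (d + 1) * R ^ d) := by
  obtain ⟨r, hr0, hr⟩ := hq.exists_radius
  refine ⟨r / 2, by positivity, fun R hR hRr => ?_⟩
  have hc : IsClosed (q '' Metric.closedBall 0 R) :=
    ((isCompact_closedBall _ _).image hq.continuous).isClosed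
  have ho : IsOpen (q '' Metric.ball 0 R) := hq.isOpenMap _ Metric.isOpen_ball
  refine ⟨q '' Metric.closedBall 0 R, ⟨q '' Metric.ball 0 R, ho, ?_⟩, ?_, ?_⟩
  · refine Set.Subset.antisymm ?_
      (closure_minimal (Set.image_mono Metric.ball_subset_closedBall) hc)
    rw [← closure_ball _ hR.ne']
    exact image_closure_subset_closure_image hq.continuous
  · rw [euclideanHausdorffMeasure_image_of_isometryOn,
      EuclideanSpace.euclideanHausdorffMeasure_eq_volume,
      ← volume_norm_le hR.le]
    · congr 1; ext x; simp
    · intro x hx y hy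
      rw [edist_dist, edist_dist, hr]
      rw [Metric.mem_closedBall] at hx hy
      linarith [dist_triangle_right x y 0]
  · have hsub : frontier (q '' Metric.closedBall 0 R) ⊆ q '' Metric.sphere 0 R := by
      rw [hc.frontier_eq]
      rintro _ ⟨⟨x, hx, rfl⟩, hx'⟩
      refine ⟨x, ?_, rfl⟩
      rw [Metric.mem_closedBall] at hx
      refine Metric.mem_sphere.2 (hx.antisymm (not_lt.1 fun hlt => hx' ?_))
      exact interior_maximal (Set.image_mono Metric.ball_subset_closedBall) ho ⟨x, hlt, rfl⟩
    refine (measure_mono hsub).trans ?_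
    have := hq.lipschitz.lipschitzOnWith (s := Metric.sphere 0 R)
      |>.euclideanHausdorffMeasure_image_le d
    exact this.trans (by simpa using euclideanHausdorffMeasure_sphere_le d hR)

theorem tube (hq : FlatCover L q) {a : ℝ} {n : ℕ} (h : TubeVol L a n) (ha : 0 ≤ a) (hn : n ≠ 0)
    {ρ : M → ℝ} (hρ : Continuous ρ) (hρq : ∀ x, ρ (q x) = ‖lineProj L x‖) {R : ℝ} (hR : 0 < R) :
    IsClosedRegion {m | ρ m ≤ R} ∧
      μHE[d + 1] {m | ρ m ≤ R} = ENNReal.ofReal (a * (ballVol n * R ^ n)) ∧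
      μHE[d] (frontier {m | ρ m ≤ R}) ≤
        ENNReal.ofReal (a * (n * ballVol n * R ^ (n - 1))) := by
  have hc : IsClosed {m | ρ m ≤ R} := isClosed_le hρ continuous_const
  refine ⟨⟨{m | ρ m < R}, isOpen_lt hρ continuous_const, ?_⟩, ?_, ?_⟩
  · refine Set.Subset.antisymm (fun m hm => ?_) (closure_minimal (fun m (hm : ρ m < R) => hm.le) hc)
    obtain ⟨x, rfl⟩ := hq.surjective m
    rw [Set.mem_ofPred_eq, hρq] at hm
    have ht : Filter.Tendsto (fun t : ℝ => q (x - t • lineProj L x)) (nhdsWithin 0 (Set.Ioo 0 1))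
        (nhds (q x)) := by
      have : Continuous fun t : ℝ => q (x - t • lineProj L x) := by
        have := hq.continuous
        fun_prop
      have h0 := this.tendsto 0
      rw [zero_smul, sub_zero] at h0
      exact h0.mono_left nhdsWithin_le_nhds
    have hne : (nhdsWithin (0 : ℝ) (Set.Ioo 0 1)).NeBot := by
      rw [nhdsWithin_Ioo_eq_nhdsGT one_pos]; infer_instance
    refine mem_closure_of_tendsto ht (eventually_nhdsWithin_of_forall fun t htI => ?_)
    rw [Set.mem_ofPred_eq, hρq]
    have hPP : lineProj L (lineProj L x) = lineProj L x := by
      ext i; rw [lineProj_apply]; split_ifs with hi <;> simp [lineProj_apply, hi]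
    have : lineProj L (x - t • lineProj L x) = (1 - t) • lineProj L x := by
      rw [map_sub, map_smul, hPP, sub_smul, one_smul]
    rw [this, norm_smul, Real.norm_eq_abs, abs_of_pos (by linarith [htI.2])]
    nlinarith [norm_nonneg (lineProj L x), htI.1, htI.2]
  · rw [hq.euclideanHausdorffMeasure_eq _ hc.measurableSet 0,
      EuclideanSpace.euclideanHausdorffMeasure_eq_volume, ENNReal.ofReal_mul ha,
      ← volume_norm_le hR.le,
      ← h _ measurableSet_Iic, Set.inter_comm]
    congr 2
    ext x
    simp [hρq]
  · rw [hq.euclideanHausdorffMeasure_eq _ isClosed_frontier.measurableSet 0]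
    refine (measure_mono fun x hx => ?_).trans (h.euclideanHausdorffMeasure_le ha hn hR)
    have := frontier_le_subset_eq hρ continuous_const hx.1
    exact ⟨hx.2, by simpa [hρq] using this⟩

end FlatCover

lemma flatCover_id (n : ℕ) : FlatCover (0 : Fin n → ℝ) (id : EucSp n → EucSp n) where
  nonneg _ := le_rfl
  surjective := Function.surjective_id
  dist_eq x y := by
    rw [id, id, EuclideanSpace.dist_eq]
    simp only [Pi.zero_apply, AddCircle.norm_eq_of_zero, Real.dist_eq]

lemma FlatCover.prod_circle {d : ℕ} {L : Fin d → ℝ} {M : Type*} [MetricSpace M] {q : EucSp d → M}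
    (hq : FlatCover L q) {ℓ : ℝ} (hℓ : 0 < ℓ) :
    FlatCover (M := WithLp 2 (AddCircle ℓ × M)) (vecCons ℓ L)
      (fun x => WithLp.toLp 2 ((x 0 : AddCircle ℓ), q (WithLp.toLp 2 fun i => x i.succ))) where
  nonneg i := by
    refine Fin.cases ?_ (fun i => ?_) i
    · simpa using hℓ.le
    · simpa using hq.nonneg i
  surjective m := by
    obtain ⟨t, ht⟩ := QuotientAddGroup.mk_surjective m.fst
    obtain ⟨x, hx⟩ := hq.surjective m.snd
    refine ⟨WithLp.toLp 2 (vecCons t x), ?_⟩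
    refine WithLp.ofLp_injective 2 (Prod.ext ht ?_)
    simpa using hx
  dist_eq x y := by
    have e : ∑ i, ‖((x i - y i : ℝ) : AddCircle (vecCons ℓ L i))‖ ^ 2 =
        ‖((x 0 - y 0 : ℝ) : AddCircle ℓ)‖ ^ 2 +
          ∑ i : Fin d, ‖((x i.succ - y i.succ : ℝ) : AddCircle (L i))‖ ^ 2 := Fin.sum_univ_succ _
    have h := hq.dist_eq (WithLp.toLp 2 fun i => x i.succ) (WithLp.toLp 2 fun i => y i.succ)
    rw [e, WithLp.prod_dist_eq_add (by simp)]
    simp only [ENNReal.toReal_ofNat, Real.rpow_two, ← Real.sqrt_eq_rpow]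
    change √(dist (x 0 : AddCircle ℓ) (y 0) ^ 2 + dist (q (WithLp.toLp 2 fun i => x i.succ))
      (q (WithLp.toLp 2 fun i => y i.succ)) ^ 2) = _
    rw [h, Real.sq_sqrt (Finset.sum_nonneg fun _ _ => sq_nonneg _), dist_eq_norm, AddCircle.coe_sub]

/-- The ratio between the two normalizations of the `k`-dimensional Hausdorff measure. -/
def hausFactor (k : ℕ) : ℝ≥0 :=
  Measure.addHaarScalarFactor (volume : Measure (EuclideanSpace ℝ (Fin k))) μH[k]

lemma hausFactor_pos (k : ℕ) : 0 < hausFactor k :=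
  pos_iff_ne_zero.2 (Measure.addHaarScalarFactor_volume_hausdorffMeasure_ne_zero k)

lemma euclideanHausdorffMeasure_eq_mul_haus {M : Type*} [MetricSpace M] [i : MeasurableSpace M]
    [BorelSpace M] (k : ℕ) (s : Set M) : μHE[k] s = hausFactor k * haus M k s := by
  have h : i = borel M := BorelSpace.measurable_eq
  subst h
  let : MeasurableSpace M := borel M
  rw [Measure.euclideanHausdorffMeasure_def]
  rfl

namespace FlatCover
variable {d : ℕ} {L : Fin (d + 1) → ℝ} {M : Type*} [MetricSpace M] {q : EucSp (d + 1) → M}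

lemma div_le_isoProfile (hq : FlatCover L q) {v p : ℝ} (hI : IsoAt L (hausFactor (d + 1) * v) p) :
    ENNReal.ofReal p / hausFactor d ≤ isoProfile M (d + 1) (ENNReal.ofReal v) := by
  borelize M
  refine le_iInf₂ fun U hU => ?_
  obtain ⟨⟨V, -, rfl⟩, hv⟩ := hU
  refine ENNReal.div_le_of_le_mul' ?_
  rw [add_tsub_cancel_right, ← euclideanHausdorffMeasure_eq_mul_haus]
  refine hq.le_of_isoAt hI isClosed_closure ?_
  rw [euclideanHausdorffMeasure_eq_mul_haus, hv, ENNReal.ofReal_mul (by positivity),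
    ENNReal.ofReal_coe_nnreal]

end FlatCover

lemma haus_eq_of_euclideanHausdorffMeasure_eq {M : Type*} [MetricSpace M] [MeasurableSpace M]
    [BorelSpace M] {k : ℕ} {s : Set M} {v : ℝ}
    (h : μHE[k] s = ENNReal.ofReal (hausFactor k * v)) : haus M k s = ENNReal.ofReal v := by
  rw [euclideanHausdorffMeasure_eq_mul_haus, ENNReal.ofReal_mul (by positivity),
    ENNReal.ofReal_coe_nnreal] at h
  exact (ENNReal.mul_right_inj (by simpa using (hausFactor_pos k).ne') (by simp)).1 h

lemma haus_le_of_euclideanHausdorffMeasure_le {M : Type*} [MetricSpace M] [MeasurableSpace M]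
    [BorelSpace M] {k : ℕ} {s : Set M} {a : ℝ≥0∞} (h : μHE[k] s ≤ a) :
    haus M k s ≤ a / hausFactor k := by
  rw [euclideanHausdorffMeasure_eq_mul_haus] at h
  rwa [ENNReal.le_div_iff_mul_le (.inl (by simpa using (hausFactor_pos k).ne')) (by simp),
    mul_comm]

theorem FlatCover.isoProfile_eq_of_small {d : ℕ} {L : Fin (d + 1) → ℝ} {M : Type*} [MetricSpace M]
    {q : EucSp (d + 1) → M} (hq : FlatCover L q)
    (hI : ∃ a, 0 < a ∧ ∀ v, 0 ≤ v → v ≤ a → IsoAt L v (eucPer (d + 1) v)) :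
    ∃ a, 0 < a ∧ ∀ v, v ≤ a → isoProfile M (d + 1) (ENNReal.ofReal v) =
      ENNReal.ofReal (eucPer (d + 1) (hausFactor (d + 1) * max v 0)) / hausFactor d := by
  borelize M
  obtain ⟨a, ha, hI⟩ := hI
  obtain ⟨R₁, hR₁, hball⟩ := hq.exists_ball
  have hκ : (0 : ℝ) < hausFactor (d + 1) := hausFactor_pos _
  have hω := ballVol_pos (d + 1)
  refine ⟨min a (ballVol (d + 1) * R₁ ^ (d + 1)) / hausFactor (d + 1), by positivity,
    fun v hv => ?_⟩
  rcases le_or_gt v 0 with h0 | h0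
  · rw [max_eq_right h0, ENNReal.ofReal_of_nonpos h0, eucPer]
    simp only [mul_zero, zero_div, ENNReal.ofReal_zero, ENNReal.zero_div]
    refine le_antisymm (iInf₂_le_of_le ∅ ⟨⟨∅, isOpen_empty, closure_empty.symm⟩, ?_⟩ ?_) zero_le
    · simp [haus]
    · simp [haus]
  rw [max_eq_left h0.le]
  rw [le_div_iff₀' hκ, le_min_iff] at hv
  have hv0 : 0 < hausFactor (d + 1) * v := mul_pos hκ h0
  refine le_antisymm ?_ (hq.div_le_isoProfile (hI _ hv0.le hv.1))
  have hr := ballVol_mul_rad_pow (d := d + 1) (by lia) hv0.le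
  obtain ⟨U, hU, hUv, hUp⟩ := hball (rad (d + 1) (hausFactor (d + 1) * v)) (rad_pos hv0) (by
    refine le_of_pow_le_pow_left₀ d.succ_ne_zero hR₁.le (le_of_mul_le_mul_left ?_ hω)
    rw [hr]; exact hv.2)
  rw [hr] at hUv
  refine iInf₂_le_of_le U ⟨hU, haus_eq_of_euclideanHausdorffMeasure_eq hUv⟩ ?_
  rw [eucPer_eq_mul_rad_pow hv0]
  exact haus_le_of_euclideanHausdorffMeasure_le (by simpa using hUp)

/-- The quotient map onto `T³ × ℝ^n`. -/
def t3Cover (r1 r2 r3 : ℝ) (n : ℕ) (x : EucSp (n + 3)) : T3R r1 r2 r3 n :=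
  WithLp.toLp 2 ((x 0 : Circ r1), WithLp.toLp 2 ((x 1 : Circ r2), WithLp.toLp 2 ((x 2 : Circ r3),
    WithLp.toLp 2 fun i : Fin n => x i.succ.succ.succ)))

lemma flatCover_t3Cover {r1 r2 r3 : ℝ} (h1 : 0 < r1) (h2 : 0 < r2) (h3 : 0 < r3) (n : ℕ) :
    FlatCover (vecCons (2 * Real.pi * r1) (vecCons (2 * Real.pi * r2)
      (vecCons (2 * Real.pi * r3) (0 : Fin n → ℝ)))) (t3Cover r1 r2 r3 n) :=
  (((flatCover_id n).prod_circle (by positivity)).prod_circle (by positivity)).prod_circle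
    (by positivity)

lemma norm_t3euc_t3Cover {r1 r2 r3 : ℝ} (h1 : 0 < r1) (h2 : 0 < r2) (h3 : 0 < r3) (n : ℕ)
    (x : EucSp (n + 3)) : ‖t3euc (t3Cover r1 r2 r3 n x)‖ =
      ‖lineProj (vecCons (2 * Real.pi * r1) (vecCons (2 * Real.pi * r2)
        (vecCons (2 * Real.pi * r3) (0 : Fin n → ℝ)))) x‖ := by
  have e : x = WithLp.toLp 2 (vecCons (x 0) (vecCons (x 1) (vecCons (x 2)
      fun i : Fin n => x i.succ.succ.succ))) := by
    ext i
    refine Fin.cases rfl (fun i => Fin.cases rfl (fun i => Fin.cases rfl (fun i => rfl) i) i) i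
  conv_rhs => rw [e]
  rw [norm_lineProj_vecCons _ (by positivity), norm_lineProj_vecCons _ (by positivity),
    norm_lineProj_vecCons _ (by positivity)]
  have : lineProj (0 : Fin n → ℝ) (WithLp.toLp 2 fun i => x i.succ.succ.succ) =
      WithLp.toLp 2 fun i => x i.succ.succ.succ := by
    ext i; simp [lineProj_apply]
  rw [this]
  rfl

lemma continuous_norm_t3euc {r1 r2 r3 : ℝ} {n : ℕ} :
    Continuous fun p : T3R r1 r2 r3 n => ‖t3euc p‖ := by
  unfold t3euc
  simp only [WithLp.equiv_apply]
  fun_prop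

theorem isoProfile_t3_eq_of_large {r1 r2 r3 : ℝ} (h1 : 0 < r1) (h2 : 0 < r2) (h3 : 0 < r3) {n : ℕ}
    (hn : 2 ≤ n) : ∃ v₀, ∀ v, v₀ ≤ v → isoProfile (T3R r1 r2 r3 n) (n + 3) (ENNReal.ofReal v) =
      gA r1 r2 r3 n (ENNReal.ofReal v) := by
  borelize (T3R r1 r2 r3 n)
  have hq := flatCover_t3Cover h1 h2 h3 n
  have hT := tubeVol_vecCons (tubeVol_vecCons (tubeVol_vecCons (tubeVol_zero n)
    (show 0 < 2 * Real.pi * r3 by positivity)) (show 0 < 2 * Real.pi * r2 by positivity))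
    (show 0 < 2 * Real.pi * r1 by positivity)
  obtain ⟨R₀, hR₀⟩ := isoAt_large_three hn (show 0 < 2 * Real.pi * r1 by positivity)
    (show 0 < 2 * Real.pi * r2 by positivity) (show 0 < 2 * Real.pi * r3 by positivity)
  have hA : 2 * Real.pi * r1 * (2 * Real.pi * r2 * (2 * Real.pi * r3 * 1)) =
    2 * Real.pi * r1 * (2 * Real.pi * r2) * (2 * Real.pi * r3) := by ring
  rw [hA] at hT
  have hA0 : 0 < 2 * Real.pi * r1 * (2 * Real.pi * r2) * (2 * Real.pi * r3) := by positivity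
  generalize 2 * Real.pi * r1 * (2 * Real.pi * r2) * (2 * Real.pi * r3) = a at hT hR₀ hA0
  have hκ : (0 : ℝ) < hausFactor (n + 3) := hausFactor_pos _
  have hω := ballVol_pos n
  have htube := fun {R : ℝ} => hq.tube (R := R) hT hA0.le (by lia) continuous_norm_t3euc
    (norm_t3euc_t3Cover h1 h2 h3 n)
  set R₁ := max R₀ 1 with hR₁
  have hR₁0 : 0 < R₁ := by positivity
  refine ⟨a * (ballVol n * R₁ ^ n) / hausFactor (n + 3), fun v hv => ?_⟩
  rw [div_le_iff₀' hκ] at hv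
  refine le_antisymm (le_iInf₂ fun R hR => iInf₂_le_of_le _ ⟨(htube hR.1).1, hR.2⟩ le_rfl) ?_
  have hv0 : 0 < hausFactor (n + 3) * v := lt_of_lt_of_le (by positivity) hv
  have hr := ballVol_mul_rad_pow (d := n) (by lia) (div_pos hv0 hA0).le
  set R := rad n (hausFactor (n + 3) * v / a)
  have hR : 0 < R := rad_pos (div_pos hv0 hA0)
  rw [eq_div_iff hA0.ne', mul_comm] at hr
  have hRR : R₁ ≤ R := by
    refine le_of_pow_le_pow_left₀ (n := n) (by lia) hR.le (le_of_mul_le_mul_left ?_ hω)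
    refine le_of_mul_le_mul_left ?_ hA0
    rwa [hr]
  obtain ⟨-, hvol, hper⟩ := htube hR
  rw [hr] at hvol
  have hI := hR₀ R ((le_max_left _ _).trans hRR)
  rw [hr] at hI
  refine (iInf₂_le_of_le R ⟨hR, haus_eq_of_euclideanHausdorffMeasure_eq hvol⟩ ?_).trans
    (hq.div_le_isoProfile hI)
  exact haus_le_of_euclideanHausdorffMeasure_le hper

theorem isoProfile_t3_eq_of_small {r1 r2 r3 : ℝ} (h1 : 0 < r1) (h2 : 0 < r2) (h3 : 0 < r3) {n : ℕ}
    (hn : 2 ≤ n) : ∃ v₀, 0 < v₀ ∧ ∀ v, v ≤ v₀ →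
      isoProfile (T3R r1 r2 r3 n) (n + 3) (ENNReal.ofReal v) =
        isoProfile (S1R r1 (n + 2)) (n + 3) (ENNReal.ofReal v) := by
  obtain ⟨a, ha, hT⟩ := (flatCover_t3Cover h1 h2 h3 n).isoProfile_eq_of_small
    (isoAt_small_three hn (by positivity) (by positivity) (by positivity))
  obtain ⟨b, hb, hS⟩ := ((flatCover_id (n + 2)).prod_circle
    (show 0 < 2 * Real.pi * r1 by positivity)).isoProfile_eq_of_small
    (isoAt_small_one (by lia) (by positivity))
  exact ⟨min a b, lt_min ha hb, fun v hv =>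
    (hT v (hv.trans (min_le_left _ _))).trans (hS v (hv.trans (min_le_right _ _))).symm⟩

/-- Theorem 3 of the paper.
Let `0 < r1 ≤ r2 ≤ r3` and `2 ≤ n ≤ 4`.  Suppose there are `0 < v* ≤ v**` such that
for every `v ≤ v*`, `I_{S¹_{r1}×S¹_{r2}×ℝⁿ}(v) = I_{S¹_{r1}×ℝ^{n+1}}(v)`, and for every
`v ≥ v**`, `I_{S¹_{r1}×S¹_{r2}×ℝⁿ}(v) = f_n(v)`.  Then there are `0 < ũ* ≤ ũ**` such that
for every `v ≤ ũ*`, `I_{T³×ℝⁿ}(v) = I_{S¹_{r1}×ℝ^{n+2}}(v)`, and for every `v ≥ ũ**`,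
`I_{T³×ℝⁿ}(v) = g_n(v)`. -/
theorem isoperimetric_profile_T3xRn (r1 r2 r3 : ℝ) (hr1 : 0 < r1) (hr12 : r1 ≤ r2)
    (hr23 : r2 ≤ r3) (n : ℕ) (hn2 : 2 ≤ n) (hn4 : n ≤ 4)
    (vs vss : ℝ) (hvs : 0 < vs) (hvsss : vs ≤ vss)
    (hsmall : ∀ v : ℝ, v ≤ vs →
      isoProfile (T2R r1 r2 n) (n+2) (ENNReal.ofReal v)
        = isoProfile (S1R r1 (n+1)) (n+2) (ENNReal.ofReal v))
    (hbig : ∀ v : ℝ, vss ≤ v →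
      isoProfile (T2R r1 r2 n) (n+2) (ENNReal.ofReal v)
        = fA r1 r2 n (ENNReal.ofReal v)) :
    ∃ us uss : ℝ, 0 < us ∧ us ≤ uss ∧
      (∀ v : ℝ, v ≤ us →
        isoProfile (T3R r1 r2 r3 n) (n+3) (ENNReal.ofReal v)
          = isoProfile (S1R r1 (n+2)) (n+3) (ENNReal.ofReal v)) ∧
      (∀ v : ℝ, uss ≤ v →
        isoProfile (T3R r1 r2 r3 n) (n+3) (ENNReal.ofReal v)
          = gA r1 r2 r3 n (ENNReal.ofReal v)) := by
  have hr2 : 0 < r2 := hr1.trans_le hr12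
  have hr3 : 0 < r3 := hr2.trans_le hr23
  obtain ⟨a, ha, hsm⟩ := isoProfile_t3_eq_of_small hr1 hr2 hr3 hn2
  obtain ⟨b, hlg⟩ := isoProfile_t3_eq_of_large hr1 hr2 hr3 hn2
  exact ⟨a, max a b, ha, le_max_left _ _, hsm, fun v hv => hlg v ((le_max_right _ _).trans hv)⟩

end
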